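/- arXiv:2301.01331 — 7 statements merged into one kernel-verified Lean document; each statement's English description precedes it below -/
import Mathlib

section
/- FC(4, 9) ≥ 14; that is, there exists a family of 13 distinct 4-element subsets of {1,…,9} whose universe equals {1,…,9} that is Non-FC. -/
/-- The universe of a family of finite sets: the union of all its members. -/
def famUniverse (A : Finset (Finset ℕ)) : Finset ℕ := A.sup id

/-- A family is union-closed if it is nonempty and closed under pairwise unions. -/
def UnionClosed (F : Finset (Finset ℕ)) : Prop :=
  F.Nonempty ∧ ∀ A ∈ F, ∀ B ∈ F, A ∪ B ∈ F

/-- A family `A` is FC (Frankl-Complete) if for every union-closed family `F`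
containing `A`, some element of the universe of `A` belongs to at least half
of the members of `F`. -/
def IsFC (A : Finset (Finset ℕ)) : Prop :=
  ∀ F : Finset (Finset ℕ), UnionClosed F → A ⊆ F →
    ∃ x ∈ famUniverse A, F.card ≤ 2 * (F.filter (fun S => x ∈ S)).card

/-- `IsKFamily k n A` means `A` is a family of (distinct) `k`-element subsets of
`[n] = {1, …, n}` whose universe equals `[n]`. -/
def IsKFamily (k n : ℕ) (A : Finset (Finset ℕ)) : Prop :=
  (∀ S ∈ A, S.card = k ∧ S ⊆ Finset.Icc 1 n) ∧ famUniverse A = Finset.Icc 1 n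

/-- The set of positive integers `m` such that every family of `m` distinct
`k`-element subsets of `[n]` with universe `[n]` is FC.  `FC(k, n)` is the least
element of this set, when it exists. -/
def FCwitnesses (k n : ℕ) : Set ℕ :=
  {m : ℕ | 0 < m ∧ ∀ A : Finset (Finset ℕ), A.card = m → IsKFamily k n A → IsFC A}

/-! The family is `A = {dec a : a ∈ masks}`.  For a point `y`, let `B_y` be the family of subsets
`S` of `[9]` such that `y ∈ S` implies `y ∈ a ⊆ S` for some `a ∈ A`.  The union-closed family
refuting FC-ness has sheets indexed by `t = 0, …, 67` (distinguished by a subset of `{10, …, 75}`):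
sheet `0` is the intersection of all `B_y`, sheet `67` is the full power set, and the sheets
in between are copies of the `B_y`. -/

namespace FCProof

set_option maxRecDepth 20000

/-- Bitmasks of the 13 four-element sets (bit `i` stands for the point `i + 1`). -/
def masks : List ℕ :=
  [156, 150, 402, 404, 75, 212, 432, 464, 180, 408, 43, 401, 149]

def dec (m : ℕ) : Finset ℕ := (Finset.Icc 1 9).filter (fun i => m.testBit (i - 1) = true)

def bok (y m : ℕ) : Bool :=
  !m.testBit y || masks.any (fun a => a.testBit y && (a ||| m == m))

def lab (t : ℕ) : ℕ :=
  if t ≤ 2 then 0 else if t ≤ 4 then 1 else if t ≤ 12 then 2 else if t ≤ 14 then 3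
  else if t ≤ 35 then 4 else if t ≤ 36 then 5 else if t ≤ 37 then 6 else if t ≤ 58 then 7 else 8

def allok (m : ℕ) : Bool := (List.range 9).all (fun y => bok y m)

def ok (t m : ℕ) : Bool :=
  if t = 0 then allok m else if t = 67 then true else bok (lab t) m

def top (t : ℕ) : Finset ℕ :=
  if t = 0 then ∅ else (Finset.Icc 10 75).filter (fun i => i ≠ 9 + t)

def join (t u : ℕ) : ℕ := if t = u then t else if t = 0 then u else if u = 0 then t else 67

def enc (p : ℕ × ℕ) : Finset ℕ := dec p.1 ∪ top p.2

def G : Finset (ℕ × ℕ) := (Finset.range 68 ×ˢ Finset.range 512).filter (fun p => ok p.1 p.2 = true)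
  |>.image Prod.swap

theorem mem_G (p : ℕ × ℕ) : p ∈ G ↔ p.1 < 512 ∧ p.2 < 68 ∧ ok p.2 p.1 = true := by
  obtain ⟨m, t⟩ := p
  simp only [G, Finset.mem_image, Finset.mem_filter, Finset.mem_product, Finset.mem_range,
    Prod.exists, Prod.swap_prod_mk, Prod.mk.injEq]
  constructor
  · rintro ⟨a, b, ⟨⟨h1, h2⟩, h3⟩, rfl, rfl⟩
    exact ⟨h2, h1, h3⟩
  · rintro ⟨h1, h2, h3⟩
    exact ⟨t, m, ⟨⟨h2, h1⟩, h3⟩, rfl, rfl⟩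

theorem mem_dec (m i : ℕ) : i ∈ dec m ↔ (1 ≤ i ∧ i ≤ 9) ∧ m.testBit (i - 1) = true := by
  simp [dec]

theorem mem_top (t i : ℕ) : i ∈ top t ↔ t ≠ 0 ∧ 10 ≤ i ∧ i ≤ 75 ∧ i ≠ 9 + t := by
  unfold top
  split_ifs with h
  · simp [h]
  · simp [h]; omega

theorem dec_or (m k : ℕ) : dec (m ||| k) = dec m ∪ dec k := by
  ext i
  simp only [Finset.mem_union, mem_dec, Nat.testBit_or, Bool.or_eq_true]
  tauto

theorem top_join (t u : ℕ) (ht : t < 68) (hu : u < 68) : top (join t u) = top t ∪ top u := by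
  ext i
  simp only [Finset.mem_union, mem_top, join]
  split_ifs <;> omega

theorem enc_union (p q : ℕ × ℕ) (hp : p.2 < 68) (hq : q.2 < 68) :
    enc p ∪ enc q = enc (p.1 ||| q.1, join p.2 q.2) := by
  simp only [enc, dec_or, top_join _ _ hp hq]
  ext i
  simp only [Finset.mem_union]
  tauto

theorem enc_inj (p q : ℕ × ℕ) (hp : p ∈ G) (hq : q ∈ G) (h : enc p = enc q) : p = q := by
  rw [mem_G] at hp hq
  obtain ⟨m, t⟩ := p
  obtain ⟨k, u⟩ := q
  simp only at hp hq
  have key : ∀ i, i ∈ enc (m, t) ↔ i ∈ enc (k, u) := fun i => by rw [h]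
  simp only [enc, Finset.mem_union, mem_dec, mem_top] at key
  have h1 : m = k := by
    apply Nat.eq_of_testBit_eq
    intro i
    by_cases hi : i < 9
    · have := key (i + 1)
      have a1 : 1 ≤ i + 1 ∧ i + 1 ≤ 9 := by omega
      have a2 : ¬ (10 ≤ i + 1) := by omega
      simp only [a1, a2, Nat.add_sub_cancel, true_and, and_self, false_and, and_false,
        or_false] at this
      exact Bool.eq_iff_iff.mpr this
    · have hb : 512 ≤ 2 ^ i := by
        calc 512 = 2 ^ 9 := by norm_num
          _ ≤ 2 ^ i := Nat.pow_le_pow_right (by norm_num) (by omega)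
      rw [Nat.testBit_lt_two_pow (by omega), Nat.testBit_lt_two_pow (by omega)]
  have key2 : ∀ i, 10 ≤ i → i ≤ 75 → ((t ≠ 0 ∧ i ≠ 9 + t) ↔ (u ≠ 0 ∧ i ≠ 9 + u)) := by
    intro i h10 h75
    have := key i
    have a1 : ¬ (1 ≤ i ∧ i ≤ 9) := by omega
    simpa only [a1, h10, h75, false_and, false_or, true_and] using this
  have h2 : t = u := by
    have e1 := key2 (9 + t)
    have e2 := key2 (9 + u)
    have e3 := key2 10
    have e4 := key2 11
    omega
  rw [h1, h2]

theorem bok_iff (y m : ℕ) : bok y m = true ↔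
    (m.testBit y = true → ∃ a ∈ masks, a.testBit y = true ∧ a ||| m = m) := by
  simp only [bok, Bool.or_eq_true, List.any_eq_true, Bool.and_eq_true, beq_iff_eq,
    Bool.not_eq_true']
  cases m.testBit y <;> simp

theorem bok_or (y m k : ℕ) (hm : bok y m = true) (hk : bok y k = true) :
    bok y (m ||| k) = true := by
  rw [bok_iff] at *
  intro h
  rw [Nat.testBit_or, Bool.or_eq_true] at h
  rcases h with h | h
  · obtain ⟨a, ha, hy, e⟩ := hm h
    exact ⟨a, ha, hy, by rw [← Nat.or_assoc, e]⟩
  · obtain ⟨a, ha, hy, e⟩ := hk h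
    exact ⟨a, ha, hy, by rw [Nat.or_comm m k, ← Nat.or_assoc, e]⟩

theorem allok_iff (m : ℕ) : allok m = true ↔ ∀ y < 9, bok y m = true := by
  simp [allok]

theorem lab_lt (t : ℕ) : lab t < 9 := by
  unfold lab
  split_ifs <;> omega

theorem hsame (t m k : ℕ) (hm : ok t m = true) (hk : ok t k = true) :
    ok t (m ||| k) = true := by
  unfold ok at *
  by_cases h : t = 0
  · rw [if_pos h, allok_iff] at *
    exact fun y hy => bok_or y m k (hm y hy) (hk y hy)
  · rw [if_neg h] at *
    by_cases h' : t = 67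
    · rw [if_pos h']
    · rw [if_neg h'] at *
      exact bok_or _ m k hm hk

theorem ok_or (t u m k : ℕ) (hm : ok t m = true) (hk : ok u k = true) :
    ok (join t u) (m ||| k) = true := by
  have hall : ∀ t m, allok m = true → ok t m = true := by
    intro t m h
    unfold ok
    split_ifs
    · exact h
    · rfl
    · exact (allok_iff m).1 h _ (lab_lt t)
  unfold join
  split_ifs with h1 h2 h3
  · subst h1
    exact hsame t m k hm hk
  · subst h2
    exact hsame u m k (hall u m hm) hk
  · subst h3
    exact hsame t m k hm (hall t k hk)
  · rfl

def F : Finset (Finset ℕ) := G.image enc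

theorem F_closed : UnionClosed F := by
  constructor
  · refine ⟨enc (0, 67), Finset.mem_image_of_mem _ ?_⟩
    rw [mem_G]
    exact ⟨by norm_num, by norm_num, rfl⟩
  · intro S hS T hT
    obtain ⟨p, hp, rfl⟩ := Finset.mem_image.1 hS
    obtain ⟨q, hq, rfl⟩ := Finset.mem_image.1 hT
    rw [mem_G] at hp hq
    rw [enc_union p q hp.2.1 hq.2.1]
    apply Finset.mem_image_of_mem
    rw [mem_G]
    refine ⟨Nat.or_lt_two_pow (n := 9) hp.1 hq.1, ?_, ok_or _ _ _ _ hp.2.2 hq.2.2⟩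
    have h1 := hp.2.1
    have h2 := hq.2.1
    simp only [join]
    split_ifs <;> omega

/-- The 13-element family. -/
def A : Finset (Finset ℕ) := (masks.map dec).toFinset

theorem A_sub : A ⊆ F := by
  intro S hS
  simp only [A, List.mem_toFinset, List.mem_map] at hS
  obtain ⟨a, ha, rfl⟩ := hS
  refine Finset.mem_image.2 ⟨(a, 0), ?_, by simp [enc, top]⟩
  rw [mem_G]
  have : ∀ a ∈ masks, a < 512 ∧ ok 0 a = true := by decide
  exact ⟨(this a ha).1, by norm_num, (this a ha).2⟩

/-- Sign weight of a mask at a point. -/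
def wt (x m : ℕ) : ℤ := if m.testBit x = true then -1 else 1

def sheet (P : ℕ → Bool) (x : ℕ) : ℤ :=
  ∑ m ∈ Finset.range 512, if P m = true then wt x m else 0

def tblB : List (List ℤ) :=
  [[169, -39, -13, -39, -39, -13, -13, -39, -13],
   [-39, 169, -13, -39, -39, -13, -13, -39, -13],
   [-1, -1, 193, -1, -63, -1, -1, -63, -1],
   [-39, -39, -13, 169, -39, -13, -13, -39, -13],
   [-2, -2, -32, -2, 162, -2, -2, -94, -32],
   [-26, -26, -14, -26, -42, 182, 0, -42, -14],
   [-26, -26, -14, -26, -42, 0, 182, -42, -14],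
   [-2, -2, -32, -2, -94, -2, -2, 162, -32],
   [-1, -1, -1, -1, -63, -1, -1, -63, 193]]

def tblA : List ℤ := [-4, -4, -28, -4, -90, -2, -2, -90, -28]

/-- Evaluation-friendly form of the partial sums of `sheet`. -/
def loop (P : ℕ → Bool) (x : ℕ) (n : ℕ) : ℤ :=
  Nat.rec (motive := fun _ => ℤ) 0
    (fun k r => Int.add r (cond (P k) (cond (k.testBit x) (-1) 1) 0)) n

theorem loop_eq (P : ℕ → Bool) (x n : ℕ) :
    ∑ m ∈ Finset.range n, (if P m = true then wt x m else 0) = loop P x n := by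
  induction n with
  | zero => rfl
  | succ k ih =>
    rw [Finset.sum_range_succ, ih]
    change _ = loop P x k + _
    congr 1
    unfold wt
    cases P k <;> cases k.testBit x <;> rfl

theorem loopB : ∀ y < 9, ∀ x < 9, loop (bok y) x 512 = (tblB.getD y []).getD x 0 := by
  decide +kernel

theorem loopA : ∀ x < 9, loop allok x 512 = tblA.getD x 0 := by
  decide +kernel

theorem loopTop : ∀ x < 9, loop (fun _ => true) x 512 = 0 := by
  decide +kernel

theorem sheetB (y : ℕ) (hy : y < 9) (x : ℕ) (hx : x < 9) :
    sheet (bok y) x = (tblB.getD y []).getD x 0 :=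
  (loop_eq _ _ _).trans (loopB y hy x hx)

theorem sheetA (x : ℕ) (hx : x < 9) : sheet allok x = tblA.getD x 0 :=
  (loop_eq _ _ _).trans (loopA x hx)

theorem sheetTop (x : ℕ) (hx : x < 9) : sheet (fun _ => true) x = 0 :=
  (loop_eq _ _ _).trans (loopTop x hx)

theorem total_pos : ∀ x < 9, 0 < ∑ t ∈ Finset.range 68,
    (if t = 0 then tblA.getD x 0 else if t = 67 then 0 else (tblB.getD (lab t) []).getD x 0) := by
  decide +kernel

theorem sum_G (x : ℕ) (hx : x < 9) : 0 < ∑ p ∈ G, wt x p.1 := by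
  have h1 : ∑ p ∈ G, wt x p.1 = ∑ t ∈ Finset.range 68, sheet (ok t) x := by
    unfold G sheet
    rw [Finset.sum_image (fun a _ b _ h => Prod.swap_injective h), Finset.sum_filter,
      Finset.sum_product]
    rfl
  rw [h1]
  refine lt_of_lt_of_eq (total_pos x hx) (Finset.sum_congr rfl fun t _ => ?_)
  split_ifs with h h'
  · subst h
    exact (sheetA x hx).symm
  · subst h'
    exact (sheetTop x hx).symm
  · have : ok t = bok (lab t) := by
      funext m
      simp [ok, h, h']
    rw [this]
    exact (sheetB _ (lab_lt t) x hx).symm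

theorem bad_aux (H : Finset (ℕ × ℕ)) (x : ℕ) (hx : x < 9)
    (hinj : Set.InjOn enc (H : Set (ℕ × ℕ))) (hs : 0 < ∑ p ∈ H, wt x p.1) :
    ¬ (H.image enc).card ≤ 2 * ((H.image enc).filter (fun S => x + 1 ∈ S)).card := by
  have hf : (H.image enc).filter (fun S => x + 1 ∈ S) =
      (H.filter (fun p => p.1.testBit x = true)).image enc := by
    rw [Finset.filter_image]
    congr 1
    apply Finset.filter_congr
    intro p _
    simp only [enc, Finset.mem_union, mem_dec, mem_top, Nat.add_sub_cancel]
    constructor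
    · rintro (h | h)
      · exact h.2
      · omega
    · intro h
      exact Or.inl ⟨by omega, h⟩
  have hc : (H.image enc).card = H.card := Finset.card_image_of_injOn hinj
  have hd : ((H.image enc).filter (fun S => x + 1 ∈ S)).card =
      (H.filter (fun p => p.1.testBit x = true)).card := by
    rw [hf]
    exact Finset.card_image_of_injOn (hinj.mono (by
      intro p hp
      exact (Finset.mem_filter.1 hp).1))
  have hw : ∑ p ∈ H, wt x p.1 =
      (H.card : ℤ) - 2 * ((H.filter (fun p => p.1.testBit x = true)).card : ℤ) := by
    have e : ∀ p ∈ H, wt x p.1 = 1 - 2 * (if p.1.testBit x = true then (1 : ℤ) else 0) := by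
      intro p _
      unfold wt
      split_ifs <;> norm_num
    rw [Finset.sum_congr rfl e, Finset.sum_sub_distrib, ← Finset.mul_sum, Finset.sum_boole]
    simp
  rw [hc, hd]
  omega

theorem F_bad (x : ℕ) (hx : x < 9) :
    ¬ F.card ≤ 2 * (F.filter (fun S => x + 1 ∈ S)).card :=
  bad_aux G x hx (fun p hp q hq h => enc_inj p q (Finset.mem_coe.1 hp) (Finset.mem_coe.1 hq) h)
    (sum_G x hx)

theorem A_univ : famUniverse A = Finset.Icc 1 9 := by
  decide +kernel

theorem A_card : A.card = 13 := by
  decide +kernel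

theorem A_four : ∀ S ∈ A, S.card = 4 ∧ S ⊆ Finset.Icc 1 9 := by
  decide +kernel

end FCProof

/-- FC(4, 9) ≥ 14: there is a Non-FC family of 13 distinct 4-element subsets of
{1, …, 9} with universe {1, …, 9}. -/
theorem FC_lower_bound_4_9 :
    ∃ A : Finset (Finset ℕ), A.card = 13 ∧ IsKFamily 4 9 A ∧ ¬ IsFC A := by
  refine ⟨FCProof.A, FCProof.A_card, ⟨FCProof.A_four, FCProof.A_univ⟩, fun h => ?_⟩
  obtain ⟨x, hx, hle⟩ := h FCProof.F FCProof.F_closed FCProof.A_sub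
  rw [FCProof.A_univ, Finset.mem_Icc] at hx
  obtain ⟨y, rfl⟩ : ∃ y, x = y + 1 := ⟨x - 1, by omega⟩
  exact FCProof.F_bad y (by omega) hle
end

section
/- FC(4, 10) ≥ 16; that is, there exists a family of 15 distinct 4-element subsets of {1,…,10} whose universe equals {1,…,10} that is Non-FC. -/
namespace FC410

/-- decode a bit mask into a subset of `{1,…,10}` -/
def dec (n : ℕ) : Finset ℕ := (Finset.Icc 1 10).filter (fun i => n.testBit (i - 1) = true)

def masks : List ℕ := [15, 23, 27, 39, 43, 71, 75, 135, 139, 240, 263, 267, 368, 519, 523]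

/-- the family of 15 four-element sets -/
def fam : Finset (Finset ℕ) := (masks.map dec).toFinset

/-- the condition at `x`: if `x` lies in `T`, then `T` contains a member of `fam` through `x` -/
def Ok (x : ℕ) (T : Finset ℕ) : Prop := x ∈ T → ∃ a ∈ fam, x ∈ a ∧ a ⊆ T

instance (x : ℕ) (T : Finset ℕ) : Decidable (Ok x T) := by unfold Ok; infer_instance

def X : Finset ℕ := Finset.Icc 1 10
@[irreducible] def Y : Finset ℕ := Finset.Icc 11 1164

/-- which element is attached to the index `j` -/
def f (j : ℕ) : ℕ :=
  if j < 379 then 1 else if j < 747 then 2 else if j < 885 then 3 else if j < 1023 then 4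
  else if j < 1055 then 5 else if j < 1087 then 6 else if j < 1119 then 7
  else if j < 1137 then 8 else if j < 1155 then 9 else 10

def Bf (x : ℕ) : Finset (Finset ℕ) := X.powerset.filter (fun T => Ok x T)
def LA : Finset (Finset ℕ) := X.powerset.filter (fun T => ∀ x ∈ X, Ok x T)

def F1 : Finset (Finset ℕ) := X.powerset.image (fun T => T ∪ Y)
def F2 : Finset (Finset ℕ) := Y.biUnion (fun j => (Bf (f j)).image (fun T => T ∪ Y.erase j))
def F : Finset (Finset ℕ) := (F1 ∪ F2) ∪ LA

def sg (z : ℕ) (S : Finset ℕ) : ℤ := if z ∈ S then 1 else -1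

lemma Ok.union {x : ℕ} {S T : Finset ℕ} (hS : Ok x S) (hT : Ok x T) : Ok x (S ∪ T) := by
  intro h
  rcases Finset.mem_union.1 h with h | h
  · obtain ⟨a, ha, h1, h2⟩ := hS h
    exact ⟨a, ha, h1, h2.trans Finset.subset_union_left⟩
  · obtain ⟨a, ha, h1, h2⟩ := hT h
    exact ⟨a, ha, h1, h2.trans Finset.subset_union_right⟩

lemma f_mem (j : ℕ) : f j ∈ X := by
  unfold f X
  split_ifs <;> decide

lemma mem_F1 {S : Finset ℕ} : S ∈ F1 ↔ ∃ T, T ⊆ X ∧ T ∪ Y = S := by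
  simp [F1]

lemma mem_F2 {S : Finset ℕ} :
    S ∈ F2 ↔ ∃ j ∈ Y, ∃ T, (T ⊆ X ∧ Ok (f j) T) ∧ T ∪ Y.erase j = S := by
  simp [F2, Bf]

lemma mem_LA {S : Finset ℕ} : S ∈ LA ↔ S ⊆ X ∧ ∀ x ∈ X, Ok x S := by
  simp [LA]

lemma set1 (S T R : Finset ℕ) : S ∪ T ∪ R = S ∪ R ∪ (T ∪ R) := by
  ext i; simp only [Finset.mem_union]; tauto

lemma set2 (S T R : Finset ℕ) (j : ℕ) : S ∪ T ∪ R = S ∪ R ∪ (T ∪ R.erase j) := by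
  ext i; simp only [Finset.mem_union, Finset.mem_erase]; tauto

lemma set3 (S T R : Finset ℕ) : S ∪ T ∪ R = S ∪ R ∪ T := by
  ext i; simp only [Finset.mem_union]; tauto

lemma un1 {S T : Finset ℕ} (hS : S ∈ F1) (hT : T ∈ F) : S ∪ T ∈ F1 := by
  obtain ⟨S', hS', rfl⟩ := mem_F1.1 hS
  unfold F at hT
  rw [Finset.mem_union, Finset.mem_union] at hT
  rcases hT with (hT | hT) | hT
  · obtain ⟨T', hT', rfl⟩ := mem_F1.1 hT
    refine mem_F1.2 ⟨S' ∪ T', Finset.union_subset hS' hT', set1 _ _ _⟩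
  · obtain ⟨j, hj, T', hT', rfl⟩ := mem_F2.1 hT
    refine mem_F1.2 ⟨S' ∪ T', Finset.union_subset hS' hT'.1, set2 _ _ _ _⟩
  · refine mem_F1.2 ⟨S' ∪ T, Finset.union_subset hS' (mem_LA.1 hT).1, set3 _ _ _⟩

lemma un2 {S T : Finset ℕ} (hS : S ∈ F2) (hT : T ∈ F2) : S ∪ T ∈ F := by
  obtain ⟨j, hj, S', hS', rfl⟩ := mem_F2.1 hS
  obtain ⟨k, hk, T', hT', rfl⟩ := mem_F2.1 hT
  unfold F
  rw [Finset.mem_union, Finset.mem_union]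
  left
  by_cases hjk : j = k
  · subst hjk
    right
    refine mem_F2.2 ⟨j, hj, S' ∪ T', ⟨Finset.union_subset hS'.1 hT'.1, hS'.2.union hT'.2⟩, ?_⟩
    ext i; simp only [Finset.mem_union, Finset.mem_erase]; tauto
  · left
    refine mem_F1.2 ⟨S' ∪ T', Finset.union_subset hS'.1 hT'.1, ?_⟩
    ext i; simp only [Finset.mem_union, Finset.mem_erase]
    by_cases h1 : i = j
    · subst h1; tauto
    · tauto

lemma un3 {S T : Finset ℕ} (hS : S ∈ F2) (hT : T ∈ LA) : S ∪ T ∈ F2 := by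
  obtain ⟨j, hj, S', hS', rfl⟩ := mem_F2.1 hS
  have hT := mem_LA.1 hT
  refine mem_F2.2 ⟨j, hj, S' ∪ T,
    ⟨Finset.union_subset hS'.1 hT.1, hS'.2.union (hT.2 _ (f_mem j))⟩, ?_⟩
  ext i; simp only [Finset.mem_union, Finset.mem_erase]; tauto

lemma un4 {S T : Finset ℕ} (hS : S ∈ LA) (hT : T ∈ LA) : S ∪ T ∈ LA := by
  rw [mem_LA] at *
  exact ⟨Finset.union_subset hS.1 hT.1, fun x hx => (hS.2 x hx).union (hT.2 x hx)⟩

lemma F_closed : ∀ S ∈ F, ∀ T ∈ F, S ∪ T ∈ F := by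
  intro S hS T hT
  have hS0 := hS
  have hT0 := hT
  have e1 : ∀ {R}, R ∈ F1 → R ∈ F := fun h =>
    Finset.mem_union_left _ (Finset.mem_union_left _ h)
  have e2 : ∀ {R}, R ∈ F2 → R ∈ F := fun h =>
    Finset.mem_union_left _ (Finset.mem_union_right _ h)
  have e3 : ∀ {R}, R ∈ LA → R ∈ F := fun h => Finset.mem_union_right _ h
  unfold F at hS hT
  rw [Finset.mem_union, Finset.mem_union] at hS hT
  rcases hS with (hS | hS) | hS
  · exact e1 (un1 hS hT0)
  · rcases hT with (hT | hT) | hT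
    · rw [Finset.union_comm]; exact e1 (un1 hT hS0)
    · exact un2 hS hT
    · exact e2 (un3 hS hT)
  · rcases hT with (hT | hT) | hT
    · rw [Finset.union_comm]; exact e1 (un1 hT hS0)
    · rw [Finset.union_comm]; exact e2 (un3 hT hS)
    · exact e3 (un4 hS hT)

lemma fam_kfam : IsKFamily 4 10 fam := by
  unfold IsKFamily
  constructor <;> decide +kernel

lemma fam_sub : fam ⊆ F := by
  intro a ha
  refine Finset.mem_union_right _ (mem_LA.2 ⟨(fam_kfam.1 a ha).2, fun x _ hxa => ?_⟩)
  exact ⟨a, ha, hxa, subset_rfl⟩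

/-! ### the computation -/

lemma mem_dec {n i : ℕ} : i ∈ dec n ↔ (1 ≤ i ∧ i ≤ 10) ∧ n.testBit (i - 1) = true := by
  simp [dec]

lemma dec_subset {m n : ℕ} (hm : m < 1024) : dec m ⊆ dec n ↔ m &&& n = m := by
  constructor
  · intro h
    apply Nat.eq_of_testBit_eq
    intro i
    rw [Nat.testBit_and]
    by_cases hi : i < 10
    · have := @h (i + 1)
      simp only [mem_dec, Nat.add_sub_cancel] at this
      cases hb : m.testBit i
      · simp
      · have := (this ⟨by omega, hb⟩).2
        simp [this]
    · have : m.testBit i = false := by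
        apply Nat.testBit_lt_two_pow
        calc m < 2 ^ 10 := hm
          _ ≤ 2 ^ i := Nat.pow_le_pow_right (by norm_num) (by omega)
      simp [this]
  · intro h i hi
    rw [mem_dec] at *
    refine ⟨hi.1, ?_⟩
    have h2 := hi.2
    rw [← h, Nat.testBit_and] at h2
    simp at h2
    exact h2.2

lemma powerset_eq : X.powerset = (Finset.range 1024).image dec := by
  symm
  apply Finset.eq_of_subset_of_card_le
  · intro S hS
    obtain ⟨n, _, rfl⟩ := Finset.mem_image.1 hS
    exact Finset.mem_powerset.2 (Finset.filter_subset _ _)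
  · rw [Finset.card_image_of_injOn]
    · simp [X]
    · intro m hm n hn h
      have hm : m < 1024 := by simpa using hm
      have hn : n < 1024 := by simpa using hn
      have h1 := (dec_subset hm).1 (le_of_eq h)
      have h2 := (dec_subset hn).1 (le_of_eq h.symm)
      rw [← h1, Nat.and_comm, h2]

lemma dec_inj : Set.InjOn dec (Finset.range 1024 : Finset ℕ) := by
  intro m hm n hn h
  have hm : m < 1024 := by simpa using hm
  have hn : n < 1024 := by simpa using hn
  have h1 := (dec_subset hm).1 (le_of_eq h)
  have h2 := (dec_subset hn).1 (le_of_eq h.symm)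
  rw [← h1, Nat.and_comm, h2]

/-- Boolean version of `Ok (i+1) (dec n)` -/
def okb (i n : ℕ) : Bool :=
  !(n.testBit i) || masks.any (fun m => m.testBit i && Nat.beq (m &&& n) m)

lemma masks_lt : ∀ m ∈ masks, m < 1024 := by decide

lemma ok_iff {i n : ℕ} (hi : i < 10) : Ok (i + 1) (dec n) ↔ okb i n = true := by
  have key : ∀ n, i + 1 ∈ dec n ↔ n.testBit i = true := by
    intro n
    rw [mem_dec]
    simp; omega
  unfold Ok okb
  rw [key]
  simp only [Bool.or_eq_true, Bool.not_eq_true', List.any_eq_true, Bool.and_eq_true,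
    Nat.beq_eq]
  have : (∃ a ∈ fam, i + 1 ∈ a ∧ a ⊆ dec n) ↔
      ∃ m ∈ masks, m.testBit i = true ∧ m &&& n = m := by
    simp only [fam, List.mem_toFinset, List.mem_map]
    constructor
    · rintro ⟨a, ⟨m, hm, rfl⟩, h1, h2⟩
      exact ⟨m, hm, (key m).1 h1, (dec_subset (masks_lt m hm)).1 h2⟩
    · rintro ⟨m, hm, h1, h2⟩
      exact ⟨_, ⟨m, hm, rfl⟩, (key m).2 h1, (dec_subset (masks_lt m hm)).2 h2⟩
  rw [this]
  cases n.testBit i <;> simp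

/-- count of masks below `k` satisfying a Boolean predicate -/
def cnt (p : ℕ → Bool) : ℕ → ℕ
  | 0 => 0
  | k + 1 => bif p k then (cnt p k).succ else cnt p k

lemma cnt_eq (p : ℕ → Bool) (k : ℕ) : cnt p k = ((Finset.range k).filter (fun n => p n = true)).card := by
  induction k with
  | zero => simp [cnt]
  | succ k ih =>
    rw [Finset.range_add_one, Finset.filter_insert, cnt]
    cases h : p k <;> simp [ih]

/-- the table of balances -/
def tab : List (List ℤ) :=
 [[-322, 190, 64, 64, 2, 2, 2, 2, 2, 2],
  [190, -322, 64, 64, 2, 2, 2, 2, 2, 2],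
  [127, 127, -385, 1, 1, 1, 1, 1, 1, 1],
  [127, 127, 1, -385, 1, 1, 1, 1, 1, 1],
  [78, 78, 26, 26, -338, 78, 78, 26, 26, 0],
  [78, 78, 26, 26, 78, -338, 78, 26, 26, 0],
  [78, 78, 26, 26, 78, 78, -338, 26, 26, 0],
  [84, 84, 28, 28, 52, 52, 52, -364, 0, 0],
  [84, 84, 28, 28, 52, 52, 52, 0, -364, 0],
  [96, 96, 32, 32, 0, 0, 0, 0, 0, -416]]

def tb (x z : ℕ) : ℤ := (tab.getD (x - 1) []).getD (z - 1) 0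

lemma comp : ∀ x < 10, ∀ z < 10,
    (2 * (cnt (fun n => n.testBit z && okb x n) 1024 : ℤ) - (cnt (okb x) 1024 : ℤ)) =
      tb (x + 1) (z + 1) := by
  decide +kernel

lemma sum_sg (z : ℕ) (G : Finset (Finset ℕ)) :
    ∑ S ∈ G, sg z S = 2 * ((G.filter (fun S => z ∈ S)).card : ℤ) - (G.card : ℤ) := by
  have h := Finset.card_filter_add_card_filter_not (s := G) (fun S => z ∈ S)
  unfold sg
  rw [Finset.sum_ite]
  simp only [Finset.sum_const, nsmul_eq_mul]
  have h' : ((G.filter (fun S => z ∈ S)).card : ℤ) + ((G.filter (fun S => ¬ z ∈ S)).card : ℤ)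
    = G.card := by exact_mod_cast h
  linarith

lemma card_img (p : ℕ → Prop) [DecidablePred p] (k : ℕ) (hk : k ≤ 1024) :
    (((Finset.range k).filter p).image dec).card = ((Finset.range k).filter p).card := by
  apply Finset.card_image_of_injOn
  refine dec_inj.mono ?_
  intro n hn
  have := Finset.mem_range.1 (Finset.mem_filter.1 (Finset.mem_coe.1 hn)).1
  exact Finset.mem_coe.2 (Finset.mem_range.2 (this.trans_le hk))

lemma bal_aux (k : ℕ) (hk : k ≤ 1024) (hP : X.powerset = (Finset.range k).image dec)
    (x z : ℕ) (hx : x < 10) (hz : z < 10) :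
    ∑ S ∈ Bf (x + 1), sg (z + 1) S =
      2 * (cnt (fun n => n.testBit z && okb x n) k : ℤ) - (cnt (okb x) k : ℤ) := by
  rw [sum_sg, cnt_eq, cnt_eq]
  have hB : Bf (x + 1) = ((Finset.range k).filter (fun n => okb x n = true)).image dec := by
    unfold Bf
    rw [hP, Finset.filter_image]
    congr 1
    apply Finset.filter_congr
    intro n _
    exact ok_iff hx
  have h2 : (Finset.range k).filter (fun n => okb x n = true ∧ z + 1 ∈ dec n) =
      (Finset.range k).filter (fun n => (n.testBit z && okb x n) = true) := by
    apply Finset.filter_congr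
    intro n _
    rw [mem_dec, Bool.and_eq_true, Nat.add_sub_cancel]
    constructor
    · rintro ⟨h1, h2⟩; exact ⟨h2.2, h1⟩
    · rintro ⟨h1, h2⟩; exact ⟨h2, by omega, h1⟩
  rw [hB, card_img _ k hk, Finset.filter_image, Finset.filter_filter, card_img _ k hk, h2]

lemma bal (x z : ℕ) (hx : x < 10) (hz : z < 10) :
    ∑ S ∈ Bf (x + 1), sg (z + 1) S = tb (x + 1) (z + 1) := by
  rw [← comp x hx z hz]
  exact bal_aux _ le_rfl powerset_eq x z hx hz

lemma total : ∀ z < 10, ∑ j ∈ Y, tb (f j) (z + 1) ≤ -2049 := by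
  decide +kernel

lemma sum_le_card (z : ℕ) (G : Finset (Finset ℕ)) : ∑ S ∈ G, sg z S ≤ G.card := by
  have : ∀ S ∈ G, sg z S ≤ 1 := by
    intro S _; unfold sg; split_ifs <;> norm_num
  simpa using Finset.sum_le_sum this

lemma XY {i : ℕ} (h : i ∈ X) : i ∉ Y := by
  simp only [X, Y, Finset.mem_Icc] at *; omega

lemma sg_union {z : ℕ} (hz : z ∈ X) (T R : Finset ℕ) (hR : R ⊆ Y) : sg z (T ∪ R) = sg z T := by
  have : z ∉ R := fun h => XY hz (hR h)
  simp [sg, this]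

lemma inter_X {T R : Finset ℕ} (hT : T ⊆ X) (hR : R ⊆ Y) : (T ∪ R) ∩ X = T := by
  ext i
  simp only [Finset.mem_inter, Finset.mem_union]
  constructor
  · rintro ⟨h | h, h'⟩
    · exact h
    · exact absurd (hR h) (XY h')
  · intro h; exact ⟨Or.inl h, hT h⟩

lemma mem_iff_Y {T R : Finset ℕ} {i : ℕ} (hT : T ⊆ X) (hi : i ∈ Y) : i ∈ T ∪ R ↔ i ∈ R := by
  rw [Finset.mem_union]
  exact ⟨fun h => h.resolve_left (fun h' => XY (hT h') hi), Or.inr⟩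

lemma sum_F2 {z : ℕ} (hz : z ∈ X) :
    ∑ S ∈ F2, sg z S = ∑ j ∈ Y, ∑ S ∈ Bf (f j), sg z S := by
  unfold F2
  rw [Finset.sum_biUnion]
  · apply Finset.sum_congr rfl
    intro j hj
    rw [Finset.sum_image]
    · exact Finset.sum_congr rfl (fun T _ => sg_union hz T _ (Finset.erase_subset _ _))
    · intro S hS T hT h
      have hS : S ⊆ X := by
        have := (Finset.mem_filter.1 hS).1; exact Finset.mem_powerset.1 this
      have hT : T ⊆ X := by
        have := (Finset.mem_filter.1 hT).1; exact Finset.mem_powerset.1 this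
      have h : S ∪ Y.erase j = T ∪ Y.erase j := h
      rw [← inter_X hS (Finset.erase_subset j Y), h, inter_X hT (Finset.erase_subset j Y)]
  · intro j hj k hk hjk
    have hj : j ∈ Y := hj
    refine Finset.disjoint_left.2 ?_
    intro S hS hT
    obtain ⟨S', hS', rfl⟩ := Finset.mem_image.1 hS
    obtain ⟨T', hT', h⟩ := Finset.mem_image.1 hT
    have hS' : S' ⊆ X := Finset.mem_powerset.1 (Finset.mem_filter.1 hS').1
    have hT' : T' ⊆ X := Finset.mem_powerset.1 (Finset.mem_filter.1 hT').1
    have h1 : j ∈ T' ∪ Y.erase k := (mem_iff_Y hT' hj).2 (Finset.mem_erase.2 ⟨hjk, hj⟩)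
    have h : T' ∪ Y.erase k = S' ∪ Y.erase j := h
    rw [h, mem_iff_Y hS' hj] at h1
    exact (Finset.mem_erase.1 h1).1 rfl

lemma card_X : X.powerset.card = 1024 := by simp [X]

lemma sum_F {z : ℕ} (hz : z ∈ X) : ∑ S ∈ F, sg z S < 0 := by
  have d1 : Disjoint F1 F2 := by
    refine Finset.disjoint_left.2 ?_
    intro S hS hT
    obtain ⟨S', hS', rfl⟩ := mem_F1.1 hS
    obtain ⟨j, hj, T', hT', h⟩ := mem_F2.1 hT
    have h1 : j ∈ S' ∪ Y := Finset.mem_union_right _ hj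
    rw [← h, mem_iff_Y hT'.1 hj] at h1
    exact (Finset.mem_erase.1 h1).1 rfl
  have m11 : 11 ∈ Y := by simp [Y]
  have m12 : 12 ∈ Y := by simp [Y]
  have d2 : Disjoint (F1 ∪ F2) LA := by
    refine Finset.disjoint_left.2 ?_
    intro S hS hL
    have hL := (mem_LA.1 hL).1
    rcases Finset.mem_union.1 hS with h | h
    · obtain ⟨S', hS', rfl⟩ := mem_F1.1 h
      exact XY (hL (Finset.mem_union_right _ m11)) m11
    · obtain ⟨j, hj, T', hT', rfl⟩ := mem_F2.1 h
      by_cases hj1 : j = 11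
      · exact XY (hL (Finset.mem_union_right _ (Finset.mem_erase.2 ⟨by omega, m12⟩))) m12
      · exact XY (hL (Finset.mem_union_right _ (Finset.mem_erase.2 ⟨by omega, m11⟩))) m11
  unfold F
  rw [Finset.sum_union d2, Finset.sum_union d1, sum_F2 hz]
  have b1 : ∑ S ∈ F1, sg z S ≤ 1024 := by
    refine (sum_le_card z F1).trans ?_
    have : F1.card ≤ 1024 := card_X ▸ Finset.card_image_le
    exact_mod_cast this
  have b3 : ∑ S ∈ LA, sg z S ≤ 1024 := by
    refine (sum_le_card z LA).trans ?_
    have : LA.card ≤ 1024 := card_X ▸ Finset.card_filter_le _ _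
    exact_mod_cast this
  have b2 : ∑ j ∈ Y, ∑ S ∈ Bf (f j), sg z S ≤ -2049 := by
    have hz' := Finset.mem_Icc.1 hz
    obtain ⟨w, rfl⟩ : ∃ w, z = w + 1 := ⟨z - 1, by omega⟩
    refine le_trans (le_of_eq ?_) (total w (by omega))
    apply Finset.sum_congr rfl
    intro j _
    have hf := Finset.mem_Icc.1 (f_mem j)
    obtain ⟨x, hx⟩ : ∃ x, f j = x + 1 := ⟨f j - 1, by omega⟩
    rw [hx]
    exact bal x w (by omega) (by omega)
  linarith

end FC410

/-- FC(4, 10) ≥ 16: there is a Non-FC family of 15 distinct 4-element subsets of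
{1, …, 10} with universe {1, …, 10}. -/
theorem FC_lower_bound_4_10 :
    ∃ A : Finset (Finset ℕ), A.card = 15 ∧ IsKFamily 4 10 A ∧ ¬ IsFC A := by
  refine ⟨FC410.fam, by decide +kernel, FC410.fam_kfam, ?_⟩
  intro h
  have hne : FC410.F.Nonempty :=
    ⟨FC410.dec 15, FC410.fam_sub (by decide +kernel)⟩
  obtain ⟨x, hx, hc⟩ := h FC410.F ⟨hne, FC410.F_closed⟩ FC410.fam_sub
  rw [FC410.fam_kfam.2] at hx
  have h1 := FC410.sum_F (z := x) hx
  rw [FC410.sum_sg] at h1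
  have h2 : (FC410.F.card : ℤ) ≤ 2 * ((FC410.F.filter (fun S => x ∈ S)).card : ℤ) := by
    exact_mod_cast hc
  linarith
end

section
/- FC(5, 9) ≥ 31; that is, there exists a family of 30 distinct 5-element subsets of {1,…,9} whose universe equals {1,…,9} that is Non-FC. -/
/-- Signed count of `x` in the family `F`: members containing `x` minus the others. -/
def bal (F : Finset (Finset ℕ)) (x : ℕ) : ℤ := ∑ T ∈ F, if x ∈ T then 1 else -1

lemma bal_eq (F : Finset (Finset ℕ)) (x : ℕ) :
    bal F x = 2 * ((F.filter (fun S => x ∈ S)).card : ℤ) - F.card := by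
  have h := Finset.card_filter_add_card_filter_not (s := F) (fun S => x ∈ S)
  unfold bal
  rw [Finset.sum_ite]
  simp only [Finset.sum_const, nsmul_eq_mul]
  have h' : ((F.filter (fun S => x ∈ S)).card : ℤ) + (F.filter (fun S => x ∉ S)).card = F.card := by
    exact_mod_cast h
  linarith

lemma bal_image (U : Finset ℕ) (G : Finset (Finset ℕ)) (hG : ∀ T ∈ G, T ⊆ U) (Z : Finset ℕ)
    (hZ : Disjoint Z U) (x : ℕ) (hx : x ∈ U) :
    bal (G.image (fun T => T ∪ Z)) x = bal G x := by
  unfold bal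
  have hxZ : x ∉ Z := fun h => Finset.disjoint_left.1 hZ h hx
  rw [Finset.sum_image]
  · refine Finset.sum_congr rfl fun T _ => ?_
    simp [hxZ]
  · intro T hT T' hT' h
    have e : ∀ S ∈ G, (S ∪ Z) ∩ U = S := by
      intro S hS
      rw [Finset.union_inter_distrib_right, Finset.inter_eq_left.2 (hG S hS),
        Finset.disjoint_iff_inter_eq_empty.1 hZ, Finset.union_empty]
    have h' : T ∪ Z = T' ∪ Z := h
    rw [← e T hT, ← e T' hT', h']

/-- Poonen-style construction: a weighted collection of union-closed families, each stable
under taking unions with members of `A`, whose total signed count is very negative everywhere,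
shows that `A` is Non-FC. -/
theorem nonFC_of (U : Finset ℕ) (hU : ∀ x ∈ U, 1 ≤ x ∧ x ≤ 9)
    (A : Finset (Finset ℕ)) (hAU : famUniverse A = U) (K : Finset ℕ)
    (G : ℕ → Finset (Finset ℕ)) (m : ℕ → ℕ)
    (hGU : ∀ k ∈ K, ∀ T ∈ G k, T ⊆ U)
    (hGG : ∀ k ∈ K, ∀ S ∈ G k, ∀ T ∈ G k, S ∪ T ∈ G k)
    (hGA : ∀ k ∈ K, ∀ S ∈ A, ∀ T ∈ G k, S ∪ T ∈ G k)
    (hP : ∀ x ∈ U, bal U.powerset x = 0)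
    (hsum : ∀ x ∈ U, ∑ k ∈ K, (m k : ℤ) * bal (G k) x < -((2 : ℤ) ^ U.card)) :
    ¬ IsFC A := by
  classical
  intro hFC
  let J : Finset (Σ _ : ℕ, ℕ) := K.sigma (fun k => Finset.range (m k))
  let e : (Σ _ : ℕ, ℕ) → ℕ := fun j => 10 + Nat.pair j.1 j.2
  have he : Function.Injective e := by
    rintro ⟨a, b⟩ ⟨c, d⟩ h
    have h1 : Nat.pair a b = Nat.pair c d := by
      have : 10 + Nat.pair a b = 10 + Nat.pair c d := h
      omega
    obtain ⟨rfl, rfl⟩ := Nat.pair_eq_pair.1 h1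
    rfl
  let Y : Finset ℕ := insert 0 (J.image e)
  let Z : (Σ _ : ℕ, ℕ) → Finset ℕ := fun j => Y.erase (e j)
  have hYU : Disjoint Y U := by
    rw [Finset.disjoint_left]
    intro y hy hyU
    have h1 := hU y hyU
    rcases Finset.mem_insert.1 hy with h | h
    · omega
    · obtain ⟨j, _, hj⟩ := Finset.mem_image.1 h
      have : 10 + Nat.pair j.1 j.2 = y := hj
      omega
  have hZY : ∀ j, Z j ⊆ Y := fun j => Finset.erase_subset _ _
  have hZU : ∀ j, Disjoint (Z j) U := fun j => Finset.disjoint_of_subset_left (hZY j) hYU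
  have h0Z : ∀ j, 0 ∈ Z j := by
    intro j
    refine Finset.mem_erase.2 ⟨?_, Finset.mem_insert_self _ _⟩
    change 0 ≠ 10 + Nat.pair j.1 j.2
    omega
  have h0U : 0 ∉ U := fun h => by have := hU 0 h; omega
  have heU : ∀ j, e j ∉ U := fun j h => by
    have h1 := hU _ h
    have : e j = 10 + Nat.pair j.1 j.2 := rfl
    omega
  have heY : ∀ j ∈ J, e j ∈ Y := fun j hj =>
    Finset.mem_insert_of_mem (Finset.mem_image_of_mem _ hj)
  have heZ : ∀ j, e j ∉ Z j := fun j => Finset.notMem_erase _ _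
  have heZ' : ∀ j, ∀ j' ∈ J, j' ≠ j → e j' ∈ Z j := fun j j' hj' hne =>
    Finset.mem_erase.2 ⟨fun h => hne (he h), heY j' hj'⟩
  have hZZ : ∀ j ∈ J, ∀ j' ∈ J, j ≠ j' → Z j ∪ Z j' = Y := by
    intro j hj j' hj' hne
    apply Finset.Subset.antisymm (Finset.union_subset (hZY j) (hZY j'))
    intro y hy
    by_cases hyj : y = e j
    · exact Finset.mem_union_right _ (hyj ▸ heZ' j' j hj hne)
    · exact Finset.mem_union_left _ (Finset.mem_erase.2 ⟨hyj, hy⟩)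
  let E : Finset (Finset ℕ) :=
    U.powerset.filter (fun T => ∀ k ∈ K, ∀ S ∈ G k, T ∪ S ∈ G k)
  let M : (Σ _ : ℕ, ℕ) → Finset (Finset ℕ) := fun j => (G j.1).image (fun T => T ∪ Z j)
  let Q : Finset (Finset ℕ) := U.powerset.image (fun T => T ∪ Y)
  let F : Finset (Finset ℕ) := (E ∪ J.biUnion M) ∪ Q
  have hJK : ∀ j ∈ J, j.1 ∈ K := fun j hj => (Finset.mem_sigma.1 hj).1
  have hAE : A ⊆ E := by
    intro S hS
    refine Finset.mem_filter.2 ⟨Finset.mem_powerset.2 ?_, fun k hk T hT => hGA k hk S hS T hT⟩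
    rw [← hAU]
    exact Finset.le_sup (f := id) hS
  have memE : ∀ T, T ∈ E ↔ T ⊆ U ∧ ∀ k ∈ K, ∀ S ∈ G k, T ∪ S ∈ G k := by
    intro T
    simp only [E, Finset.mem_filter, Finset.mem_powerset]
  have memF : ∀ T, T ∈ F ↔ T ∈ E ∨ (∃ j ∈ J, ∃ S ∈ G j.1, S ∪ Z j = T) ∨
      ∃ S, S ⊆ U ∧ S ∪ Y = T := by
    intro T
    simp only [F, M, Q, Finset.mem_union, Finset.mem_biUnion, Finset.mem_image,
      Finset.mem_powerset, or_assoc]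
  -- unions with members of the top layer
  have hQ : ∀ S, S ⊆ U → ∀ T ∈ F, (S ∪ Y) ∪ T ∈ F := by
    intro S hS T hT
    refine (memF _).2 (Or.inr (Or.inr ?_))
    rcases (memF T).1 hT with h | ⟨j, hj, R, hR, rfl⟩ | ⟨R, hR, rfl⟩
    · exact ⟨S ∪ T, Finset.union_subset hS ((memE T).1 h).1, by
        rw [Finset.union_right_comm]⟩
    · refine ⟨S ∪ R, Finset.union_subset hS (hGU _ (hJK j hj) R hR), ?_⟩
      rw [Finset.union_union_union_comm, Finset.union_eq_left.2 (hZY j)]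
    · refine ⟨S ∪ R, Finset.union_subset hS hR, ?_⟩
      rw [Finset.union_union_union_comm, Finset.union_self]
  have hM : ∀ j ∈ J, ∀ S ∈ G j.1, ∀ T ∈ F, (S ∪ Z j) ∪ T ∈ F := by
    intro j hj S hS T hT
    rcases (memF T).1 hT with h | ⟨j', hj', R, hR, rfl⟩ | ⟨R, hR, rfl⟩
    · refine (memF _).2 (Or.inr (Or.inl ⟨j, hj, T ∪ S, ((memE T).1 h).2 _ (hJK j hj) S hS, ?_⟩))
      rw [Finset.union_comm T S, Finset.union_right_comm]
    · by_cases hjj : j = j'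
      · subst hjj
        refine (memF _).2 (Or.inr (Or.inl ⟨j, hj, S ∪ R, hGG _ (hJK j hj) S hS R hR, ?_⟩))
        rw [Finset.union_union_union_comm, Finset.union_self]
      · refine (memF _).2 (Or.inr (Or.inr ⟨S ∪ R,
          Finset.union_subset (hGU _ (hJK j hj) S hS) (hGU _ (hJK j' hj') R hR), ?_⟩))
        rw [Finset.union_union_union_comm, hZZ j hj j' hj' hjj]
    · rw [Finset.union_comm]
      exact hQ R hR _ ((memF _).2 (Or.inr (Or.inl ⟨j, hj, S, hS, rfl⟩)))
  have hUC : UnionClosed F := by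
    refine ⟨⟨U ∪ Y, (memF _).2 (Or.inr (Or.inr ⟨U, Finset.Subset.refl _, rfl⟩))⟩, ?_⟩
    intro S hS T hT
    rcases (memF S).1 hS with h | ⟨j, hj, R, hR, rfl⟩ | ⟨R, hR, rfl⟩
    · rcases (memF T).1 hT with h' | ⟨j', hj', R, hR, rfl⟩ | ⟨R, hR, rfl⟩
      · refine (memF _).2 (Or.inl ((memE _).2 ⟨Finset.union_subset ((memE S).1 h).1
          ((memE T).1 h').1, fun k hk R hR => ?_⟩))
        rw [Finset.union_assoc]
        exact ((memE S).1 h).2 k hk _ (((memE T).1 h').2 k hk R hR)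
      · rw [Finset.union_comm]
        exact hM j' hj' R hR S hS
      · rw [Finset.union_comm]
        exact hQ R hR S hS
    · exact hM j hj R hR T hT
    · exact hQ R hR T hT
  have hAF : A ⊆ F := fun S hS => (memF S).2 (Or.inl (hAE hS))
  -- disjointness of the layers
  have d1 : Disjoint E (J.biUnion M) := by
    rw [Finset.disjoint_left]
    intro T hT hT'
    obtain ⟨j, hj, h⟩ := Finset.mem_biUnion.1 hT'
    obtain ⟨S, _, rfl⟩ := Finset.mem_image.1 h
    exact h0U (((memE _).1 hT).1 (Finset.mem_union_right _ (h0Z j)))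
  have d2 : Disjoint (E ∪ J.biUnion M) Q := by
    rw [Finset.disjoint_left]
    intro T hT hT'
    obtain ⟨R, _, rfl⟩ := Finset.mem_image.1 hT'
    rcases Finset.mem_union.1 hT with h | h
    · exact h0U (((memE _).1 h).1 (Finset.mem_union_right _ (Finset.mem_insert_self _ _)))
    · obtain ⟨j, hj, h⟩ := Finset.mem_biUnion.1 h
      obtain ⟨S, hS, h2⟩ := Finset.mem_image.1 h
      have h3 : e j ∈ S ∪ Z j := by
        have h4 : S ∪ Z j = R ∪ Y := h2
        rw [h4]
        exact Finset.mem_union_right _ (heY j hj)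
      rcases Finset.mem_union.1 h3 with h5 | h5
      · exact heU j (hGU _ (hJK j hj) S hS h5)
      · exact heZ j h5
  have d3 : (↑J : Set (Σ _ : ℕ, ℕ)).PairwiseDisjoint M := by
    intro j hj j' hj' hne
    change Disjoint (M j) (M j')
    rw [Finset.disjoint_left]
    intro T hT hT'
    obtain ⟨S, hS, rfl⟩ := Finset.mem_image.1 hT
    obtain ⟨R, _, h2⟩ := Finset.mem_image.1 hT'
    have h3 : e j ∈ S ∪ Z j := by
      have h4 : R ∪ Z j' = S ∪ Z j := h2
      rw [← h4]
      exact Finset.mem_union_right _ (heZ' j' j hj hne)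
    rcases Finset.mem_union.1 h3 with h5 | h5
    · exact heU j (hGU _ (hJK j hj) S hS h5)
    · exact heZ j h5
  obtain ⟨x, hxA, hx⟩ := hFC F hUC hAF
  rw [hAU] at hxA
  have hbF : bal F x = bal E x + ∑ k ∈ K, (m k : ℤ) * bal (G k) x := by
    have s1 : bal F x = bal E x + bal (J.biUnion M) x + bal Q x := by
      unfold bal
      rw [Finset.sum_union d2, Finset.sum_union d1]
    have s2 : bal Q x = 0 := by
      rw [← hP x hxA]
      exact bal_image U _ (fun T hT => Finset.mem_powerset.1 hT) Y hYU x hxA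
    have s3 : bal (J.biUnion M) x = ∑ j ∈ J, bal (G j.1) x := by
      have : bal (J.biUnion M) x = ∑ j ∈ J, bal (M j) x := by
        unfold bal
        rw [Finset.sum_biUnion d3]
      rw [this]
      exact Finset.sum_congr rfl fun j hj =>
        bal_image U _ (hGU _ (hJK j hj)) (Z j) (hZU j) x hxA
    rw [s1, s2, s3, Finset.sum_sigma]
    simp
  have hbE : bal E x ≤ (2 : ℤ) ^ U.card := by
    have h1 : bal E x ≤ ∑ T ∈ E, (1 : ℤ) := by
      unfold bal
      refine Finset.sum_le_sum fun T _ => ?_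
      split_ifs <;> norm_num
    have h2 : E.card ≤ 2 ^ U.card := by
      rw [← Finset.card_powerset]
      exact Finset.card_filter_le _ _
    have h3 : (E.card : ℤ) ≤ (2 : ℤ) ^ U.card := by exact_mod_cast h2
    simp only [Finset.sum_const, nsmul_eq_mul, mul_one] at h1
    linarith
  have h1 := bal_eq F x
  have h2 := hsum x hxA
  have h3 : (F.card : ℤ) ≤ 2 * ((F.filter (fun S => x ∈ S)).card : ℤ) := by exact_mod_cast hx
  linarith

/-- The 30 sets: `{8, 9}` plus a triple of `{1, …, 7}` meeting `{5, 6, 7}`, other than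
`{5, 6, 7}` itself. -/
def famA : Finset (Finset ℕ) :=
  ((Finset.Icc 1 7).powersetCard 3 |>.filter
    (fun T => (5 ∈ T ∨ 6 ∈ T ∨ 7 ∈ T) ∧ ¬ (5 ∈ T ∧ 6 ∈ T ∧ 7 ∈ T))).image
    (fun T => T ∪ {8, 9})

/-- An increasing condition describing the sets of the `k`-th family that contain `k`. -/
def upCond (k : ℕ) (T : Finset ℕ) : Prop :=
  (8 ∈ T ∧ 9 ∈ T) ∧ (8 ≤ k ∨ 5 ≤ T.card) ∧
    ((¬ (5 ≤ k ∧ k ≤ 7) ∧ (5 ∈ T ∨ 6 ∈ T ∨ 7 ∈ T)) ∨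
      ((5 ≤ k ∧ k ≤ 7) ∧ (1 ∈ T ∨ 2 ∈ T ∨ 3 ∈ T ∨ 4 ∈ T)))

instance (k : ℕ) (T : Finset ℕ) : Decidable (upCond k T) := by
  unfold upCond
  infer_instance

lemma upCond_mono {k : ℕ} {S T : Finset ℕ} (h : S ⊆ T) (hS : upCond k S) : upCond k T := by
  obtain ⟨⟨h8, h9⟩, hc, hd⟩ := hS
  refine ⟨⟨h h8, h h9⟩, hc.imp_right (fun h5 => h5.trans (Finset.card_le_card h)), ?_⟩
  refine hd.imp (And.imp_right ?_) (And.imp_right ?_)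
  · exact Or.imp (@h _) (Or.imp (@h _) (@h _))
  · exact Or.imp (@h _) (Or.imp (@h _) (Or.imp (@h _) (@h _)))

/-- The `k`-th family: sets that avoid `k` or satisfy the increasing condition. -/
def famG (k : ℕ) : Finset (Finset ℕ) :=
  (Finset.Icc 1 9).powerset.filter (fun T => k ∈ T → upCond k T)

/-- Multiplicities. -/
def mult (x : ℕ) : ℕ := if x ≤ 4 then 250 else if x ≤ 7 then 2640 else 15540

/-- The signed counts of the families. -/
def balTable (k x : ℕ) : ℤ :=
  if k ≤ 4 then
    (if x = k then -203 else if x ≤ 4 then 3 else if x ≤ 7 then 9 else 53)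
  else if k ≤ 7 then
    (if x = k then -200 else if x ≤ 4 then 6 else if x ≤ 7 then 4 else 56)
  else
    (if x = k then -144 else if x ≤ 4 then 0 else if x ≤ 7 then 16 else 112)

lemma famA_card : famA.card = 30 := by decide +kernel

lemma famA_kfam : IsKFamily 5 9 famA := by
  unfold IsKFamily famUniverse
  decide +kernel

lemma famA_upCond : ∀ k ∈ Finset.Icc 1 9, ∀ S ∈ famA, k ∈ S → upCond k S := by
  decide +kernel

lemma bal_pow : ∀ x ∈ Finset.Icc 1 9, bal (Finset.Icc 1 9).powerset x = 0 := by
  decide +kernel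

lemma bal_famG : ∀ k ∈ Finset.Icc 1 9, ∀ x ∈ Finset.Icc 1 9, bal (famG k) x = balTable k x := by
  decide +kernel

lemma famG_mem (k : ℕ) (T : Finset ℕ) :
    T ∈ famG k ↔ T ⊆ Finset.Icc 1 9 ∧ (k ∈ T → upCond k T) := by
  simp only [famG, Finset.mem_filter, Finset.mem_powerset]

/-- FC(5, 9) ≥ 31: there is a Non-FC family of 30 distinct 5-element subsets of
{1, …, 9} with universe {1, …, 9}. -/
theorem FC_lower_bound_5_9 :
    ∃ A : Finset (Finset ℕ), A.card = 30 ∧ IsKFamily 5 9 A ∧ ¬ IsFC A := by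
  refine ⟨famA, famA_card, famA_kfam, ?_⟩
  refine nonFC_of (Finset.Icc 1 9) (fun x hx => Finset.mem_Icc.1 hx) famA famA_kfam.2
    (Finset.Icc 1 9) famG mult ?_ ?_ ?_ bal_pow ?_
  · intro k _ T hT
    exact ((famG_mem k T).1 hT).1
  · intro k _ S hS T hT
    rw [famG_mem] at hS hT ⊢
    refine ⟨Finset.union_subset hS.1 hT.1, fun h => ?_⟩
    rcases Finset.mem_union.1 h with h | h
    · exact upCond_mono Finset.subset_union_left (hS.2 h)
    · exact upCond_mono Finset.subset_union_right (hT.2 h)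
  · intro k hk S hS T hT
    rw [famG_mem] at hT ⊢
    refine ⟨Finset.union_subset (famA_kfam.1 S hS).2 hT.1, fun h => ?_⟩
    rcases Finset.mem_union.1 h with h | h
    · exact upCond_mono Finset.subset_union_left (famA_upCond k hk S hS h)
    · exact upCond_mono Finset.subset_union_right (hT.2 h)
  · intro x hx
    have h1 : ∑ k ∈ Finset.Icc 1 9, (mult k : ℤ) * bal (famG k) x =
        ∑ k ∈ Finset.Icc 1 9, (mult k : ℤ) * balTable k x :=
      Finset.sum_congr rfl fun k hk => by rw [bal_famG k hk x hx]
    rw [h1]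
    clear h1
    revert x
    decide +kernel
end

section
/- FC(5, 10) ≥ 44; that is, there exists a family of 43 distinct 5-element subsets of {1,…,10} whose universe equals {1,…,10} that is Non-FC. -/
namespace FCAux

/-- The 43 triples on `[8]`: those meeting `{1,2,3}`, without `367`, `368`, `378`. -/
def triples : Finset (Finset ℕ) :=
  ((Finset.Icc 1 8).powersetCard 3).filter fun S =>
    (1 ∈ S ∨ 2 ∈ S ∨ 3 ∈ S) ∧ (3 ∈ S → 1 ∈ S ∨ 2 ∈ S ∨ 4 ∈ S ∨ 5 ∈ S)

/-- The 43 five-sets: the triples together with the pair `{9, 10}`. -/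
def fam : Finset (Finset ℕ) := triples.image fun S => S ∪ {9, 10}

/-- The sets a member containing `t` has to meet. -/
def hit (t : ℕ) : List ℕ :=
  if t ≤ 2 then [9] else if t = 3 then [1, 2, 4, 5] else [1, 2, 3]

/-- The monotone implication defining the family attached to the element `t`. -/
def rule (t : ℕ) (S : Finset ℕ) : Prop :=
  t ∈ S → 9 ∈ S ∧ 10 ∈ S ∧ ∃ z ∈ hit t, z ∈ S

instance (t : ℕ) (S : Finset ℕ) : Decidable (rule t S) := by
  unfold rule; infer_instance

/-- Rule of layer `t`: `0` is the bottom layer, `11` the top layer. -/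
def layer (t : ℕ) (S : Finset ℕ) : Prop :=
  if t = 11 then True else if t = 0 then ∀ u ∈ List.range' 1 10, rule u S else rule t S

instance (t : ℕ) (S : Finset ℕ) : Decidable (layer t S) := by
  unfold layer; infer_instance

/-- The family of subsets of `[10]` in layer `t`. -/
def H (t : ℕ) : Finset (Finset ℕ) := (Finset.Icc 1 10).powerset.filter (layer t)

/-- Multiplicities of the layers. -/
def mult (t : ℕ) : ℕ :=
  if t = 0 then 1 else if t ≤ 2 then 3176 else if t = 3 then 3049
  else if t ≤ 5 then 61 else if t ≤ 8 then 1 else if t ≤ 10 then 18643 else 1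

theorem mult_lt (t : ℕ) : mult t < 20000 := by
  unfold mult; split_ifs <;> norm_num

theorem fam_card : fam.card = 43 := by decide +kernel

theorem fam_k : (∀ S ∈ fam, S.card = 5 ∧ S ⊆ Finset.Icc 1 10) ∧
    fam.sup id = Finset.Icc 1 10 := by decide +kernel

theorem fam_sub : ∀ S ∈ fam, S ∈ H 0 := by
  have h : ∀ S ∈ fam, S ⊆ Finset.Icc 1 10 ∧ layer 0 S := by decide +kernel
  intro S hS
  simpa [H] using h S hS

theorem count : ∀ x ∈ Finset.Icc 1 10,
    2 * ∑ t ∈ Finset.range 12, mult t * ((H t).filter (fun S => x ∈ S)).card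
      < ∑ t ∈ Finset.range 12, mult t * (H t).card := by decide +kernel

theorem rule_union {t : ℕ} {S T : Finset ℕ} (hS : rule t S) (hT : rule t T) :
    rule t (S ∪ T) := by
  intro h
  rcases Finset.mem_union.1 h with h | h
  · obtain ⟨h1, h2, z, hz, h3⟩ := hS h
    exact ⟨Finset.mem_union_left _ h1, Finset.mem_union_left _ h2, z, hz,
      Finset.mem_union_left _ h3⟩
  · obtain ⟨h1, h2, z, hz, h3⟩ := hT h
    exact ⟨Finset.mem_union_right _ h1, Finset.mem_union_right _ h2, z, hz,
      Finset.mem_union_right _ h3⟩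

theorem layer_union {t : ℕ} {S T : Finset ℕ} (hS : layer t S) (hT : layer t T) :
    layer t (S ∪ T) := by
  by_cases h1 : t = 11
  · simp [layer, h1]
  by_cases h2 : t = 0
  · simp only [layer, h2, if_true] at *
    exact fun u hu => rule_union (hS u hu) (hT u hu)
  · simp only [layer, h1, h2, if_false] at *
    exact rule_union hS hT

theorem H_union {t : ℕ} {S T : Finset ℕ} (hS : S ∈ H t) (hT : T ∈ H t) : S ∪ T ∈ H t := by
  simp only [H, Finset.mem_filter, Finset.mem_powerset] at *
  exact ⟨Finset.union_subset hS.1 hT.1, layer_union hS.2 hT.2⟩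

theorem H_zero {t : ℕ} (ht : t < 12) {S : Finset ℕ} (hS : S ∈ H 0) : S ∈ H t := by
  simp only [H, Finset.mem_filter, Finset.mem_powerset] at *
  refine ⟨hS.1, ?_⟩
  have h : ∀ u ∈ List.range' 1 10, rule u S := hS.2
  by_cases h1 : t = 11
  · simp [layer, h1]
  by_cases h2 : t = 0
  · simp only [layer, h2, if_true]
    exact h
  · simp only [layer, h1, h2, if_false]
    exact h t (List.mem_range'_1.2 (by omega))

theorem H_sub {t : ℕ} {S : Finset ℕ} (hS : S ∈ H t) : S ⊆ Finset.Icc 1 10 := by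
  simp only [H, Finset.mem_filter, Finset.mem_powerset] at hS
  exact hS.1

theorem H_top {S : Finset ℕ} (hS : S ⊆ Finset.Icc 1 10) : S ∈ H 11 := by
  simp only [H, Finset.mem_filter, Finset.mem_powerset]
  exact ⟨hS, by simp [layer]⟩

attribute [irreducible] H mult

/-- The auxiliary elements. -/
def Y : Finset ℕ := Finset.Ico 11 (11 + 11 * 20000)

/-- The auxiliary part of the members with index `(t, i)`. -/
def Z (p : ℕ × ℕ) : Finset ℕ :=
  if p.1 = 0 then ∅ else if p.1 = 11 then Y else Y.erase (11 + (11 * p.2 + p.1 % 11))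

/-- The index set: pairs `(t, i)` with `t ≤ 11` and `i < mult t`. -/
def idx : Finset (ℕ × ℕ) :=
  (Finset.range 12).biUnion fun t => (Finset.range (mult t)).image fun i => (t, i)

theorem mem_idx {p : ℕ × ℕ} : p ∈ idx ↔ p.1 < 12 ∧ p.2 < mult p.1 := by
  obtain ⟨t, i⟩ := p
  simp only [idx, Finset.mem_biUnion, Finset.mem_range, Finset.mem_image, Prod.mk.injEq]
  constructor
  · rintro ⟨a, ha, b, hb, rfl, rfl⟩; exact ⟨ha, hb⟩
  · rintro ⟨h1, h2⟩; exact ⟨t, h1, i, h2, rfl, rfl⟩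

theorem sum_idx (f : ℕ → ℕ) :
    ∑ p ∈ idx, f p.1 = ∑ t ∈ Finset.range 12, mult t * f t := by
  unfold idx
  rw [Finset.sum_biUnion]
  · refine Finset.sum_congr rfl fun t _ => ?_
    rw [Finset.sum_image]
    · simp
    · intro a _ b _ h; simpa using h
  · intro a _ b _ hab
    refine Finset.disjoint_left.2 ?_
    intro p hp hq
    simp only [Finset.mem_image] at hp hq
    obtain ⟨i, _, rfl⟩ := hp
    obtain ⟨j, _, h⟩ := hq
    exact hab (by simpa using (congrArg Prod.fst h).symm)

theorem Y_ge {x : ℕ} (hx : x ∈ Y) : 11 ≤ x := (Finset.mem_Ico.1 hx).1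

theorem Z_sub (p : ℕ × ℕ) : Z p ⊆ Y := by
  unfold Z
  split_ifs
  · exact Finset.empty_subset _
  · exact Finset.Subset.refl _
  · exact Finset.erase_subset _ _

theorem y_mem {t i : ℕ} (ht : t < 11) (hi : i < 20000) : 11 + (11 * i + t % 11) ∈ Y := by
  simp only [Y, Finset.mem_Ico]; omega

theorem erase_inj {a b : ℕ} (ha : a ∈ Y) (h : Y.erase a = Y.erase b) : a = b := by
  by_contra hab
  have : a ∈ Y.erase b := Finset.mem_erase.2 ⟨hab, ha⟩
  rw [← h] at this
  simp at this

theorem erase_ne_empty (a : ℕ) : Y.erase a ≠ ∅ := by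
  intro h
  have h1 : (11 : ℕ) ∈ Y := by simp [Y]
  have h2 : (12 : ℕ) ∈ Y := by simp [Y]
  by_cases ha : a = 11
  · have : (12 : ℕ) ∈ Y.erase a := Finset.mem_erase.2 ⟨by omega, h2⟩
    rw [h] at this; simp at this
  · have : (11 : ℕ) ∈ Y.erase a := Finset.mem_erase.2 ⟨by omega, h1⟩
    rw [h] at this; simp at this

theorem Y_ne_empty : Y ≠ ∅ := by
  intro h
  have h1 : (11 : ℕ) ∈ Y := by simp [Y]
  rw [h] at h1; simp at h1

theorem erase_ne {a : ℕ} (ha : a ∈ Y) : Y.erase a ≠ Y := by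
  intro h
  rw [← h] at ha; simp at ha

theorem Z_inj {p q : ℕ × ℕ} (hp : p ∈ idx) (hq : q ∈ idx) (h : Z p = Z q) : p = q := by
  rw [mem_idx] at hp hq
  obtain ⟨t, i⟩ := p
  obtain ⟨s, j⟩ := q
  simp only at hp hq
  have hi := hp.2.trans (mult_lt t)
  have hj := hq.2.trans (mult_lt s)
  unfold Z at h
  simp only at h
  have m0 : mult 0 = 1 := by simp [mult]
  have m11 : mult 11 = 1 := by simp [mult]
  split_ifs at h with h1 h2 h3 h4 h5 h6 h7 h8
  · subst h1; subst h2; rw [m0] at hp hq; ext <;> simp <;> omega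
  · exact absurd h.symm Y_ne_empty
  · exact absurd h.symm (erase_ne_empty _)
  · exact absurd h Y_ne_empty
  · subst h4; subst h6; rw [m11] at hp hq; ext <;> simp <;> omega
  · exact absurd h.symm (erase_ne (y_mem (by omega) hj))
  · exact absurd h (erase_ne_empty _)
  · exact absurd h (erase_ne (y_mem (by omega) hi))
  · have := erase_inj (y_mem (by omega) hi) h
    ext <;> simp <;> omega

theorem disj {S T : Finset ℕ} (hS : S ⊆ Finset.Icc 1 10) (hT : T ⊆ Y) : Disjoint S T := by
  refine Finset.disjoint_left.2 fun x hx hy => ?_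
  have h1 := Finset.mem_Icc.1 (hS hx)
  have h2 := Finset.mem_Ico.1 (hT hy)
  omega

theorem split {S T A B : Finset ℕ} (hS : S ⊆ Finset.Icc 1 10) (hT : T ⊆ Finset.Icc 1 10)
    (hA : A ⊆ Y) (hB : B ⊆ Y) (h : S ∪ A = T ∪ B) : S = T ∧ A = B := by
  have key : ∀ {S A : Finset ℕ}, S ⊆ Finset.Icc 1 10 → A ⊆ Y →
      (S ∪ A).filter (· ≤ 10) = S ∧ (S ∪ A).filter (10 < ·) = A := by
    intro S A hS hA
    constructor
    · ext x
      simp only [Finset.mem_filter, Finset.mem_union]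
      constructor
      · rintro ⟨h | h, h'⟩
        · exact h
        · have := Finset.mem_Ico.1 (hA h); omega
      · intro h; exact ⟨Or.inl h, (Finset.mem_Icc.1 (hS h)).2⟩
    · ext x
      simp only [Finset.mem_filter, Finset.mem_union]
      constructor
      · rintro ⟨h | h, h'⟩
        · have := Finset.mem_Icc.1 (hS h); omega
        · exact h
      · intro h; exact ⟨Or.inr h, by have := Finset.mem_Ico.1 (hA h); omega⟩
  have k1 := key hS hA
  have k2 := key hT hB
  rw [h] at k1
  exact ⟨k1.1.symm.trans k2.1, k1.2.symm.trans k2.2⟩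

attribute [irreducible] Y Z idx

/-- The union-closed family showing that `fam` is Non-FC. -/
def F : Finset (Finset ℕ) := idx.biUnion fun p => (H p.1).image fun S => S ∪ Z p

theorem mem_F {C : Finset ℕ} :
    C ∈ F ↔ ∃ p ∈ idx, ∃ S ∈ H p.1, S ∪ Z p = C := by
  simp only [F, Finset.mem_biUnion, Finset.mem_image]

theorem card_F : F.card = ∑ t ∈ Finset.range 12, mult t * (H t).card := by
  rw [← sum_idx (fun t => (H t).card), F, Finset.card_biUnion]
  · refine Finset.sum_congr rfl fun p _ => ?_
    refine Finset.card_image_of_injOn ?_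
    intro S hS T hT h
    exact (split (H_sub hS) (H_sub hT) (Z_sub p) (Z_sub p) h).1
  · intro p hp q hq hpq
    refine Finset.disjoint_left.2 ?_
    intro C h1 h2
    obtain ⟨S, hS, rfl⟩ := Finset.mem_image.1 h1
    obtain ⟨T, hT, h⟩ := Finset.mem_image.1 h2
    exact hpq (Z_inj hp hq (split (H_sub hT) (H_sub hS) (Z_sub q) (Z_sub p) h).2.symm)

theorem card_F_filter {x : ℕ} (hx : x ∈ Finset.Icc 1 10) :
    (F.filter fun S => x ∈ S).card
      ≤ ∑ t ∈ Finset.range 12, mult t * ((H t).filter (fun S => x ∈ S)).card := by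
  rw [← sum_idx (fun t => ((H t).filter (fun S => x ∈ S)).card)]
  have hsub : (F.filter fun S => x ∈ S) ⊆
      idx.biUnion fun p => ((H p.1).filter (fun S => x ∈ S)).image fun S => S ∪ Z p := by
    intro C hC
    obtain ⟨hC, hxC⟩ := Finset.mem_filter.1 hC
    obtain ⟨p, hp, S, hS, rfl⟩ := mem_F.1 hC
    refine Finset.mem_biUnion.2 ⟨p, hp, Finset.mem_image.2 ⟨S, Finset.mem_filter.2 ⟨hS, ?_⟩, rfl⟩⟩
    rcases Finset.mem_union.1 hxC with h | h
    · exact h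
    · have h1 := Finset.mem_Icc.1 hx
      have h2 := Y_ge (Z_sub p h)
      omega
  refine (Finset.card_le_card hsub).trans (Finset.card_biUnion_le.trans ?_)
  exact Finset.sum_le_sum fun p _ => Finset.card_image_le

theorem zero_idx : ((0, 0) : ℕ × ℕ) ∈ idx := mem_idx.2 ⟨by norm_num, by simp [mult]⟩

theorem top_idx : ((11, 0) : ℕ × ℕ) ∈ idx := mem_idx.2 ⟨by norm_num, by simp [mult]⟩

theorem fam_sub_F : fam ⊆ F := by
  intro S hS
  exact mem_F.2 ⟨(0, 0), zero_idx, S, fam_sub S hS, by simp [Z]⟩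

/-- Distinct indices outside the bottom layer have auxiliary parts with union `Y`. -/
theorem Z_union {p q : ℕ × ℕ} (hp : p ∈ idx) (hq : q ∈ idx) (hpq : p ≠ q)
    (hp0 : p.1 ≠ 0) (hq0 : q.1 ≠ 0) : Z p ∪ Z q = Y := by
  apply Finset.Subset.antisymm (Finset.union_subset (Z_sub p) (Z_sub q))
  have hne : Z p ≠ Z q := fun h => hpq (Z_inj hp hq h)
  intro x hx
  by_contra hcon
  rw [Finset.mem_union, not_or] at hcon
  apply hne
  obtain ⟨h1, h2⟩ := hcon
  unfold Z at *
  simp only [hp0, hq0, if_false] at *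
  split_ifs at * with h3 h4 h5
  · exact absurd hx h1
  · exact absurd hx h1
  · exact absurd hx h2
  · have e1 : x = 11 + (11 * p.2 + p.1 % 11) := by
      by_contra h; exact h1 (Finset.mem_erase.2 ⟨h, hx⟩)
    have e2 : x = 11 + (11 * q.2 + q.1 % 11) := by
      by_contra h; exact h2 (Finset.mem_erase.2 ⟨h, hx⟩)
    rw [← e1, ← e2]

theorem zero_eq {p : ℕ × ℕ} (hp : p.1 = 0) : Z p = ∅ := by simp [Z, hp]

theorem F_closed : UnionClosed F := by
  constructor
  · exact ⟨∅ ∪ Z (11, 0), mem_F.2 ⟨(11, 0), top_idx, ∅, H_top (by simp), rfl⟩⟩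
  · intro C hC D hD
    obtain ⟨p, hp, S, hS, rfl⟩ := mem_F.1 hC
    obtain ⟨q, hq, T, hT, rfl⟩ := mem_F.1 hD
    rw [Finset.union_union_union_comm, mem_F]
    by_cases hp0 : p.1 = 0
    · rw [hp0] at hS
      exact ⟨q, hq, S ∪ T, H_union (H_zero (mem_idx.1 hq).1 hS) hT, by simp [zero_eq hp0]⟩
    by_cases hq0 : q.1 = 0
    · rw [hq0] at hT
      exact ⟨p, hp, S ∪ T, H_union hS (H_zero (mem_idx.1 hp).1 hT), by simp [zero_eq hq0]⟩
    by_cases hpq : p = q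
    · subst hpq
      exact ⟨p, hp, S ∪ T, H_union hS hT, by simp⟩
    · refine ⟨(11, 0), top_idx, S ∪ T, H_top (Finset.union_subset (H_sub hS) (H_sub hT)), ?_⟩
      rw [Z_union hp hq hpq hp0 hq0]
      simp [Z]

end FCAux

/-- FC(5, 10) ≥ 44: there is a Non-FC family of 43 distinct 5-element subsets of
{1, …, 10} with universe {1, …, 10}. -/
theorem FC_lower_bound_5_10 :
    ∃ A : Finset (Finset ℕ), A.card = 43 ∧ IsKFamily 5 10 A ∧ ¬ IsFC A := by
  refine ⟨FCAux.fam, FCAux.fam_card, FCAux.fam_k, ?_⟩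
  intro h
  obtain ⟨x, hx, hle⟩ := h FCAux.F FCAux.F_closed FCAux.fam_sub_F
  have hx' : x ∈ Finset.Icc 1 10 := by
    have := FCAux.fam_k.2
    unfold famUniverse at hx
    rwa [this] at hx
  have h1 := FCAux.card_F
  have h2 := FCAux.card_F_filter hx'
  have h3 := FCAux.count x hx'
  omega
end

section
/- FC(6, 9) ≥ 42; that is, there exists a family of 41 distinct 6-element subsets of {1,…,9} whose universe equals {1,…,9} that is Non-FC. -/
set_option maxRecDepth 100000

/-- The up-set generated by the witnessing family. -/
def inU (T : Finset ℕ) : Prop :=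
  9 ∈ T ∧ 6 ≤ T.card ∧ (8 ∈ T ∨ (5 ∈ T ∧ 6 ∈ T ∧ 7 ∈ T))

instance (T : Finset ℕ) : Decidable (inU T) := by unfold inU; infer_instance

lemma inU_mono {S T : Finset ℕ} (h : S ⊆ T) (hS : inU S) : inU T := by
  obtain ⟨h1, h2, h3⟩ := hS
  refine ⟨h h1, h2.trans (Finset.card_le_card h), ?_⟩
  rcases h3 with h3 | ⟨a, b, c⟩
  · exact Or.inl (h h3)
  · exact Or.inr ⟨h a, h b, h c⟩

/-- The witnessing family of 41 six-element sets. -/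
def wit : Finset (Finset ℕ) := ((Finset.Icc 1 9).powersetCard 6).filter inU

/-- All sets in `[9]` avoiding `i` or lying in the up-set. -/
def fibre (i : ℕ) : Finset (Finset ℕ) :=
  (Finset.Icc 1 9).powerset.filter (fun T => i ∉ T ∨ inU T)

/-- The up-set inside `[9]`. -/
def upFam : Finset (Finset ℕ) := (Finset.Icc 1 9).powerset.filter inU

/-- The element avoided by the `k`-th cube. -/
def miss (k : ℕ) : ℕ :=
  if k < 56 then k / 14 + 1 else if k < 113 then (k - 56) / 19 + 5 else if k < 145 then 8 else 9

/-- The family sitting over the `k`-th tag. -/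
def fam (k : ℕ) : Finset (Finset ℕ) :=
  if k < 189 then fibre (miss k) else if k = 189 then (Finset.Icc 1 9).powerset else upFam

/-- The `k`-th tag. -/
def tag (k : ℕ) : Finset ℕ :=
  if k < 189 then (Finset.Icc 10 198).erase (10 + k) else if k = 189 then Finset.Icc 10 198 else ∅

/-- The union-closed family showing that `wit` is Non-FC. -/
def bigF : Finset (Finset ℕ) :=
  ((Finset.range 191).sigma fam).image (fun d => d.2 ∪ tag d.1)

lemma fam_sub {k : ℕ} {S : Finset ℕ} (h : S ∈ fam k) : S ⊆ Finset.Icc 1 9 := by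
  unfold fam fibre upFam at h
  split_ifs at h <;> simp only [Finset.mem_filter, Finset.mem_powerset] at h
  · exact h.1
  · exact h
  · exact h.1

lemma tag_sub (k : ℕ) : tag k ⊆ Finset.Icc 10 198 := by
  unfold tag
  split_ifs
  · exact Finset.erase_subset _ _
  · exact subset_rfl
  · exact Finset.empty_subset _

lemma tag_inj {k l : ℕ} (hk : k < 191) (hl : l < 191) (h : tag k = tag l) : k = l := by
  have key : ∀ x, x ∈ tag k ↔ x ∈ tag l := fun x => by rw [h]
  have e1 := key (10 + k)
  have e2 := key (10 + l)
  have e3 := key 10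
  have e4 := key 11
  unfold tag at e1 e2 e3 e4
  grind

lemma small_mem {k x : ℕ} {S : Finset ℕ} (hx : x ∈ Finset.Icc 1 9) :
    x ∈ S ∪ tag k ↔ x ∈ S := by
  rw [Finset.mem_union]
  refine ⟨fun h => h.resolve_right fun h' => ?_, Or.inl⟩
  have := tag_sub k h'
  rw [Finset.mem_Icc] at this hx
  omega

lemma big_mem {k x : ℕ} {S : Finset ℕ} (hS : S ⊆ Finset.Icc 1 9) (hx : x ∈ Finset.Icc 10 198) :
    x ∈ S ∪ tag k ↔ x ∈ tag k := by
  rw [Finset.mem_union]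
  refine ⟨fun h => h.resolve_left fun h' => ?_, Or.inr⟩
  have := hS h'
  rw [Finset.mem_Icc] at this hx
  omega

lemma phi_inj : Set.InjOn (fun d : (_ : ℕ) × Finset ℕ => d.2 ∪ tag d.1)
    ((Finset.range 191).sigma fam : Finset _) := by
  rintro ⟨k, S⟩ hd ⟨l, T⟩ he h
  simp only [Finset.coe_sigma, Set.mem_sigma_iff, Finset.mem_coe, Finset.mem_range] at hd he
  simp only at h
  have hS := fam_sub hd.2
  have hT := fam_sub he.2
  have hkl : k = l := by
    apply tag_inj hd.1 he.1
    ext x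
    by_cases hx : x ∈ Finset.Icc 10 198
    · rw [← big_mem hS hx, ← big_mem hT hx, h]
    · exact ⟨fun h => absurd (tag_sub _ h) hx, fun h => absurd (tag_sub _ h) hx⟩
  subst hkl
  have : S = T := by
    ext x
    by_cases hx : x ∈ Finset.Icc 1 9
    · rw [← small_mem (k := k) hx, h, small_mem hx]
    · exact ⟨fun h => absurd (hS h) hx, fun h => absurd (hT h) hx⟩
  rw [this]

lemma card_bigF : bigF.card = ∑ k ∈ Finset.range 191, (fam k).card := by
  unfold bigF
  rw [Finset.card_image_of_injOn phi_inj, Finset.card_sigma]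

lemma card_filter_bigF {x : ℕ} (hx : x ∈ Finset.Icc 1 9) :
    (bigF.filter (fun S => x ∈ S)).card
      = ∑ k ∈ Finset.range 191, ((fam k).filter (fun S => x ∈ S)).card := by
  unfold bigF
  rw [Finset.filter_image, Finset.card_image_of_injOn
    (phi_inj.mono (by exact_mod_cast Finset.filter_subset _ _)), ← Finset.card_sigma]
  congr 1
  ext ⟨k, S⟩
  simp only [Finset.mem_filter, Finset.mem_sigma, small_mem hx, and_assoc]

lemma mem_bigF {k : ℕ} {S : Finset ℕ} (hk : k < 191) (hS : S ∈ fam k) : S ∪ tag k ∈ bigF :=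
  Finset.mem_image.2 ⟨⟨k, S⟩, Finset.mem_sigma.2 ⟨Finset.mem_range.2 hk, hS⟩, rfl⟩

lemma fam_union_up {k : ℕ} {S T : Finset ℕ} (hS : S ∈ fam k) (hT : T ∈ upFam) :
    S ∪ T ∈ fam k := by
  have h1 := fam_sub hS
  simp only [upFam, Finset.mem_filter, Finset.mem_powerset] at hT
  have h2 := Finset.union_subset h1 hT.1
  have h3 : inU (S ∪ T) := inU_mono Finset.subset_union_right hT.2
  unfold fam fibre upFam
  split_ifs <;> simp [h2, h3]

lemma fam_union_self {k : ℕ} {S T : Finset ℕ} (hS : S ∈ fam k) (hT : T ∈ fam k) :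
    S ∪ T ∈ fam k := by
  have h2 := Finset.union_subset (fam_sub hS) (fam_sub hT)
  have m1 := @inU_mono S (S ∪ T) Finset.subset_union_left
  have m2 := @inU_mono T (S ∪ T) Finset.subset_union_right
  unfold fam fibre upFam at *
  split_ifs at * <;> simp only [Finset.mem_filter, Finset.mem_powerset, Finset.mem_union] at * <;>
    tauto

lemma bigF_closed : UnionClosed bigF := by
  have top : fam 189 = (Finset.Icc 1 9).powerset := by simp [fam]
  constructor
  · refine ⟨_, mem_bigF (k := 189) (S := ∅) (by norm_num) ?_⟩
    rw [top]; simp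
  · intro P hP Q hQ
    unfold bigF at hP hQ
    obtain ⟨⟨k, S⟩, hd, rfl⟩ := Finset.mem_image.1 hP
    obtain ⟨⟨l, T⟩, he, rfl⟩ := Finset.mem_image.1 hQ
    simp only [Finset.mem_sigma, Finset.mem_range] at hd he
    obtain ⟨hk, hS⟩ := hd
    obtain ⟨hl, hT⟩ := he
    show (S ∪ tag k) ∪ (T ∪ tag l) ∈ bigF
    rw [Finset.union_union_union_comm]
    by_cases hkl : k = l
    · subst hkl
      rw [Finset.union_self]
      exact mem_bigF hk (fam_union_self hS hT)
    by_cases hk0 : k = 190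
    · subst hk0
      have e : tag 190 = ∅ := by simp [tag]
      rw [e, Finset.empty_union, Finset.union_comm S T]
      exact mem_bigF hl (fam_union_up hT (by simpa [fam] using hS))
    by_cases hl0 : l = 190
    · subst hl0
      have e : tag 190 = ∅ := by simp [tag]
      rw [e, Finset.union_empty]
      exact mem_bigF hk (fam_union_up hS (by simpa [fam] using hT))
    have e : tag k ∪ tag l = tag 189 := by
      ext x
      unfold tag
      split_ifs <;> simp only [Finset.mem_union, Finset.mem_erase, Finset.mem_Icc] <;> omega
    rw [e]
    refine mem_bigF (by norm_num) ?_
    rw [top, Finset.mem_powerset]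
    exact Finset.union_subset (fam_sub hS) (fam_sub hT)

lemma wit_sub : wit ⊆ bigF := by
  intro S hS
  have e : tag 190 = ∅ := by simp [tag]
  rw [← Finset.union_empty S, ← e]
  refine mem_bigF (by norm_num) ?_
  simp only [wit, Finset.mem_filter, Finset.mem_powersetCard] at hS
  simp [fam, upFam, hS.1.1, hS.2]

lemma sum_split (f : Finset (Finset ℕ) → ℕ) :
    ∑ k ∈ Finset.range 191, f (fam k)
      = 14 * (f (fibre 1) + f (fibre 2) + f (fibre 3) + f (fibre 4))
        + 19 * (f (fibre 5) + f (fibre 6) + f (fibre 7))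
        + 32 * f (fibre 8) + 44 * f (fibre 9)
        + f (Finset.Icc 1 9).powerset + f upFam := by
  simp only [Finset.sum_range_succ, Finset.sum_range_zero, fam, miss, Nat.reduceLT, Nat.reduceDiv,
    Nat.reduceAdd, Nat.reduceSub, if_true, if_false, Nat.reduceEqDiff]
  ring

lemma count_lt : ∀ x ∈ Finset.Icc 1 9,
    2 * (bigF.filter (fun S => x ∈ S)).card < bigF.card := by
  intro x hx
  rw [card_filter_bigF hx, card_bigF, sum_split (fun G => (G.filter (fun S => x ∈ S)).card),
    sum_split Finset.card]
  revert x
  decide +kernel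

lemma wit_card : wit.card = 41 := by decide +kernel

lemma wit_univ : famUniverse wit = Finset.Icc 1 9 := by decide +kernel

/-- FC(6, 9) ≥ 42: there is a Non-FC family of 41 distinct 6-element subsets of
{1, …, 9} with universe {1, …, 9}. -/
theorem FC_lower_bound_6_9 :
    ∃ A : Finset (Finset ℕ), A.card = 41 ∧ IsKFamily 6 9 A ∧ ¬ IsFC A := by
  refine ⟨wit, wit_card, ⟨?_, wit_univ⟩, ?_⟩
  · intro S hS
    simp only [wit, Finset.mem_filter, Finset.mem_powersetCard] at hS
    exact ⟨hS.1.2, hS.1.1⟩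
  · intro h
    obtain ⟨x, hx, hle⟩ := h bigF bigF_closed wit_sub
    rw [wit_univ] at hx
    have := count_lt x hx
    omega
end

section
/- For every integer n > 8, FC(6, n) exists and FC(6, n) ≤ 1 + ⌈(5/4032) · n(n−1)(n−2)(n−3)(n−4)(n−5)⌉; that is, every family of 1 + ⌈(5/4032) · n(n−1)(n−2)(n−3)(n−4)(n−5)⌉ distinct 6-element subsets of {1,…,n} whose universe equals {1,…,n} is FC. -/
namespace FCSix
open Finset

abbrev X := Fin 9

def cnt (B : Finset (Finset X)) (k : ℕ) : ℕ := (B.filter (fun S => S.card = k)).card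

def mv (σ : Equiv.Perm X) (I : Finset X) : Finset X := I.map σ.toEmbedding

def hits (B : Finset (Finset X)) (I : Finset X) : ℕ :=
  ((univ : Finset (Equiv.Perm X)).filter (fun σ => mv σ I ∈ B)).card

lemma mv_mul (σ τ : Equiv.Perm X) (I : Finset X) : mv (σ * τ) I = mv σ (mv τ I) := by
  unfold mv
  rw [Finset.map_map]
  rfl

lemma mv_one (I : Finset X) : mv 1 I = I := by
  ext x
  simp [mv, Equiv.Perm.one_def]

lemma hits_congr (B : Finset (Finset X)) (I J : Finset X) (h : I.card = J.card) :
    hits B I = hits B J := by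
  obtain ⟨τ, hτ⟩ : ∃ τ : Equiv.Perm X, mv τ I = J := by
    let e : {x // x ∈ I} ≃ {x // x ∈ J} := Finset.equivOfCardEq h
    refine ⟨e.extendSubtype, ?_⟩
    apply Finset.eq_of_subset_of_card_le
    · intro y hy
      simp only [mv, mem_map_equiv] at hy
      have := e.extendSubtype_mem _ hy
      simpa using this
    · simp [mv, h]
  unfold hits
  refine Finset.card_bij' (fun σ _ => σ * τ⁻¹) (fun σ _ => σ * τ) ?_ ?_ ?_ ?_
  · intro σ hσ
    have : mv (σ * τ⁻¹) J = mv σ I := by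
      rw [← hτ, ← mv_mul]; simp
    simpa [this] using hσ
  · intro σ hσ
    have : mv (σ * τ) I = mv σ J := by
      rw [← hτ, ← mv_mul]
    simpa [this] using hσ
  · intro σ _; simp
  · intro σ _; simp

lemma hits_mul (B : Finset (Finset X)) (I : Finset X) :
    Nat.choose 9 I.card * hits B I = Nat.factorial 9 * cnt B I.card := by
  have h1 : ∑ J ∈ powersetCard I.card (univ : Finset X), hits B J
      = Nat.choose 9 I.card * hits B I := by
    rw [Finset.sum_congr rfl (g := fun _ => hits B I)]
    · simp
    · intro J hJ
      exact hits_congr B J I (mem_powersetCard.1 hJ).2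
  rw [← h1]
  unfold hits
  simp only [card_filter]
  rw [Finset.sum_comm]
  have h2 : ∀ σ : Equiv.Perm X, ∑ J ∈ powersetCard I.card (univ : Finset X),
      (if mv σ J ∈ B then 1 else 0) = cnt B I.card := by
    intro σ
    rw [← card_filter]
    unfold cnt
    refine Finset.card_bij' (fun J _ => mv σ J) (fun J _ => mv σ⁻¹ J) ?_ ?_ ?_ ?_
    · intro J hJ
      simp only [mem_filter, mem_powersetCard] at hJ ⊢
      exact ⟨hJ.2, by simp [mv, hJ.1.2]⟩
    · intro J hJ
      have : mv σ (mv σ⁻¹ J) = J := by rw [← mv_mul]; simp [mv_one]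
      simp only [mem_filter, mem_powersetCard] at hJ ⊢
      rw [this]
      exact ⟨⟨subset_univ _, by simp [mv, hJ.2]⟩, hJ.1⟩
    · intro J _; simp [← mv_mul, mv_one]
    · intro J _; simp [← mv_mul, mv_one]
  rw [Finset.sum_congr rfl (fun σ _ => h2 σ)]
  simp [Fintype.card_perm]

/-- The closure of `B` under passing to supersets with at least six elements. -/
def up (B : Finset (Finset X)) : Finset (Finset X) :=
  univ.filter (fun V => V ∈ B ∨ (6 ≤ V.card ∧ ∃ S ∈ B, S ⊆ V))

lemma mem_up {B : Finset (Finset X)} {V : Finset X} :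
    V ∈ up B ↔ V ∈ B ∨ (6 ≤ V.card ∧ ∃ S ∈ B, S ⊆ V) := by simp [up]

lemma chain (B : Finset (Finset X)) (I J : Finset X) (hIJ : I ⊆ J) (hJ : 6 ≤ J.card) :
    hits B I ≤ hits (up B) J := by
  unfold hits
  apply card_le_card
  intro σ
  simp only [mem_filter, mem_univ, true_and]
  intro h
  exact mem_up.2 (Or.inr ⟨by simpa [mv] using hJ, _, h, Finset.map_subset_map.2 hIJ⟩)

lemma quad (B : Finset (Finset X)) (hB : ∀ S ∈ B, ∀ T ∈ B, S ∪ T ∈ B) (I J K : Finset X)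
    (hI : I ⊆ K) (hJ : J ⊆ K) (hK : 6 ≤ K.card) :
    hits B I + hits B J ≤ hits B (I ∪ J) + hits (up B) K := by
  unfold hits
  rw [← card_union_add_card_inter, add_comm]
  apply add_le_add
  · apply card_le_card
    intro σ
    simp only [mem_filter, mem_univ, true_and, mem_inter]
    rintro ⟨h1, h2⟩
    have := hB _ h1 _ h2
    simpa [mv, Finset.map_union] using this
  · apply card_le_card
    intro σ
    simp only [mem_filter, mem_univ, true_and, mem_union]
    rintro (h | h)
    · exact mem_up.2 (Or.inr ⟨by simpa [mv] using hK, _, h, Finset.map_subset_map.2 hI⟩)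
    · exact mem_up.2 (Or.inr ⟨by simpa [mv] using hK, _, h, Finset.map_subset_map.2 hJ⟩)

/-- The main inequality with slack terms. -/
lemma main_ineq (B : Finset (Finset X)) (hB : ∀ S ∈ B, ∀ T ∈ B, S ∪ T ∈ B) :
    7 * cnt B 2 + 3 * cnt B 3 ≤ 2 * cnt B 5 + 3 * cnt (up B) 6 ∧
    2 * cnt B 4 ≤ 3 * cnt (up B) 6 ∧
    3 * cnt B 3 ≤ 7 * cnt (up B) 7 ∧ cnt B 2 ≤ cnt (up B) 7 ∧
    cnt B 1 ≤ cnt (up B) 8 ∧ cnt B 0 ≤ cnt (up B) 9 := by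
  have q := quad B hB {0,1} {2,3,4} {0,1,2,3,4,5} (by decide) (by decide) (by decide)
  have c46 := chain B {0,1,2,3} {0,1,2,3,4,5} (by decide) (by decide)
  have c37 := chain B {0,1,2} {0,1,2,3,4,5,6} (by decide) (by decide)
  have c27 := chain B {0,1} {0,1,2,3,4,5,6} (by decide) (by decide)
  have c18 := chain B {0} {0,1,2,3,4,5,6,7} (by decide) (by decide)
  have c09 := chain B ∅ {0,1,2,3,4,5,6,7,8} (by decide) (by decide)
  have h0 := hits_mul B ∅
  have h1 := hits_mul B {0}
  have h2 := hits_mul B {0,1}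
  have h3 := hits_mul B {0,1,2}
  have h3' := hits_mul B {2,3,4}
  have h4 := hits_mul B {0,1,2,3}
  have h5 := hits_mul B ({0,1} ∪ {2,3,4})
  have h6 := hits_mul (up B) {0,1,2,3,4,5}
  have h7 := hits_mul (up B) {0,1,2,3,4,5,6}
  have h8 := hits_mul (up B) {0,1,2,3,4,5,6,7}
  have h9 := hits_mul (up B) {0,1,2,3,4,5,6,7,8}
  rw [show (∅ : Finset X).card = 0 by decide] at h0
  rw [show ({0} : Finset X).card = 1 by decide] at h1
  rw [show ({0,1} : Finset X).card = 2 by decide] at h2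
  rw [show ({0,1,2} : Finset X).card = 3 by decide] at h3
  rw [show ({2,3,4} : Finset X).card = 3 by decide] at h3'
  rw [show ({0,1,2,3} : Finset X).card = 4 by decide] at h4
  rw [show (({0,1} ∪ {2,3,4}) : Finset X).card = 5 by decide] at h5
  rw [show ({0,1,2,3,4,5} : Finset X).card = 6 by decide] at h6
  rw [show ({0,1,2,3,4,5,6} : Finset X).card = 7 by decide] at h7
  rw [show ({0,1,2,3,4,5,6,7} : Finset X).card = 8 by decide] at h8
  rw [show ({0,1,2,3,4,5,6,7,8} : Finset X).card = 9 by decide] at h9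
  rw [show Nat.choose 9 0 = 1 by decide, show Nat.factorial 9 = 362880 by decide] at h0
  rw [show Nat.choose 9 1 = 9 by decide, show Nat.factorial 9 = 362880 by decide] at h1
  rw [show Nat.choose 9 2 = 36 by decide, show Nat.factorial 9 = 362880 by decide] at h2
  rw [show Nat.choose 9 3 = 84 by decide, show Nat.factorial 9 = 362880 by decide] at h3 h3'
  rw [show Nat.choose 9 4 = 126 by decide, show Nat.factorial 9 = 362880 by decide] at h4
  rw [show Nat.choose 9 5 = 126 by decide, show Nat.factorial 9 = 362880 by decide] at h5
  rw [show Nat.choose 9 6 = 84 by decide, show Nat.factorial 9 = 362880 by decide] at h6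
  rw [show Nat.choose 9 7 = 36 by decide, show Nat.factorial 9 = 362880 by decide] at h7
  rw [show Nat.choose 9 8 = 9 by decide, show Nat.factorial 9 = 362880 by decide] at h8
  rw [show Nat.choose 9 9 = 1 by decide, show Nat.factorial 9 = 362880 by decide] at h9
  refine ⟨?_, ?_, ?_, ?_, ?_, ?_⟩ <;> omega

lemma sum_levels (B : Finset (Finset X)) :
    ∑ S ∈ B, (2 * (S.card : ℤ) - 9) =
      -9 * cnt B 0 - 7 * cnt B 1 - 5 * cnt B 2 - 3 * cnt B 3 - cnt B 4 + cnt B 5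
        + 3 * cnt B 6 + 5 * cnt B 7 + 7 * cnt B 8 + 9 * cnt B 9 := by
  have h : ∑ S ∈ B, (2 * (S.card : ℤ) - 9)
      = ∑ k ∈ range 10, (2 * (k : ℤ) - 9) * cnt B k := by
    rw [← Finset.sum_fiberwise_of_maps_to (s := B) (t := range 10) (g := fun S => S.card)]
    · apply Finset.sum_congr rfl
      intro k _
      rw [Finset.sum_congr rfl (g := fun _ => 2 * (k : ℤ) - 9)]
      · rw [sum_const, nsmul_eq_mul, mul_comm, cnt]
      · intro S hS
        rw [(mem_filter.1 hS).2]
    · intro S _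
      have := card_le_univ S
      simp at this
      simp; omega
  rw [h]
  simp only [sum_range_succ, sum_range_zero]
  push_cast
  ring

/-- number of `k+1`-subsets of `V` containing a fixed point -/
lemma card_star (V : Finset X) (x : X) (hx : x ∈ V) (k : ℕ) :
    ((powersetCard (k+1) V).filter (fun S => x ∈ S)).card = Nat.choose (V.card - 1) k := by
  rw [← card_erase_of_mem hx, ← card_powersetCard]
  refine Finset.card_bij' (fun S _ => S.erase x) (fun S _ => insert x S) ?_ ?_ ?_ ?_
  · intro S hS
    simp only [mem_filter, mem_powersetCard] at hS ⊢
    exact ⟨erase_subset_erase _ hS.1.1, by rw [card_erase_of_mem hS.2]; omega⟩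
  · intro S hS
    simp only [mem_filter, mem_powersetCard] at hS ⊢
    have hxS : x ∉ S := fun h => by simpa using hS.1 h
    refine ⟨⟨insert_subset hx (hS.1.trans (erase_subset _ _)), ?_⟩, mem_insert_self _ _⟩
    rw [card_insert_of_notMem hxS, hS.2]
  · intro S hS
    exact insert_erase (mem_filter.1 hS).2
  · intro S hS
    have hxS : x ∉ S := fun h => by simpa using (mem_powersetCard.1 hS).1 h
    exact erase_insert hxS

lemma card_star6 (V : Finset X) (x : X) (hx : x ∈ V) :
    ((powersetCard 6 V).filter (fun S => x ∈ S)).card = Nat.choose (V.card - 1) 5 :=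
  card_star V x hx 5

lemma exists_point (B : Finset (Finset X)) (hB : ∀ S ∈ B, ∀ T ∈ B, S ∪ T ∈ B)
    (V : Finset X) (hV : V ∈ up B) (hVB : V ∉ B) :
    ∃ x ∈ V, ∀ S ∈ B, S ⊆ V → x ∉ S := by
  rcases mem_up.1 hV with h | ⟨_, S, hS, hSV⟩
  · exact absurd h hVB
  have hne : (B.filter (fun T => T ⊆ V)).Nonempty := ⟨S, by simp [hS, hSV]⟩
  have hM : (B.filter (fun T => T ⊆ V)).sup' hne id ∈ B.filter (fun T => T ⊆ V) := by
    apply Finset.sup'_mem (s := ((B.filter (fun T => T ⊆ V) : Finset (Finset X)) : Set (Finset X)))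
    · intro a ha b hb
      simp only [coe_filter, Set.mem_ofPred_eq] at ha hb ⊢
      exact ⟨hB _ ha.1 _ hb.1, union_subset ha.2 hb.2⟩
    · intro a ha; exact ha
  set M := (B.filter (fun T => T ⊆ V)).sup' hne id with hMdef
  rw [mem_filter] at hM
  have hMV : M ≠ V := fun h => hVB (h ▸ hM.1)
  obtain ⟨x, hxV, hxM⟩ := Finset.exists_of_ssubset (lt_of_le_of_ne hM.2 hMV)
  refine ⟨x, hxV, fun T hT hTV hxT => hxM ?_⟩
  have : T ≤ M := Finset.le_sup' (f := id) (by simp [hT, hTV])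
  exact this hxT

lemma cnt_le_star (B : Finset (Finset X)) (V : Finset X) (x : X) (hx : x ∈ V)
    (h : ∀ S ∈ B, S ⊆ V → x ∉ S) (k : ℕ) :
    cnt B (k+1) + Nat.choose (V.card - 1) k ≤ Nat.choose 9 (k+1) := by
  rw [← card_star V x hx k]
  have h9 : Nat.choose 9 (k+1) = (powersetCard (k+1) (univ : Finset X)).card := by simp
  rw [h9]
  unfold cnt
  rw [← card_union_of_disjoint]
  · apply card_le_card
    intro S hS
    simp only [mem_union, mem_filter, mem_powersetCard] at hS ⊢
    refine ⟨subset_univ _, ?_⟩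
    rcases hS with hS | hS
    · exact hS.2
    · exact hS.1.2
  · rw [disjoint_left]
    intro S h1 h2
    simp only [mem_filter, mem_powersetCard] at h1 h2
    exact h S h1.1 h2.1.1 h2.2

lemma cnt_le (B : Finset (Finset X)) (k : ℕ) : cnt B k ≤ Nat.choose 9 k := by
  have h9 : Nat.choose 9 k = (powersetCard k (univ : Finset X)).card := by simp
  rw [h9]
  apply card_le_card
  intro S hS
  simp only [mem_filter, mem_powersetCard] at hS ⊢
  exact ⟨subset_univ _, hS.2⟩

lemma cnt_full (B : Finset (Finset X)) (k : ℕ) (h : ∀ S : Finset X, S.card = k → S ∈ B) :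
    cnt B k = Nat.choose 9 k := by
  have h9 : Nat.choose 9 k = (powersetCard k (univ : Finset X)).card := by simp
  rw [h9]
  unfold cnt
  congr 1
  ext S
  simp only [mem_filter, mem_powersetCard]
  exact ⟨fun h => ⟨subset_univ _, h.2⟩, fun hS => ⟨h S hS.2, hS.2⟩⟩

lemma cnt_up (B : Finset (Finset X)) (k : ℕ) :
    cnt (up B) k = cnt B k + cnt (up B \ B) k := by
  unfold cnt
  rw [← card_union_of_disjoint]
  · congr 1
    ext S
    simp only [mem_union, mem_filter, mem_sdiff]
    constructor
    · rintro ⟨h1, h2⟩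
      by_cases h : S ∈ B
      · exact Or.inl ⟨h, h2⟩
      · exact Or.inr ⟨⟨h1, h⟩, h2⟩
    · rintro (h | h)
      · exact ⟨mem_up.2 (Or.inl h.1), h.2⟩
      · exact ⟨h.1.1, h.2⟩
  · rw [disjoint_left]
    intro S h1 h2
    simp only [mem_filter, mem_sdiff] at h1 h2
    exact h2.1.2 h1.1

lemma core (A B : Finset (Finset X))
    (hA : ((powersetCard 6 (univ : Finset X)) \ A).card ≤ 8)
    (hB : ∀ S ∈ B, ∀ T ∈ B, S ∪ T ∈ B) (hAB : ∀ S ∈ B, ∀ K ∈ A, S ∪ K ∈ B) :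
    0 ≤ ∑ S ∈ B, (2 * (S.card : ℤ) - 9) := by
  rcases B.eq_empty_or_nonempty with rfl | hne
  · simp
  -- sets in `up B \ B`
  have key : ∀ V ∈ up B \ B, ∃ x ∈ V, (∀ S ∈ B, S ⊆ V → x ∉ S) ∧
      (powersetCard 6 V).filter (fun S => x ∈ S) ⊆ (powersetCard 6 (univ : Finset X)) \ A := by
    intro V hV
    rw [mem_sdiff] at hV
    obtain ⟨x, hxV, hx⟩ := exists_point B hB V hV.1 hV.2
    refine ⟨x, hxV, hx, ?_⟩
    intro K hK
    simp only [mem_filter, mem_powersetCard, mem_sdiff] at hK ⊢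
    refine ⟨⟨subset_univ _, hK.1.2⟩, fun hKA => ?_⟩
    rcases mem_up.1 hV.1 with h | ⟨_, S, hS, hSV⟩
    · exact hV.2 h
    · exact hx _ (hAB S hS K hKA) (union_subset hSV hK.1.1) (mem_union_right _ hK.2)
  have d6 : cnt (up B \ B) 6 ≤ 8 := by
    refine le_trans (card_le_card ?_) hA
    intro V hV
    rw [mem_filter] at hV
    obtain ⟨x, hxV, _, hs⟩ := key V hV.1
    exact hs (by simp [hV.2, hxV])
  have d7 : cnt (up B \ B) 7 ≤ 1 := by
    unfold cnt
    rw [card_le_one]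
    intro V hV W hW
    rw [mem_filter] at hV hW
    by_contra hne
    obtain ⟨x, hx, _, hs⟩ := key V hV.1
    obtain ⟨y, hy, _, ht⟩ := key W hW.1
    have c1 := card_star6 V x hx
    have c2 := card_star6 W y hy
    rw [hV.2] at c1
    rw [hW.2] at c2
    have h1 := card_le_card (union_subset hs ht)
    have h2 := card_union_add_card_inter ((powersetCard 6 V).filter (fun S => x ∈ S))
      ((powersetCard 6 W).filter (fun S => y ∈ S))
    have h3 : ((powersetCard 6 V).filter (fun S => x ∈ S) ∩
      (powersetCard 6 W).filter (fun S => y ∈ S)).card ≤ (powersetCard 6 (V ∩ W)).card := by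
      apply card_le_card
      intro S hS
      simp only [mem_inter, mem_filter, mem_powersetCard] at hS ⊢
      exact ⟨subset_inter hS.1.1.1 hS.2.1.1, hS.1.1.2⟩
    have h4 : (V ∩ W).card ≤ 6 := by
      by_contra h
      have e1 : V ∩ W = V := eq_of_subset_of_card_le inter_subset_left (by omega)
      have e2 : V ∩ W = W := eq_of_subset_of_card_le inter_subset_right (by omega)
      exact hne (e1.symm.trans e2)
    have h5 : Nat.choose (V ∩ W).card 6 ≤ Nat.choose 6 6 := Nat.choose_le_choose 6 h4
    rw [card_powersetCard] at h3
    have : Nat.choose (7 - 1) 5 = 6 := by decide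
    have : Nat.choose 6 6 = 1 := by decide
    omega
  have d8 : cnt (up B \ B) 8 = 0 := by
    unfold cnt
    rw [card_eq_zero, filter_eq_empty_iff]
    intro V hV h8
    obtain ⟨x, hx, _, hs⟩ := key V hV
    have c1 := card_star6 V x hx
    have h1 := card_le_card hs
    rw [h8] at c1
    have : Nat.choose (8 - 1) 5 = 21 := by decide
    omega
  have d9 : cnt (up B \ B) 9 = 0 := by
    unfold cnt
    rw [card_eq_zero, filter_eq_empty_iff]
    intro V hV h8
    obtain ⟨x, hx, _, hs⟩ := key V hV
    have c1 := card_star6 V x hx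
    have h1 := card_le_card hs
    rw [h8] at c1
    have : Nat.choose (9 - 1) 5 = 56 := by decide
    omega
  have u6 := cnt_up B 6
  have u7 := cnt_up B 7
  have u8 := cnt_up B 8
  have u9 := cnt_up B 9
  have p9 : cnt (up B) 9 = 1 := by
    have := cnt_full (up B) 9 (by
      intro S hS
      obtain ⟨T, hT⟩ := hne
      have : S = univ := by
        apply eq_univ_of_card; simpa using hS
      exact mem_up.2 (Or.inr ⟨by omega, T, hT, by simp [this]⟩))
    simpa using this
  obtain ⟨m1, m2, m3, m4, m5, m6⟩ := main_ineq B hB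
  rw [sum_levels]
  by_cases hfull : ∀ V : Finset X, 6 ≤ V.card → V ∈ up B
  · have p6 := cnt_full (up B) 6 (fun V hV => hfull V (by omega))
    have p7 := cnt_full (up B) 7 (fun V hV => hfull V (by omega))
    have p8 := cnt_full (up B) 8 (fun V hV => hfull V (by omega))
    rw [show Nat.choose 9 6 = 84 by decide] at p6
    rw [show Nat.choose 9 7 = 36 by decide] at p7
    rw [show Nat.choose 9 8 = 9 by decide] at p8
    by_cases hmiss : ∃ W ∈ up B \ B, W.card = 6
    · obtain ⟨W, hW, hW6⟩ := hmiss
      obtain ⟨w, hwW, hw, _⟩ := key W hW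
      have s1 := cnt_le_star B W w hwW hw 0
      have s2 := cnt_le_star B W w hwW hw 1
      have s3 := cnt_le_star B W w hwW hw 2
      have s4 := cnt_le_star B W w hwW hw 3
      rw [hW6] at s1 s2 s3 s4
      norm_num [Nat.choose] at s1 s2 s3 s4
      omega
    · have z6 : cnt (up B \ B) 6 = 0 := by
        unfold cnt
        rw [card_eq_zero, filter_eq_empty_iff]
        intro V hV h6
        exact hmiss ⟨V, hV, h6⟩
      have z7 : cnt (up B \ B) 7 = 0 := by
        unfold cnt
        rw [card_eq_zero, filter_eq_empty_iff]
        intro V hV h7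
        obtain ⟨x, hx, hx2, hs⟩ := key V hV
        have c1 := card_star6 V x hx
        rw [h7, show Nat.choose (7 - 1) 5 = 6 by decide] at c1
        obtain ⟨K, hK⟩ := card_pos.1 (show 0 < _ by rw [c1]; decide)
        simp only [mem_filter, mem_powersetCard] at hK
        refine hmiss ⟨K, mem_sdiff.2 ⟨hfull K (by omega), fun hKB => ?_⟩, hK.1.2⟩
        exact hx2 K hKB hK.1.1 hK.2
      omega
  · push Not at hfull
    obtain ⟨V, hV6, hV⟩ := hfull
    have hVS : ∀ S ∈ B, ¬ S ⊆ V := fun S hS hSV => hV (mem_up.2 (Or.inr ⟨hV6, S, hS, hSV⟩))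
    have f0 : cnt B 0 = 0 := by
      unfold cnt
      rw [card_eq_zero, filter_eq_empty_iff]
      intro S hS h0
      rw [card_eq_zero] at h0
      exact hVS S hS (by simp [h0])
    have f1 : cnt B 1 ≤ 3 := by
      have : cnt B 1 ≤ (powersetCard 1 Vᶜ).card := by
        apply card_le_card
        intro S hS
        rw [mem_filter] at hS
        rw [mem_powersetCard]
        refine ⟨?_, hS.2⟩
        obtain ⟨a, rfl⟩ := card_eq_one.1 hS.2
        have := hVS _ hS.1
        simpa using this
      rw [card_powersetCard, Nat.choose_one_right, card_compl, Fintype.card_fin] at this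
      omega
    have p8 : ∀ S ∈ B, S.card ≤ 8 → 9 - S.card ≤ cnt (up B) 8 := by
      intro S hS _
      have h1 : (Sᶜ.image (fun x => ({x} : Finset X)ᶜ)).card = 9 - S.card := by
        rw [card_image_of_injective, card_compl, Fintype.card_fin]
        intro a b h
        simpa using h
      rw [← h1]
      apply card_le_card
      intro T hT
      simp only [mem_image, mem_compl] at hT
      obtain ⟨x, hx, rfl⟩ := hT
      have hc : (({x} : Finset X)ᶜ).card = 8 := by rw [card_compl]; simp
      rw [mem_filter]
      refine ⟨mem_up.2 (Or.inr ⟨by omega, S, hS, ?_⟩), hc⟩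
      intro y hy
      simp only [mem_compl, mem_singleton]
      rintro rfl
      exact hx hy
    by_cases hs : ∃ S ∈ B, S.card ≤ 4
    · obtain ⟨S, hS, hS4⟩ := hs
      have q1 := p8 S hS (by omega)
      have q2 : cnt B 1 = 0 ∨ 8 ≤ cnt (up B) 8 := by
        rcases Nat.eq_zero_or_pos (cnt B 1) with h | h
        · exact Or.inl h
        · right
          obtain ⟨T, hT⟩ := card_pos.1 h
          rw [mem_filter] at hT
          have := p8 T hT.1 (by omega)
          omega
      omega
    · push Not at hs
      have z : ∀ k ≤ 4, cnt B k = 0 := by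
        intro k hk
        unfold cnt
        rw [card_eq_zero, filter_eq_empty_iff]
        intro S hS h
        have := hs S hS
        omega
      have := z 1 (by omega)
      have := z 2 (by omega)
      have := z 3 (by omega)
      have := z 4 (by omega)
      omega

lemma fc_of_nine (A F : Finset (Finset ℕ)) (Z : Finset ℕ) (hZ : Z.card = 9)
    (hA6 : ∀ S ∈ A, S.card = 6) (hcard : 76 ≤ (A.filter (fun S => S ⊆ Z)).card)
    (hF : ∀ S ∈ F, ∀ T ∈ F, S ∪ T ∈ F) (hAF : A ⊆ F) :
    ∃ x ∈ Z, F.card ≤ 2 * (F.filter (fun S => x ∈ S)).card := by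
  let e : X ↪ ℕ := (Z.orderEmbOfFin hZ).toEmbedding
  have he : (univ : Finset X).map e = Z := Finset.map_orderEmbOfFin_univ Z hZ
  have heZ : ∀ S : Finset X, S.map e ⊆ Z := by
    intro S
    rw [← he]
    exact Finset.map_subset_map.2 (subset_univ _)
  let A9 : Finset (Finset X) := univ.filter (fun S => S.map e ∈ A)
  have hA9 : ((powersetCard 6 (univ : Finset X)) \ A9).card ≤ 8 := by
    have h1 : A.filter (fun S => S ⊆ Z) ⊆
        (A9 ∩ powersetCard 6 (univ : Finset X)).image (fun S => S.map e) := by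
      intro K hK
      rw [mem_filter] at hK
      rw [← he] at hK
      obtain ⟨S, _, rfl⟩ := Finset.subset_map_iff.1 hK.2
      refine mem_image.2 ⟨S, ?_, rfl⟩
      have := hA6 _ hK.1
      rw [card_map] at this
      simp [A9, hK.1, this]
    have h2 := (card_le_card h1).trans card_image_le
    rw [card_sdiff, card_powersetCard, card_univ, Fintype.card_fin,
      show Nat.choose 9 6 = 84 by decide]
    omega
  have hsum : 0 ≤ ∑ S ∈ F, (2 * ((S ∩ Z).card : ℤ) - 9) := by
    rw [← Finset.sum_fiberwise_of_maps_to (s := F) (t := F.image (fun S => S \ Z))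
      (g := fun S => S \ Z) (fun S hS => mem_image_of_mem _ hS)]
    apply Finset.sum_nonneg
    intro T hT
    obtain ⟨S₀, _, hS₀⟩ := mem_image.1 hT
    have hTZ : Disjoint T Z := by
      rw [← hS₀]; exact sdiff_disjoint
    let B : Finset (Finset X) := univ.filter (fun S => S.map e ∪ T ∈ F)
    have hcore := core A9 B hA9
      (by
        intro S hS U hU
        simp only [B, mem_filter, mem_univ, true_and] at hS hU ⊢
        have := hF _ hS _ hU
        rw [Finset.map_union]
        convert this using 1
        ext x; simp only [mem_union]; tauto)
      (by
        intro S hS U hU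
        simp only [B, A9, mem_filter, mem_univ, true_and] at hS hU ⊢
        have := hF _ hS _ (hAF hU)
        rw [Finset.map_union]
        convert this using 1
        ext x; simp only [mem_union]; tauto)
    have hinter : ∀ S : Finset X, (S.map e ∪ T) ∩ Z = S.map e := by
      intro S
      rw [union_inter_distrib_right, disjoint_iff_inter_eq_empty.1 hTZ, union_empty]
      exact inter_eq_left.2 (heZ S)
    refine hcore.trans_eq ?_
    refine Finset.sum_bij (fun S _ => S.map e ∪ T) ?_ ?_ ?_ ?_
    · intro S hS
      simp only [B, mem_filter, mem_univ, true_and] at hS ⊢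
      refine ⟨hS, ?_⟩
      rw [union_sdiff_distrib, sdiff_eq_empty_iff_subset.2 (heZ S), empty_union]
      exact hTZ.sdiff_eq_left
    · intro S _ S' _ h
      have h' := congrArg (fun U => U ∩ Z) h
      simp only [hinter] at h'
      exact Finset.map_injective e h'
    · intro U hU
      rw [mem_filter] at hU
      obtain ⟨S, _, hS⟩ := Finset.subset_map_iff.1 (show U ∩ Z ⊆ univ.map e by
        rw [he]; exact inter_subset_right)
      have hU2 : S.map e ∪ T = U := by
        rw [← hS, ← hU.2, union_comm]
        exact sdiff_union_inter U Z
      exact ⟨S, by simp [B, hU2, hU.1], hU2⟩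
    · intro S _
      rw [hinter, card_map]
  by_contra hcon
  push Not at hcon
  have hdeg : ∑ S ∈ F, ((S ∩ Z).card : ℤ) = ∑ x ∈ Z, ((F.filter (fun S => x ∈ S)).card : ℤ) := by
    have h1 : ∀ S ∈ F, ((S ∩ Z).card : ℤ) = ∑ x ∈ Z, if x ∈ S then (1 : ℤ) else 0 := by
      intro S _
      rw [inter_comm, ← filter_mem_eq_inter, card_filter]
      push_cast
      rfl
    rw [Finset.sum_congr rfl h1, Finset.sum_comm]
    apply Finset.sum_congr rfl
    intro x _
    rw [card_filter]
    push_cast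
    rfl
  have hlt : ∑ x ∈ Z, (2 * ((F.filter (fun S => x ∈ S)).card : ℤ)) < ∑ x ∈ Z, (F.card : ℤ) := by
    apply Finset.sum_lt_sum_of_nonempty
    · rw [← card_pos, hZ]; decide
    · intro x hx
      exact_mod_cast hcon x hx
  rw [Finset.sum_sub_distrib, ← Finset.mul_sum, hdeg] at hsum
  rw [← Finset.mul_sum, sum_const, hZ] at hlt
  rw [sum_const] at hsum
  simp only [nsmul_eq_mul] at hsum hlt
  push_cast at hlt
  linarith

lemma card_supersets (n : ℕ) (S : Finset ℕ) (hS : S ⊆ Icc 1 n) (h6 : S.card = 6) :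
    ((powersetCard 9 (Icc 1 n)).filter (fun Z => S ⊆ Z)).card = Nat.choose (n - 6) 3 := by
  have h1 : (Icc 1 n \ S).card = n - 6 := by
    rw [card_sdiff_of_subset hS, h6]; simp
  rw [← h1, ← card_powersetCard]
  refine Finset.card_bij' (fun Z _ => Z \ S) (fun Y _ => Y ∪ S) ?_ ?_ ?_ ?_
  · intro Z hZ
    simp only [mem_filter, mem_powersetCard] at hZ ⊢
    exact ⟨sdiff_subset_sdiff hZ.1.1 le_rfl, by rw [card_sdiff_of_subset hZ.2]; omega⟩
  · intro Y hY
    simp only [mem_filter, mem_powersetCard] at hY ⊢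
    have hd : Disjoint Y S := disjoint_of_subset_left hY.1 sdiff_disjoint
    refine ⟨⟨union_subset (hY.1.trans sdiff_subset) hS, ?_⟩, subset_union_right⟩
    rw [card_union_of_disjoint hd]; omega
  · intro Z hZ
    exact sdiff_union_of_subset (mem_filter.1 hZ).2
  · intro Y hY
    have hd : Disjoint Y S :=
      disjoint_of_subset_left (mem_powersetCard.1 hY).1 sdiff_disjoint
    exact union_sdiff_cancel_right hd

lemma exists_nine (n : ℕ) (hn : 8 < n) (A : Finset (Finset ℕ))
    (hA : ∀ S ∈ A, S.card = 6 ∧ S ⊆ Icc 1 n) (hm : 25 * Nat.choose n 6 < 28 * A.card) :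
    ∃ Z ⊆ Icc 1 n, Z.card = 9 ∧ 76 ≤ (A.filter (fun S => S ⊆ Z)).card := by
  by_contra hcon
  push Not at hcon
  have h1 : ∑ Z ∈ powersetCard 9 (Icc 1 n), (A.filter (fun S => S ⊆ Z)).card
      = A.card * Nat.choose (n - 6) 3 := by
    simp only [card_filter]
    rw [Finset.sum_comm, Finset.sum_congr rfl (g := fun _ => Nat.choose (n - 6) 3)]
    · simp
    · intro S hS
      rw [← card_filter]
      exact card_supersets n S (hA S hS).2 (hA S hS).1
  have h2 : ∑ Z ∈ powersetCard 9 (Icc 1 n), (A.filter (fun S => S ⊆ Z)).card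
      ≤ Nat.choose n 9 * 75 := by
    have : Nat.choose n 9 = (powersetCard 9 (Icc 1 n)).card := by simp
    rw [this, ← smul_eq_mul]
    apply Finset.sum_le_card_nsmul
    intro Z hZ
    rw [mem_powersetCard] at hZ
    have := hcon Z hZ.1 hZ.2
    omega
  have h3 : Nat.choose n 9 * Nat.choose 9 6 = Nat.choose n 6 * Nat.choose (n - 6) 3 :=
    Nat.choose_mul (by omega)
  rw [show Nat.choose 9 6 = 84 by decide] at h3
  have h4 : 0 < Nat.choose (n - 6) 3 := Nat.choose_pos (by omega)
  have h5 := Nat.mul_lt_mul_of_pos_right hm h4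
  rw [h1] at h2
  nlinarith

lemma choose_six (n : ℕ) (hn : 8 < n) :
    (n : ℚ) * ((n : ℚ) - 1) * ((n : ℚ) - 2) * ((n : ℚ) - 3) * ((n : ℚ) - 4) * ((n : ℚ) - 5)
      = 720 * (Nat.choose n 6 : ℚ) := by
  have h := Nat.descFactorial_eq_factorial_mul_choose n 6
  obtain ⟨k, rfl⟩ : ∃ k, n = k + 6 := ⟨n - 6, by omega⟩
  rw [show Nat.factorial 6 = 720 by decide] at h
  have h' : ((Nat.descFactorial (k+6) 6 : ℕ) : ℚ) = 720 * (Nat.choose (k+6) 6 : ℚ) := by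
    rw [h]; push_cast; ring
  rw [← h']
  simp only [Nat.descFactorial_succ, Nat.descFactorial_zero,
    show k + 6 - 0 = k + 6 by omega, show k + 6 - 1 = k + 5 by omega,
    show k + 6 - 2 = k + 4 by omega, show k + 6 - 3 = k + 3 by omega,
    show k + 6 - 4 = k + 2 by omega, show k + 6 - 5 = k + 1 by omega]
  push_cast
  ring

end FCSix

/-- For every n > 8, FC(6, n) exists and is at most 1 + ⌈5 / 4032 · (n : ℚ) * ((n : ℚ) - 1) * ((n : ℚ) - 2) * ((n : ℚ) - 3) * ((n : ℚ) - 4) * ((n : ℚ) - 5)⌉. -/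
theorem FC_upper_bound_k6 :
    ∀ n : ℕ, 8 < n →
      ∀ m : ℕ,
        (m : ℤ) = 1 + ⌈(5 / 4032 : ℚ) * ((n : ℚ) * ((n : ℚ) - 1) * ((n : ℚ) - 2) * ((n : ℚ) - 3) * ((n : ℚ) - 4) * ((n : ℚ) - 5))⌉ →
        (∃ v : ℕ, IsLeast (FCwitnesses 6 n) v ∧ v ≤ m) ∧
        (∀ A : Finset (Finset ℕ), A.card = m → IsKFamily 6 n A → IsFC A) := by
  intro n hn m hm
  rw [FCSix.choose_six n hn] at hm
  have hle := Int.le_ceil ((5 / 4032 : ℚ) * (720 * (Nat.choose n 6 : ℚ)))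
  have hmq : (m : ℚ) = 1 + (⌈(5 / 4032 : ℚ) * (720 * (Nat.choose n 6 : ℚ))⌉ : ℚ) := by
    exact_mod_cast hm
  have hlt : 25 * Nat.choose n 6 < 28 * m := by
    have : (25 : ℚ) * (Nat.choose n 6 : ℚ) < 28 * (m : ℚ) := by linarith
    exact_mod_cast this
  have hmain : ∀ A : Finset (Finset ℕ), A.card = m → IsKFamily 6 n A → IsFC A := by
    intro A hAm hA F hF hAF
    obtain ⟨Z, hZn, hZ9, hZ⟩ := FCSix.exists_nine n hn A hA.1 (by rw [hAm]; exact hlt)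
    obtain ⟨x, hx, h⟩ := FCSix.fc_of_nine A F Z hZ9 (fun S hS => (hA.1 S hS).1) hZ hF.2 hAF
    exact ⟨x, by rw [hA.2]; exact hZn hx, h⟩
  have hmem : m ∈ FCwitnesses 6 n := ⟨by omega, hmain⟩
  classical
  refine ⟨⟨sInf (FCwitnesses 6 n), ⟨Nat.sInf_mem ⟨m, hmem⟩, ?_⟩, Nat.sInf_le hmem⟩, hmain⟩
  intro k hk
  exact Nat.sInf_le hk
end

section
/- FC(5, 8) ≤ 36; that is, every family of 36 distinct 5-element subsets of {1,…,8} whose universe equals {1,…,8} is FC. -/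
namespace FCproof
open Finset

/-- All `k`-subsets of `Fin 8`. -/
def lv (k : ℕ) : Finset (Finset (Fin 8)) := powersetCard k univ

/-- Members of `C` of size `k`. -/
def Cc (C : Finset (Finset (Fin 8))) (k : ℕ) := (lv k).filter (fun S => S ∈ C)
/-- Non-members of `C` of size `k`. -/
def Mm (C : Finset (Finset (Fin 8))) (k : ℕ) := (lv k).filter (fun S => S ∉ C)
/-- Non-members of `C` of size `k` lying below some member of `C`. -/
def Nn (C : Finset (Finset (Fin 8))) (k : ℕ) :=
  (lv k).filter (fun S => S ∉ C ∧ ∃ R ∈ C, S ⊆ R)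
/-- Sets of size `k` not below any member of `C`. -/
def Jj (C : Finset (Finset (Fin 8))) (k : ℕ) :=
  (lv k).filter (fun S => ¬ ∃ R ∈ C, S ⊆ R)

/-- The `k`-sets containing `A` and disjoint from `B`. -/
def blk (A B : Finset (Fin 8)) (k : ℕ) := (lv k).filter (fun R => A ⊆ R ∧ Disjoint R B)

/-- `v` is in the closure of `S` but not in `S`. -/
def Head (C : Finset (Finset (Fin 8))) (S : Finset (Fin 8)) (v : Fin 8) : Prop :=
  v ∉ S ∧ ∀ R ∈ C, S ⊆ R → v ∈ R

lemma mem_lv {k : ℕ} {S : Finset (Fin 8)} : S ∈ lv k ↔ S.card = k := by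
  simp [lv, mem_powersetCard]

lemma mem_Cc {C : Finset (Finset (Fin 8))} {k : ℕ} {S : Finset (Fin 8)} :
    S ∈ Cc C k ↔ S.card = k ∧ S ∈ C := by simp [Cc, mem_lv]
lemma mem_Mm {C : Finset (Finset (Fin 8))} {k : ℕ} {S : Finset (Fin 8)} :
    S ∈ Mm C k ↔ S.card = k ∧ S ∉ C := by simp [Mm, mem_lv]
lemma mem_Nn {C : Finset (Finset (Fin 8))} {k : ℕ} {S : Finset (Fin 8)} :
    S ∈ Nn C k ↔ S.card = k ∧ S ∉ C ∧ ∃ R ∈ C, S ⊆ R := by simp [Nn, mem_lv]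
lemma mem_Jj {C : Finset (Finset (Fin 8))} {k : ℕ} {S : Finset (Fin 8)} :
    S ∈ Jj C k ↔ S.card = k ∧ ¬ ∃ R ∈ C, S ⊆ R := by simp [Jj, mem_lv]
lemma mem_blk {A B : Finset (Fin 8)} {k : ℕ} {S : Finset (Fin 8)} :
    S ∈ blk A B k ↔ S.card = k ∧ A ⊆ S ∧ Disjoint S B := by simp [blk, mem_lv]

lemma card_lv (k : ℕ) : (lv k).card = Nat.choose 8 k := by
  simp [lv, card_powersetCard]

lemma card_blk {A B : Finset (Fin 8)} {k : ℕ} (h : Disjoint A B) (hk : A.card ≤ k) :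
    (blk A B k).card = Nat.choose (8 - A.card - B.card) (k - A.card) := by
  have h1 : blk A B k = (powersetCard (k - A.card) (A ∪ B)ᶜ).image (fun X => A ∪ X) := by
    ext R
    simp only [mem_blk, mem_image, mem_powersetCard]
    constructor
    · rintro ⟨h1, h2, h3⟩
      refine ⟨R \ A, ⟨?_, ?_⟩, ?_⟩
      · intro x hx
        simp only [mem_sdiff] at hx
        simp only [mem_compl, mem_union, not_or]
        exact ⟨hx.2, fun hb => disjoint_left.mp h3 hx.1 hb⟩
      · rw [card_sdiff_of_subset h2, h1]
      · exact union_sdiff_of_subset h2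
    · rintro ⟨X, ⟨h1, h2⟩, rfl⟩
      have hd : Disjoint A X := by
        rw [disjoint_left]
        intro x hx hX
        have := h1 hX
        simp [hx] at this
      refine ⟨?_, subset_union_left, ?_⟩
      · rw [card_union_of_disjoint hd, h2]; omega
      · rw [disjoint_union_left]
        refine ⟨h, ?_⟩
        rw [disjoint_left]
        intro x hX hx
        have := h1 hX
        simp [hx] at this
  rw [h1, card_image_of_injOn, card_powersetCard, card_compl, card_union_of_disjoint h]
  · simp [Nat.sub_sub]
  · intro X hX Y hY hXY
    rw [mem_coe, mem_powersetCard] at hX hY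
    have key : ∀ Z : Finset (Fin 8), Z ⊆ (A ∪ B)ᶜ → (A ∪ Z) \ A = Z := by
      intro Z hZ
      rw [union_sdiff_left, Finset.sdiff_eq_self_iff_disjoint, disjoint_left]
      intro x hx hA
      have := hZ hx
      simp [hA] at this
    rw [← key X hX.1, ← key Y hY.1]
    exact congrArg (fun Z => Z \ A) hXY

lemma card_CM (C : Finset (Finset (Fin 8))) (k : ℕ) :
    (Cc C k).card + (Mm C k).card = Nat.choose 8 k := by
  rw [← card_lv]
  exact card_filter_add_card_filter_not _

lemma card_MNJ (C : Finset (Finset (Fin 8))) (k : ℕ) :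
    (Mm C k).card = (Nn C k).card + (Jj C k).card := by
  rw [← card_union_of_disjoint]
  · congr 1
    ext S
    simp only [mem_union, mem_Mm, mem_Nn, mem_Jj]
    constructor
    · rintro ⟨h1, h2⟩
      by_cases h : ∃ R ∈ C, S ⊆ R
      · exact Or.inl ⟨h1, h2, h⟩
      · exact Or.inr ⟨h1, h⟩
    · rintro (⟨h1, h2, _⟩ | ⟨h1, h2⟩)
      · exact ⟨h1, h2⟩
      · exact ⟨h1, fun h => h2 ⟨S, h, Subset.refl _⟩⟩
  · rw [disjoint_left]
    intro S h1 h2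
    exact (mem_Jj.mp h2).2 (mem_Nn.mp h1).2.2

lemma blk_sub {C : Finset (Finset (Fin 8))} {S : Finset (Fin 8)} {v : Fin 8} (h : Head C S v)
    (k : ℕ) : blk S {v} k ⊆ Mm C k := by
  intro R hR
  rw [mem_blk] at hR
  rw [mem_Mm]
  refine ⟨hR.1, fun hC => ?_⟩
  have := h.2 R hC hR.2.1
  exact (disjoint_singleton_right.mp hR.2.2) this

lemma inf_closed {C : Finset (Finset (Fin 8))} (hmeet : ∀ A ∈ C, ∀ B ∈ C, A ∩ B ∈ C)
    (E : Finset (Finset (Fin 8))) (hne : E.Nonempty) (hE : E ⊆ C) : E.inf id ∈ C := by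
  induction hne using Finset.Nonempty.cons_induction with
  | singleton a => simpa using hE
  | cons a s ha hs ih =>
    rw [inf_cons]
    exact hmeet _ (hE (mem_cons_self _ _)) _ (ih (fun x hx => hE (mem_cons.mpr (Or.inr hx))))

lemma exists_head {C : Finset (Finset (Fin 8))} (hmeet : ∀ A ∈ C, ∀ B ∈ C, A ∩ B ∈ C)
    {S : Finset (Fin 8)} (hS : S ∉ C) (hR : ∃ R ∈ C, S ⊆ R) : ∃ v, Head C S v := by
  by_contra hcon
  push Not at hcon
  apply hS
  obtain ⟨R, hRC, hSR⟩ := hR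
  have h1 := inf_closed hmeet (C.filter (fun R => S ⊆ R)) ⟨R, by simp [hRC, hSR]⟩
    (filter_subset _ _)
  convert h1 using 1
  apply Subset.antisymm
  · apply Finset.le_inf
    intro R hR
    exact (mem_filter.mp hR).2
  · intro v hv
    by_contra hvS
    apply hcon v
    refine ⟨hvS, fun R hR hSR => ?_⟩
    have : (C.filter (fun R => S ⊆ R)).inf id ≤ R := Finset.inf_le (f := id) (by simp [hR, hSR])
    exact this hv

lemma swap_count (X Y : Finset (Finset (Fin 8))) :
    ∑ R ∈ X, (Y.filter (fun S => S ⊆ R)).card = ∑ S ∈ Y, (X.filter (fun R => S ⊆ R)).card := by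
  simp_rw [card_filter]
  exact sum_comm

/-- Local double counting between level `a` and level `b`. -/
lemma dcount {C : Finset (Finset (Fin 8))} (hmeet : ∀ A ∈ C, ∀ B ∈ C, A ∩ B ∈ C)
    {a b : ℕ} (hab : a < b) :
    (Cc C b).card * Nat.choose b a ≤ (Cc C a).card * Nat.choose (8 - a) (b - a)
      + (Nn C a).card * Nat.choose (7 - a) (b - a - 1) := by
  have h1 : (Cc C b).card * Nat.choose b a
      = ∑ R ∈ Cc C b, ((lv a).filter (fun S => S ⊆ R)).card := by
    rw [← smul_eq_mul, ← sum_const]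
    apply sum_congr rfl
    intro R hR
    have : (lv a).filter (fun S => S ⊆ R) = powersetCard a R := by
      ext S; simp [mem_lv, mem_powersetCard, and_comm]
    rw [this, card_powersetCard, (mem_Cc.mp hR).1]
  have h2 : ∑ R ∈ Cc C b, ((lv a).filter (fun S => S ⊆ R)).card
      = ∑ S ∈ lv a, ((Cc C b).filter (fun R => S ⊆ R)).card := swap_count _ _
  have h3 : ∀ S ∈ lv a, ((Cc C b).filter (fun R => S ⊆ R)).card ≤
      (if S ∈ C then Nat.choose (8 - a) (b - a) else 0) +
      (if S ∉ C ∧ ∃ R ∈ C, S ⊆ R then Nat.choose (7 - a) (b - a - 1) else 0) := by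
    intro S hS
    rw [mem_lv] at hS
    by_cases hC : S ∈ C
    · simp only [hC, if_true, not_true, false_and, if_false, add_zero]
      have := card_blk (A := S) (B := ∅) (k := b) (by simp) (by omega)
      rw [card_empty, hS, Nat.sub_zero] at this
      rw [← this]
      apply card_le_card
      intro R hR
      rw [mem_filter, mem_Cc] at hR
      simp [mem_blk, hR.1.1, hR.2]
    · by_cases hN : ∃ R ∈ C, S ⊆ R
      · rw [if_neg hC, if_pos ⟨hC, hN⟩, zero_add]
        obtain ⟨v, hv⟩ := exists_head hmeet hC hN
        have := card_blk (A := insert v S) (B := ∅) (k := b) (by simp)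
          (by rw [card_insert_of_notMem hv.1]; omega)
        rw [card_insert_of_notMem hv.1, card_empty, hS, Nat.sub_zero,
          show 8 - (a + 1) = 7 - a by omega, show b - (a + 1) = b - a - 1 by omega] at this
        rw [← this]
        apply card_le_card
        intro R hR
        rw [mem_filter, mem_Cc] at hR
        simp [mem_blk, hR.1.1, insert_subset_iff, hR.2, hv.2 R hR.1.2 hR.2]
      · rw [if_neg hC, if_neg (fun h => hN h.2)]
        simp only [add_zero, nonpos_iff_eq_zero, card_eq_zero]
        rw [filter_eq_empty_iff]
        intro R hR hSR
        exact hN ⟨R, (mem_Cc.mp hR).2, hSR⟩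
  rw [h1, h2]
  refine (sum_le_sum h3).trans (le_of_eq ?_)
  rw [sum_add_distrib, ← sum_filter, ← sum_filter, sum_const, sum_const, smul_eq_mul, smul_eq_mul]
  rfl

/-- Bonferroni for families with pairwise intersections of size at most one. -/
lemma bonf {ι β : Type*} [DecidableEq ι] [DecidableEq β] (f : ι → Finset β) (q : ℕ) (s : Finset ι)
    (h5 : ∀ i ∈ s, q ≤ (f i).card) (h1 : ∀ i ∈ s, ∀ j ∈ s, i ≠ j → (f i ∩ f j).card ≤ 1) :
    q * s.card ≤ (s.biUnion f).card + Nat.choose s.card 2 := by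
  induction s using Finset.induction_on with
  | empty => simp
  | insert a s ha ih =>
    have ih' := ih (fun i hi => h5 i (mem_insert_of_mem hi))
      (fun i hi j hj => h1 i (mem_insert_of_mem hi) j (mem_insert_of_mem hj))
    rw [biUnion_insert, card_insert_of_notMem ha]
    have h2 := card_union_add_card_inter (f a) (s.biUnion f)
    have h3 : (f a ∩ s.biUnion f).card ≤ s.card := by
      rw [inter_biUnion]
      refine card_biUnion_le.trans ?_
      refine (sum_le_sum (g := fun _ => 1) ?_).trans (by simp)
      intro i hi
      exact h1 a (mem_insert_self _ _) i (mem_insert_of_mem hi) (fun h => ha (h ▸ hi))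
    have h4 := h5 a (mem_insert_self _ _)
    have h6 : Nat.choose (s.card + 1) 2 = s.card + Nat.choose s.card 2 := by
      rw [Nat.choose_succ_succ' s.card 1, Nat.choose_one_right]
    rw [h6, mul_add, mul_one]
    omega

structure Setup (C D : Finset (Finset (Fin 8))) : Prop where
  hne : C.Nonempty
  hmeet : ∀ A ∈ C, ∀ B ∈ C, A ∩ B ∈ C
  hD : ∀ T ∈ D, T.card = 3
  hcard : D.card = 36
  hDC : ∀ T ∈ D, ∀ S ∈ C, T ∩ S ∈ C

/-- The triples not in `D`. -/
def Ww (D : Finset (Finset (Fin 8))) := (lv 3).filter (fun S => S ∉ D)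

lemma card_Ww {C D : Finset (Finset (Fin 8))} (H : Setup C D) : (Ww D).card = 20 := by
  have h1 : Ww D = lv 3 \ D := by
    ext T; simp [Ww]
  have h2 : D ⊆ lv 3 := fun T hT => mem_lv.mpr (H.hD T hT)
  rw [h1, card_sdiff_of_subset h2, card_lv, H.hcard]
  rfl

lemma head_D {C D : Finset (Finset (Fin 8))} (H : Setup C D) {S : Finset (Fin 8)} {v : Fin 8}
    (hv : Head C S v) (hR : ∃ R ∈ C, S ⊆ R) {T : Finset (Fin 8)} (hT : T ∈ D) (hST : S ⊆ T) :
    v ∈ T := by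
  obtain ⟨R, hRC, hSR⟩ := hR
  exact (mem_inter.mp (hv.2 _ (H.hDC T hT R hRC) (subset_inter hST hSR))).1

lemma blk_Ww {C D : Finset (Finset (Fin 8))} (H : Setup C D) {S : Finset (Fin 8)} {v : Fin 8}
    (hv : Head C S v) (hR : ∃ R ∈ C, S ⊆ R) : blk S {v} 3 ⊆ Ww D := by
  intro T hT
  rw [mem_blk] at hT
  rw [Ww, mem_filter, mem_lv]
  refine ⟨hT.1, fun hTD => ?_⟩
  exact (disjoint_singleton_right.mp hT.2.2) (head_D H hv hR hTD hT.2.1)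

lemma n3_le {C D : Finset (Finset (Fin 8))} (H : Setup C D) : (Nn C 3).card ≤ 20 := by
  rw [← card_Ww H]
  apply card_le_card
  intro T hT
  rw [mem_Nn] at hT
  obtain ⟨v, hv⟩ := exists_head H.hmeet hT.2.1 hT.2.2
  exact blk_Ww H hv hT.2.2 (mem_blk.mpr ⟨hT.1, Subset.refl _, disjoint_singleton_right.mpr hv.1⟩)

lemma empty_memC {C D : Finset (Finset (Fin 8))} (H : Setup C D) : ∅ ∈ C := by
  by_contra h
  obtain ⟨R, hR⟩ := H.hne
  have hex : ∃ R ∈ C, ∅ ⊆ R := ⟨R, hR, empty_subset _⟩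
  obtain ⟨v, hv⟩ := exists_head H.hmeet h hex
  have h1 : D ⊆ blk {v} ∅ 3 := by
    intro T hT
    rw [mem_blk]
    exact ⟨H.hD T hT, singleton_subset_iff.mpr (head_D H hv hex hT (empty_subset _)), by simp⟩
  have h2 := card_le_card h1
  rw [card_blk (by simp) (by simp), H.hcard] at h2
  simp [Nat.choose] at h2

lemma n1_le {C D : Finset (Finset (Fin 8))} (H : Setup C D) : (Nn C 1).card ≤ 1 := by
  rw [card_le_one]
  intro A hA B hB
  by_contra hne
  rw [mem_Nn] at hA hB
  obtain ⟨v, hv⟩ := exists_head H.hmeet hA.2.1 hA.2.2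
  obtain ⟨w, hw⟩ := exists_head H.hmeet hB.2.1 hB.2.2
  have h1 := card_blk (A := A) (B := {v}) (k := 3) (disjoint_singleton_right.mpr hv.1) (by omega)
  have h2 := card_blk (A := B) (B := {w}) (k := 3) (disjoint_singleton_right.mpr hw.1) (by omega)
  rw [hA.1, card_singleton] at h1
  rw [hB.1, card_singleton] at h2
  have hAB : (A ∪ B).card = 2 := by
    rw [card_union_of_disjoint, hA.1, hB.1]
    obtain ⟨x, rfl⟩ := card_eq_one.mp hA.1
    obtain ⟨y, rfl⟩ := card_eq_one.mp hB.1
    simpa using hne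
  have h3 := card_blk (A := A ∪ B) (B := ∅) (k := 3) (by simp) (by omega)
  rw [hAB, card_empty] at h3
  have h4 : (blk A {v} 3 ∩ blk B {w} 3).card ≤ (blk (A ∪ B) ∅ 3).card := by
    apply card_le_card
    intro T hT
    rw [mem_inter, mem_blk, mem_blk] at hT
    rw [mem_blk]
    exact ⟨hT.1.1, union_subset hT.1.2.1 hT.2.2.1, by simp⟩
  have h5 := card_union_add_card_inter (blk A {v} 3) (blk B {w} 3)
  have h6 := card_le_card (union_subset (blk_Ww H hv hA.2.2) (blk_Ww H hw hB.2.2))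
  rw [card_Ww H] at h6
  simp [Nat.choose] at h1 h2 h3
  omega

lemma sum_deg (X : Finset (Finset (Fin 8))) :
    ∑ x : Fin 8, (X.filter (fun T => x ∈ T)).card = ∑ T ∈ X, T.card := by
  simp_rw [card_filter]
  rw [sum_comm]
  apply sum_congr rfl
  intro T _
  simp

lemma union_pair {P Q : Finset (Fin 8)} (hP : P.card = 2) (hQ : Q.card = 2) (h : P ≠ Q) :
    3 ≤ (P ∪ Q).card := by
  by_contra hc
  have h1 : P = P ∪ Q := eq_of_subset_of_card_le subset_union_left (by omega)
  have h2 : Q = P ∪ Q := eq_of_subset_of_card_le subset_union_right (by omega)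
  exact h (h1.trans h2.symm)

lemma blk3_inter {P Q A B : Finset (Fin 8)} (hP : P.card = 2) (hQ : Q.card = 2) (h : P ≠ Q) :
    (blk P A 3 ∩ blk Q B 3).card ≤ 1 := by
  rw [card_le_one]
  have h3 := union_pair hP hQ h
  have key : ∀ T ∈ blk P A 3 ∩ blk Q B 3, P ∪ Q = T := by
    intro T hT
    rw [mem_inter, mem_blk, mem_blk] at hT
    exact eq_of_subset_of_card_le (union_subset hT.1.2.1 hT.2.2.1) (by omega)
  intro S hS T hT
  rw [← key S hS, ← key T hT]

/-- Number of non-closed pairs at `x`. -/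
def dg (C : Finset (Finset (Fin 8))) (x : Fin 8) := ((Nn C 2).filter (fun P => x ∈ P)).card

lemma n2_struct {C D : Finset (Finset (Fin 8))} (H : Setup C D) :
    (∃ x, 5 ≤ dg C x ∧ (Nn C 2).card ≤ dg C x + 1) ∨ ((Nn C 2).card ≤ 8 ∧ ∀ x, dg C x ≤ 4) := by
  have hch : ∀ P : Finset (Fin 8), ∃ v, P ∈ Nn C 2 → Head C P v := by
    intro P
    by_cases hP : P ∈ Nn C 2
    · have hP' := mem_Nn.mp hP
      obtain ⟨v, hv⟩ := exists_head H.hmeet hP'.2.1 hP'.2.2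
      exact ⟨v, fun _ => hv⟩
    · exact ⟨0, fun h => absurd h hP⟩
  choose h hh using hch
  have hsub : ∀ P ∈ Nn C 2, blk P {h P} 3 ⊆ Ww D := fun P hP =>
    blk_Ww H (hh P hP) (mem_Nn.mp hP).2.2
  have hc5 : ∀ P ∈ Nn C 2, 5 ≤ (blk P {h P} 3).card := by
    intro P hP
    rw [card_blk (disjoint_singleton_right.mpr (hh P hP).1) (by rw [(mem_Nn.mp hP).1]; omega),
      (mem_Nn.mp hP).1, card_singleton]
    simp [Nat.choose]
  have hL : ∀ x, ∀ s ⊆ (Nn C 2).filter (fun P => x ∈ P),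
      5 * s.card ≤ ((Ww D).filter (fun T => x ∈ T)).card + Nat.choose s.card 2 := by
    intro x s hs
    have h1 := bonf (fun P => blk P {h P} 3) 5 s
      (fun P hP => hc5 P (mem_filter.mp (hs hP)).1)
      (fun P hP Q hQ hne => blk3_inter (mem_Nn.mp (mem_filter.mp (hs hP)).1).1
        (mem_Nn.mp (mem_filter.mp (hs hQ)).1).1 hne)
    refine h1.trans (Nat.add_le_add_right (card_le_card ?_) _)
    intro T hT
    rw [mem_biUnion] at hT
    obtain ⟨P, hP, hT⟩ := hT
    have hP' := mem_filter.mp (hs hP)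
    exact mem_filter.mpr ⟨hsub P hP'.1 hT, (mem_blk.mp hT).2.1 hP'.2⟩
  by_cases hbig : ∃ x, 5 ≤ dg C x
  · left
    obtain ⟨x, hx⟩ := hbig
    refine ⟨x, hx, ?_⟩
    by_contra hcon
    push Not at hcon
    obtain ⟨s, hs, hs5⟩ := exists_subset_card_eq hx
    have h1 := hL x s hs
    rw [hs5] at h1
    have hsplit : dg C x + ((Nn C 2).filter (fun P => x ∉ P)).card = (Nn C 2).card :=
      card_filter_add_card_filter_not _
    obtain ⟨t, ht, ht2⟩ := exists_subset_card_eq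
      (show 2 ≤ ((Nn C 2).filter (fun P => x ∉ P)).card by omega)
    have h2 := bonf (fun P => blk P {h P, x} 3) 4 t (by
        intro P hP
        have hP' := mem_filter.mp (ht hP)
        have hd : Disjoint P {h P, x} := by
          rw [disjoint_insert_right, disjoint_singleton_right]
          exact ⟨(hh P hP'.1).1, hP'.2⟩
        rw [card_blk hd (by rw [(mem_Nn.mp hP'.1).1]; omega), (mem_Nn.mp hP'.1).1]
        have : ({h P, x} : Finset (Fin 8)).card ≤ 2 := card_le_two
        simp
        omega)
      (fun P hP Q hQ hne => blk3_inter (mem_Nn.mp (mem_filter.mp (ht hP)).1).1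
        (mem_Nn.mp (mem_filter.mp (ht hQ)).1).1 hne)
    have h3 : t.biUnion (fun P => blk P {h P, x} 3) ⊆ (Ww D).filter (fun T => x ∉ T) := by
      intro T hT
      rw [mem_biUnion] at hT
      obtain ⟨P, hP, hT⟩ := hT
      have hP' := mem_filter.mp (ht hP)
      rw [mem_blk, disjoint_insert_right, disjoint_singleton_right] at hT
      refine mem_filter.mpr ⟨hsub P hP'.1 (mem_blk.mpr ⟨hT.1, hT.2.1, ?_⟩), hT.2.2.2⟩
      exact disjoint_singleton_right.mpr hT.2.2.1
    have h4 := card_le_card h3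
    have h5 : ((Ww D).filter (fun T => x ∈ T)).card + ((Ww D).filter (fun T => x ∉ T)).card
      = (Ww D).card := card_filter_add_card_filter_not _
    rw [card_Ww H] at h5
    rw [ht2] at h2
    simp [Nat.choose] at h1 h2
    omega
  · right
    push Not at hbig
    have hd : ∀ x, dg C x ≤ 4 := fun x => by have := hbig x; omega
    refine ⟨?_, hd⟩
    have h1 : ∀ x ∈ (univ : Finset (Fin 8)),
        7 * dg C x ≤ 2 * ((Ww D).filter (fun T => x ∈ T)).card := by
      intro x _
      have h2 := hL x _ (Subset.refl _)
      have h3 := hd x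
      unfold dg at h3 ⊢
      generalize ((Nn C 2).filter (fun P => x ∈ P)).card = d at *
      interval_cases d <;> simp [Nat.choose] at h2 ⊢ <;> omega
    have h2 := sum_le_sum h1
    rw [← mul_sum, ← mul_sum, sum_deg] at h2
    unfold dg at h2
    rw [sum_deg] at h2
    have h3 : ∑ T ∈ Ww D, T.card = 60 := by
      rw [sum_congr rfl (g := fun _ => 3), sum_const, card_Ww H]
      · rfl
      · intro T hT
        exact mem_lv.mp (mem_filter.mp hT).1
    have h4 : ∑ T ∈ Nn C 2, T.card = (Nn C 2).card * 2 := by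
      rw [sum_congr rfl (g := fun _ => 2), sum_const, smul_eq_mul]
      intro T hT
      exact (mem_Nn.mp hT).1
    omega

lemma dg_le (C : Finset (Finset (Fin 8))) (x : Fin 8) : dg C x ≤ 7 := by
  have h1 : (Nn C 2).filter (fun P => x ∈ P) ⊆ blk {x} ∅ 2 := by
    intro P hP
    rw [mem_filter, mem_Nn] at hP
    rw [mem_blk]
    exact ⟨hP.1.1, singleton_subset_iff.mpr hP.2, by simp⟩
  refine (card_le_card h1).trans ?_
  rw [card_blk (by simp) (by simp)]
  simp

lemma n2_le {C D : Finset (Finset (Fin 8))} (H : Setup C D) : (Nn C 2).card ≤ 8 := by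
  rcases n2_struct H with ⟨x, _, h⟩ | h
  · have := dg_le C x
    omega
  · exact h.1

lemma c1_ge {C : Finset (Finset (Fin 8))} (U : Finset (Fin 8)) (hU : ∀ x ∈ U, ∃ R ∈ C, x ∈ R) :
    U.card ≤ (Cc C 1).card + (Nn C 1).card := by
  have h1 : U.image (fun x => ({x} : Finset (Fin 8))) ⊆ Cc C 1 ∪ Nn C 1 := by
    intro S hS
    obtain ⟨x, hx, rfl⟩ := mem_image.mp hS
    rw [mem_union, mem_Cc, mem_Nn]
    obtain ⟨R, hR, hxR⟩ := hU x hx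
    by_cases h : ({x} : Finset (Fin 8)) ∈ C
    · exact Or.inl ⟨card_singleton x, h⟩
    · exact Or.inr ⟨card_singleton x, h, R, hR, singleton_subset_iff.mpr hxR⟩
  have h2 := card_le_card h1
  rw [card_image_of_injective _ singleton_injective] at h2
  exact h2.trans (card_union_le _ _)

lemma c0_eq {C D : Finset (Finset (Fin 8))} (H : Setup C D) : (Cc C 0).card = 1 := by
  rw [card_eq_one]
  refine ⟨∅, ?_⟩
  ext S
  rw [mem_Cc, mem_singleton, card_eq_zero]
  constructor
  · exact fun h => h.1
  · rintro rfl
    exact ⟨rfl, empty_memC H⟩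

/-- First regime: the full set is missing and there are at most two 7-sets. -/
lemma regime1 {C D : Finset (Finset (Fin 8))} (H : Setup C D) (h8 : (Cc C 8).card = 0)
    (h7 : (Cc C 7).card ≤ 2) :
    (Cc C 5).card + 2 * (Cc C 6).card + 3 * (Cc C 7).card + 4 * (Cc C 8).card ≤
    (Cc C 3).card + 2 * (Cc C 2).card + 3 * (Cc C 1).card + 4 * (Cc C 0).card := by
  have d53 := dcount H.hmeet (show 3 < 5 by norm_num)
  have d62 := dcount H.hmeet (show 2 < 6 by norm_num)
  have e1 := n1_le H
  have e2 := n2_le H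
  have e3 := n3_le H
  have e0 := c0_eq H
  have hsz : ∀ k, 0 < (Cc C k).card → k ≤ (Cc C 1).card + (Nn C 1).card := by
    intro k hk
    obtain ⟨R, hR⟩ := card_pos.mp hk
    rw [mem_Cc] at hR
    rw [← hR.1]
    exact c1_ge R (fun x hx => ⟨R, hR.2, hx⟩)
  have s5 := hsz 5
  have s6 := hsz 6
  have s7 := hsz 7
  have s8 : 1 < (Cc C 7).card → 8 ≤ (Cc C 1).card + (Nn C 1).card := by
    intro hk
    obtain ⟨R, hR, S, hS, hne⟩ := one_lt_card.mp hk
    rw [mem_Cc] at hR hS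
    have h1 : 8 ≤ (R ∪ S).card := by
      by_contra hc
      have h1 : R = R ∪ S := eq_of_subset_of_card_le subset_union_left (by omega)
      have h2 : S = R ∪ S := eq_of_subset_of_card_le subset_union_right (by omega)
      exact hne (h1.trans h2.symm)
    refine h1.trans (c1_ge _ ?_)
    intro x hx
    rcases mem_union.mp hx with h | h
    · exact ⟨R, hR.2, h⟩
    · exact ⟨S, hS.2, h⟩
  norm_num [Nat.choose] at d53 d62
  omega
lemma inter_blk (A B X Y : Finset (Fin 8)) (k : ℕ) :
    blk A X k ∩ blk B Y k = blk (A ∪ B) (X ∪ Y) k := by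
  ext R
  simp only [mem_inter, mem_blk, union_subset_iff, disjoint_union_right]
  tauto

lemma blk_empty {A B : Finset (Fin 8)} (h : ¬ Disjoint A B) (k : ℕ) : blk A B k = ∅ := by
  rw [eq_empty_iff_forall_notMem]
  intro R hR
  rw [mem_blk] at hR
  exact h (disjoint_of_subset_left hR.2.1 hR.2.2)

lemma union_le4 {P Q : Finset (Fin 8)} (hP : P.card = 2) (hQ : Q.card = 2) :
    2 ≤ (P ∪ Q).card ∧ (P ∪ Q).card ≤ 4 := by
  have h1 := card_union_le P Q
  have h2 := card_le_card (subset_union_left (s₁ := P) (s₂ := Q))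
  omega

/-- Two non-closed pairs with different heads. -/
lemma diff_heads {C : Finset (Finset (Fin 8))} {P Q : Finset (Fin 8)} {v w : Fin 8}
    (hP : P.card = 2) (hQ : Q.card = 2) (hv : Head C P v) (hw : Head C Q w) (hvw : v ≠ w) :
    16 ≤ (Mm C 5).card ∧ 9 ≤ (Mm C 6).card ∧ 2 ≤ (Mm C 7).card := by
  have hu := union_le4 hP hQ
  have hb : ({v} ∪ {w} : Finset (Fin 8)).card = 2 := by
    rw [card_union_of_disjoint (by simpa using hvw)]; simp
  have main : ∀ k, 5 ≤ k → Nat.choose 5 (k - 2) + Nat.choose 5 (k - 2) ≤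
      (Mm C k).card + (blk (P ∪ Q) ({v} ∪ {w}) k).card := by
    intro k hk
    have h1 := card_blk (A := P) (B := {v}) (k := k) (disjoint_singleton_right.mpr hv.1) (by omega)
    have h2 := card_blk (A := Q) (B := {w}) (k := k) (disjoint_singleton_right.mpr hw.1) (by omega)
    have h3 := card_union_add_card_inter (blk P {v} k) (blk Q {w} k)
    have h4 := card_le_card (union_subset (blk_sub hv k) (blk_sub hw k))
    rw [inter_blk] at h3
    rw [hP, card_singleton] at h1
    rw [hQ, card_singleton] at h2
    norm_num at h1 h2
    omega
  have m5 := main 5 (by norm_num)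
  have m6 := main 6 (by norm_num)
  have m7 := main 7 (by norm_num)
  by_cases hd : Disjoint (P ∪ Q) ({v} ∪ {w})
  · rw [card_blk hd (by omega), hb] at m5 m6 m7
    generalize (P ∪ Q).card = u at *
    obtain ⟨hu1, hu2⟩ := hu
    interval_cases u <;> norm_num [Nat.choose] at m5 m6 m7 <;> omega
  · rw [blk_empty hd] at m5 m6 m7
    norm_num [Nat.choose] at m5 m6 m7
    omega

/-- One non-closed pair. -/
lemma one_pair {C : Finset (Finset (Fin 8))} {P : Finset (Fin 8)} {v : Fin 8}
    (hP : P.card = 2) (hv : Head C P v) :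
    10 ≤ (Mm C 5).card ∧ 5 ≤ (Mm C 6).card ∧ 1 ≤ (Mm C 7).card := by
  have main : ∀ k, 5 ≤ k → Nat.choose 5 (k - 2) ≤ (Mm C k).card := by
    intro k hk
    have h1 := card_blk (A := P) (B := {v}) (k := k) (disjoint_singleton_right.mpr hv.1) (by omega)
    have h4 := card_le_card (blk_sub hv k)
    rw [hP, card_singleton] at h1
    norm_num at h1
    omega
  have m5 := main 5 (by norm_num)
  have m6 := main 6 (by norm_num)
  have m7 := main 7 (by norm_num)
  change 10 ≤ _ at m5
  change 5 ≤ _ at m6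
  change 1 ≤ _ at m7
  exact ⟨m5, m6, m7⟩

/-- Missing sets avoiding or containing `v`. -/
def Ma (C : Finset (Finset (Fin 8))) (v : Fin 8) (k : ℕ) := (Mm C k).filter (fun R => v ∉ R)
def Mb (C : Finset (Finset (Fin 8))) (v : Fin 8) (k : ℕ) := (Mm C k).filter (fun R => v ∈ R)

lemma card_ab (C : Finset (Finset (Fin 8))) (v : Fin 8) (k : ℕ) :
    (Mb C v k).card + (Ma C v k).card = (Mm C k).card :=
  card_filter_add_card_filter_not _

lemma blk_sub_a {C : Finset (Finset (Fin 8))} {S : Finset (Fin 8)} {v : Fin 8} (h : Head C S v)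
    (k : ℕ) : blk S {v} k ⊆ Ma C v k := by
  intro R hR
  exact mem_filter.mpr ⟨blk_sub h k hR, disjoint_singleton_right.mp (mem_blk.mp hR).2.2⟩

lemma same2 {C : Finset (Finset (Fin 8))} {P Q : Finset (Fin 8)} {v : Fin 8}
    (hP : P.card = 2) (hQ : Q.card = 2) (hv : Head C P v) (hw : Head C Q v) (hPQ : P ≠ Q) :
    14 ≤ (Ma C v 5).card ∧ 6 ≤ (Ma C v 6).card ∧ 1 ≤ (Ma C v 7).card := by
  have hu := union_le4 hP hQ
  have hu3 := union_pair hP hQ hPQ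
  have main : ∀ k, 5 ≤ k → Nat.choose 5 (k - 2) + Nat.choose 5 (k - 2) ≤
      (Ma C v k).card + (blk (P ∪ Q) {v} k).card := by
    intro k hk
    have h1 := card_blk (A := P) (B := {v}) (k := k) (disjoint_singleton_right.mpr hv.1) (by omega)
    have h2 := card_blk (A := Q) (B := {v}) (k := k) (disjoint_singleton_right.mpr hw.1) (by omega)
    have h3 := card_union_add_card_inter (blk P {v} k) (blk Q {v} k)
    have h4 := card_le_card (union_subset (blk_sub_a hv k) (blk_sub_a hw k))
    rw [inter_blk, union_self] at h3
    rw [hP, card_singleton] at h1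
    rw [hQ, card_singleton] at h2
    norm_num at h1 h2
    omega
  have m5 := main 5 (by norm_num)
  have m6 := main 6 (by norm_num)
  have m7 := main 7 (by norm_num)
  have hd : Disjoint (P ∪ Q) {v} := by
    rw [disjoint_singleton_right, mem_union]
    exact fun h => h.elim hv.1 hw.1
  rw [card_blk hd (by omega), card_singleton] at m5 m6 m7
  generalize (P ∪ Q).card = u at *
  obtain ⟨hu1, hu2⟩ := hu
  interval_cases u <;> norm_num [Nat.choose] at m5 m6 m7 <;> omega

lemma triple_new {C : Finset (Finset (Fin 8))} {T : Finset (Fin 8)} {v w : Fin 8}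
    (hT : T.card = 3) (hw : Head C T w) (hvw : v ≠ w) :
    3 ≤ (Mb C v 5).card ∧ 3 ≤ (Mb C v 6).card ∧ 1 ≤ (Mb C v 7).card := by
  have hd : Disjoint (insert v T) {w} := by
    rw [disjoint_singleton_right, mem_insert]
    rintro (h | h)
    · exact hvw h.symm
    · exact hw.1 h
  have hc : (insert v T).card = 3 ∨ (insert v T).card = 4 := by
    have h1 := card_insert_le v T
    have h2 := card_le_card (subset_insert v T)
    omega
  have main : ∀ k, 5 ≤ k → (blk (insert v T) {w} k).card ≤ (Mb C v k).card := by
    intro k hk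
    apply card_le_card
    intro R hR
    rw [mem_blk, insert_subset_iff] at hR
    refine mem_filter.mpr ⟨blk_sub hw k (mem_blk.mpr ⟨hR.1, hR.2.1.2, hR.2.2⟩), hR.2.1.1⟩
  have m5 := main 5 (by norm_num)
  have m6 := main 6 (by norm_num)
  have m7 := main 7 (by norm_num)
  rw [card_blk hd (by omega), card_singleton] at m5 m6 m7
  rcases hc with hc | hc <;> rw [hc] at m5 m6 m7 <;>
    change 1 ≤ _ at m7 <;> norm_num [Nat.choose] at m5 m6 <;> omega

lemma covers (E G : Finset (Finset (Fin 8))) (hE : ∀ P ∈ E, P.card = 2) (h5 : 5 ≤ E.card)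
    (hG : ∀ Q ∈ G, Q.card = 2) (hm : ∀ P ∈ E, ∀ Q ∈ G, ∃ x ∈ P, x ∈ Q) (h2 : 2 ≤ G.card) :
    ∃ a, ∀ Q ∈ G, a ∈ Q := by
  have hpair : ∀ P ∈ E, ∀ x ∈ P, ∀ y ∈ P, x ≠ y → P = {x, y} := by
    intro P hP x hx y hy hxy
    symm
    apply eq_of_subset_of_card_le
    · intro z hz
      rcases mem_insert.mp hz with h | h
      · exact h ▸ hx
      · exact (mem_singleton.mp h) ▸ hy
    · rw [hE P hP, card_pair hxy]
  have hmeet : ∀ Q ∈ G, ∀ R ∈ G, ∃ x ∈ Q, x ∈ R := by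
    intro Q hQ R hR
    by_contra hcon
    push Not at hcon
    have h1 : E ⊆ (Q ×ˢ R).image (fun p => {p.1, p.2}) := by
      intro P hP
      obtain ⟨x, hx, hxQ⟩ := hm P hP Q hQ
      obtain ⟨y, hy, hyR⟩ := hm P hP R hR
      rw [mem_image]
      refine ⟨(x, y), mem_product.mpr ⟨hxQ, hyR⟩, ?_⟩
      exact (hpair P hP x hx y hy (fun h => hcon x hxQ (h ▸ hyR))).symm
    have h3 := (card_le_card h1).trans card_image_le
    rw [card_product, hG Q hQ, hG R hR] at h3
    omega
  obtain ⟨Q, hQ, R, hR, hne⟩ := one_lt_card.mp h2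
  obtain ⟨a, haQ, haR⟩ := hmeet Q hQ R hR
  refine ⟨a, fun S hS => ?_⟩
  by_contra haS
  obtain ⟨b, hbQ, hbS⟩ := hmeet Q hQ S hS
  obtain ⟨c, hcR, hcS⟩ := hmeet R hR S hS
  have hab : a ≠ b := fun h => haS (h ▸ hbS)
  have hac : a ≠ c := fun h => haS (h ▸ hcS)
  have mk : ∀ X ∈ G, ∀ x ∈ X, ∀ y ∈ X, x ≠ y → X = {x, y} := by
    intro P hP x hx y hy hxy
    symm
    apply eq_of_subset_of_card_le
    · intro z hz
      rcases mem_insert.mp hz with h | h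
      · exact h ▸ hx
      · exact (mem_singleton.mp h) ▸ hy
    · rw [hG P hP, card_pair hxy]
  have eQ := mk Q hQ a haQ b hbQ hab
  have eR := mk R hR a haR c hcR hac
  have hbc : b ≠ c := fun h => hne (by rw [eQ, eR, h])
  have eS := mk S hS b hbS c hcS hbc
  have h1 : E ⊆ {{a, b}, {a, c}, {b, c}} := by
    intro P hP
    obtain ⟨x, hx, hxQ⟩ := hm P hP Q hQ
    obtain ⟨y, hy, hyR⟩ := hm P hP R hR
    obtain ⟨z, hz, hzS⟩ := hm P hP S hS
    rw [eQ] at hxQ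
    rw [eR] at hyR
    rw [eS] at hzS
    simp only [mem_insert, mem_singleton] at hxQ hyR hzS ⊢
    by_cases haP : a ∈ P
    · rcases hzS with rfl | rfl
      · exact Or.inl (hpair P hP a haP z hz hab)
      · exact Or.inr (Or.inl (hpair P hP a haP z hz hac))
    · have hx' : x = b := hxQ.resolve_left (fun h => haP (h ▸ hx))
      have hy' : y = c := hyR.resolve_left (fun h => haP (h ▸ hy))
      subst hx' hy'
      exact Or.inr (Or.inr (hpair P hP x hx y hy hbc))
  have h3 := (card_le_card h1).trans card_le_three
  omega

lemma avoid_split (C : Finset (Finset (Fin 8))) (v : Fin 8) (k : ℕ) :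
    ((blk ∅ {v} k).filter (fun R => R ∈ C)).card + (Ma C v k).card = Nat.choose 7 k := by
  have h1 : Ma C v k = (blk ∅ {v} k).filter (fun R => R ∉ C) := by
    ext R
    simp only [Ma, mem_filter, mem_Mm, mem_blk, disjoint_singleton_right, empty_subset, true_and]
    tauto
  have h2 := card_blk (A := ∅) (B := {v}) (k := k) (by simp) (by simp)
  rw [h1, card_filter_add_card_filter_not, h2]
  simp

lemma dg_le6 {C : Finset (Finset (Fin 8))} {v : Fin 8} (hE : ∀ P ∈ Nn C 2, Head C P v)
    (a : Fin 8) : dg C a ≤ 6 := by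
  by_cases hav : a = v
  · have : dg C a = 0 := by
      unfold dg
      rw [card_eq_zero, filter_eq_empty_iff]
      intro P hP h
      exact (hE P hP).1 (hav ▸ h)
    omega
  · have h1 : (Nn C 2).filter (fun P => a ∈ P) ⊆ blk {a} {v} 2 := by
      intro P hP
      rw [mem_filter] at hP
      rw [mem_blk]
      exact ⟨(mem_Nn.mp hP.1).1, singleton_subset_iff.mpr hP.2,
        disjoint_singleton_right.mpr (hE P hP.1).1⟩
    refine (card_le_card h1).trans ?_
    rw [card_blk (by simpa using hav) (by simp)]
    simp

/-- Same head everywhere: levels 3 and 5. -/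
lemma same_head3 {C D : Finset (Finset (Fin 8))} (H : Setup C D) {v : Fin 8}
    (hE : ∀ P ∈ Nn C 2, Head C P v) (hT : ∀ T ∈ Nn C 3, Head C T v) (h5 : 5 ≤ (Nn C 2).card) :
    (Nn C 3).card ≤ (Ma C v 5).card := by
  have hsp := avoid_split C v 5
  have e3 := n3_le H
  set G := (blk ∅ {v} 5).filter (fun R => R ∈ C) with hGdef
  norm_num [Nat.choose] at hsp
  by_cases hg : G.card ≤ 1
  · omega
  have hGm : ∀ R ∈ G, R.card = 5 ∧ v ∉ R ∧ R ∈ C := by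
    intro R hR
    rw [hGdef, mem_filter, mem_blk, disjoint_singleton_right] at hR
    exact ⟨hR.1.1, hR.1.2.2, hR.2⟩
  have hmeet : ∀ S, Head C S v → ∀ R ∈ G, ∃ x ∈ S, x ∈ (insert v R)ᶜ := by
    intro S hS R hR
    obtain ⟨_, hvR, hRC⟩ := hGm R hR
    have : ¬ S ⊆ R := fun h => hvR (hS.2 R hRC h)
    obtain ⟨x, hx, hxR⟩ := not_subset.mp this
    refine ⟨x, hx, ?_⟩
    rw [mem_compl, mem_insert]
    rintro (h | h)
    · exact hS.1 (h ▸ hx)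
    · exact hxR h
  set Q := G.image (fun R => (insert v R)ᶜ) with hQdef
  have hQc : Q.card = G.card := by
    apply card_image_of_injOn
    intro R hR S hS h
    have h1 : insert v R = insert v S := compl_injective h
    rw [← erase_insert (hGm R hR).2.1, ← erase_insert (hGm S hS).2.1, h1]
  have hQ2 : ∀ X ∈ Q, X.card = 2 := by
    intro X hX
    obtain ⟨R, hR, rfl⟩ := mem_image.mp hX
    rw [card_compl, card_insert_of_notMem (hGm R hR).2.1, (hGm R hR).1]
    rfl
  have hQv : ∀ X ∈ Q, v ∉ X := by
    intro X hX
    obtain ⟨R, hR, rfl⟩ := mem_image.mp hX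
    simp
  have hQm : ∀ S, Head C S v → ∀ X ∈ Q, ∃ x ∈ S, x ∈ X := by
    intro S hS X hX
    obtain ⟨R, hR, rfl⟩ := mem_image.mp hX
    exact hmeet S hS R hR
  obtain ⟨a, ha⟩ := covers (Nn C 2) Q (fun P hP => (mem_Nn.mp hP).1) h5 hQ2
    (fun P hP => hQm P (hE P hP)) (by omega)
  have hav : a ≠ v := by
    obtain ⟨X, hX⟩ := card_pos.mp (show 0 < Q.card by omega)
    exact fun h => hQv X hX (h ▸ ha X hX)
  set B := (Q.biUnion id).erase a with hBdef
  have hB1 : Q ⊆ B.image (fun b => {a, b}) := by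
    intro X hX
    have hXa := ha X hX
    obtain ⟨b, hb, hba⟩ := exists_mem_ne (by rw [hQ2 X hX]; norm_num) a
    rw [mem_image]
    refine ⟨b, mem_erase.mpr ⟨hba, mem_biUnion.mpr ⟨X, hX, hb⟩⟩, ?_⟩
    apply eq_of_subset_of_card_le
    · intro z hz
      rcases mem_insert.mp hz with h | h
      · exact h ▸ hXa
      · exact (mem_singleton.mp h) ▸ hb
    · rw [hQ2 X hX, card_pair hba.symm]
  have hB2 : Q.card ≤ B.card := (card_le_card hB1).trans card_image_le
  have hBd : Disjoint B {a, v} := by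
    rw [disjoint_insert_right, disjoint_singleton_right]
    refine ⟨notMem_erase _ _, fun h => ?_⟩
    obtain ⟨X, hX, hvX⟩ := mem_biUnion.mp (mem_erase.mp h).2
    exact hQv X hX hvX
  have hB6 : B.card ≤ 6 := by
    have h1 := card_le_univ (B ∪ {a, v})
    rw [card_union_of_disjoint hBd, card_pair hav] at h1
    simp at h1
    omega
  have hs : ((Nn C 3).filter (fun T => a ∈ T)).card + ((Nn C 3).filter (fun T => a ∉ T)).card
      = (Nn C 3).card := card_filter_add_card_filter_not _
  have hs1 : ((Nn C 3).filter (fun T => a ∈ T)).card ≤ 15 := by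
    have h1 : (Nn C 3).filter (fun T => a ∈ T) ⊆ blk {a} {v} 3 := by
      intro T hT'
      rw [mem_filter] at hT'
      rw [mem_blk]
      exact ⟨(mem_Nn.mp hT'.1).1, singleton_subset_iff.mpr hT'.2,
        disjoint_singleton_right.mpr (hT T hT'.1).1⟩
    refine (card_le_card h1).trans ?_
    rw [card_blk (by simpa using hav) (by simp)]
    simp [Nat.choose]
  have hs2 : (Nn C 3).filter (fun T => a ∉ T) ⊆ blk B {a, v} 3 := by
    intro T hT'
    rw [mem_filter] at hT'
    rw [mem_blk, disjoint_insert_right, disjoint_singleton_right]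
    refine ⟨(mem_Nn.mp hT'.1).1, ?_, hT'.2, (hT T hT'.1).1⟩
    intro b hb
    obtain ⟨hba, hb⟩ := mem_erase.mp hb
    obtain ⟨X, hX, hbX⟩ := mem_biUnion.mp hb
    obtain ⟨x, hxT, hxX⟩ := hQm T (hT T hT'.1) X hX
    have hxa : x ≠ a := fun h => hT'.2 (h ▸ hxT)
    have : X = {a, b} := by
      symm
      apply eq_of_subset_of_card_le
      · intro z hz
        rcases mem_insert.mp hz with h | h
        · exact h ▸ ha X hX
        · exact (mem_singleton.mp h) ▸ hbX
      · rw [hQ2 X hX, card_pair hba.symm]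
    rw [this, mem_insert, mem_singleton] at hxX
    exact (hxX.resolve_left hxa) ▸ hxT
  have hs3 := card_le_card hs2
  by_cases hB3 : B.card ≤ 3
  · rw [card_blk hBd hB3, card_pair hav] at hs3
    have : 2 ≤ B.card := by omega
    generalize B.card = n at *
    interval_cases n <;> norm_num [Nat.choose] at hs3 <;> omega
  · have h0 : blk B {a, v} 3 = ∅ := by
      rw [eq_empty_iff_forall_notMem]
      intro R hR
      rw [mem_blk] at hR
      have := card_le_card hR.2.1
      omega
    rw [h0, card_empty] at hs3
    omega

lemma n1_deg {C D : Finset (Finset (Fin 8))} (H : Setup C D)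
    (hcov : ∀ S : Finset (Fin 8), S.card ≤ 2 → ∃ R ∈ C, S ⊆ R) (h : 0 < (Nn C 1).card) :
    ∃ x, 6 ≤ dg C x := by
  obtain ⟨S, hS⟩ := card_pos.mp h
  rw [mem_Nn] at hS
  obtain ⟨v, hv⟩ := exists_head H.hmeet hS.2.1 hS.2.2
  obtain ⟨x, rfl⟩ := card_eq_one.mp hS.1
  refine ⟨x, ?_⟩
  have h1 := card_blk (A := {x}) (B := {v}) (k := 2) (disjoint_singleton_right.mpr hv.1) (by simp)
  simp at h1
  rw [← h1]
  apply card_le_card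
  intro P hP
  have h2 := mem_Mm.mp (blk_sub hv 2 hP)
  rw [mem_filter, mem_Nn]
  exact ⟨⟨h2.1, h2.2, hcov P (by omega)⟩, (mem_blk.mp hP).2.1 (mem_singleton_self x)⟩

/-- Same head everywhere: levels 1, 2 and 6. -/
lemma same_head2 {C D : Finset (Finset (Fin 8))} (H : Setup C D)
    (hcov : ∀ S : Finset (Fin 8), S.card ≤ 2 → ∃ R ∈ C, S ⊆ R) {v : Fin 8}
    (hE : ∀ P ∈ Nn C 2, Head C P v) (h5 : 5 ≤ (Nn C 2).card) :
    2 * (Nn C 2).card + 3 * (Nn C 1).card ≤ 2 * (Ma C v 6).card + 3 := by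
  have hsp := avoid_split C v 6
  have e1 := n1_le H
  set G := (blk ∅ {v} 6).filter (fun R => R ∈ C) with hGdef
  norm_num [Nat.choose] at hsp
  have hGm : ∀ R ∈ G, ∃ a, R = {v, a}ᶜ ∧ ∀ P ∈ Nn C 2, a ∈ P := by
    intro R hR
    rw [hGdef, mem_filter, mem_blk, disjoint_singleton_right] at hR
    have h1 : (insert v R)ᶜ.card = 1 := by
      rw [card_compl, card_insert_of_notMem hR.1.2.2, hR.1.1]
      rfl
    obtain ⟨a, ha⟩ := card_eq_one.mp h1
    have ha' : ∀ x, x ∉ R → x ≠ v → x = a := by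
      intro x hx hxv
      rw [← mem_singleton, ← ha, mem_compl, mem_insert]
      tauto
    have haR : a ∉ R ∧ a ≠ v := by
      have : a ∈ (insert v R)ᶜ := by rw [ha]; exact mem_singleton_self a
      rw [mem_compl, mem_insert] at this
      tauto
    refine ⟨a, ?_, ?_⟩
    · ext x
      rw [mem_compl, mem_insert, mem_singleton]
      constructor
      · rintro hx (h | h)
        · exact hR.1.2.2 (h ▸ hx)
        · exact haR.1 (h ▸ hx)
      · intro h
        by_contra hx
        exact h (Or.inr (ha' x hx (fun h' => h (Or.inl h'))))
    · intro P hP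
      have hh := hE P hP
      have : ¬ P ⊆ R := fun h => hR.1.2.2 (hh.2 R hR.2 h)
      obtain ⟨x, hx, hxR⟩ := not_subset.mp this
      have := ha' x hxR (fun h => hh.1 (h ▸ hx))
      exact this ▸ hx
  have hg1 : G.card ≤ 1 := by
    rw [card_le_one]
    intro R hR S hS
    obtain ⟨a, ha, haP⟩ := hGm R hR
    obtain ⟨b, hb, hbP⟩ := hGm S hS
    by_contra hne
    have hab : a ≠ b := fun h => hne (by rw [ha, hb, h])
    have : (Nn C 2).card ≤ 1 := by
      rw [card_le_one]
      have key : ∀ P ∈ Nn C 2, {a, b} = P := by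
        intro P hP
        apply eq_of_subset_of_card_le
        · intro z hz
          rcases mem_insert.mp hz with h | h
          · exact h ▸ haP P hP
          · exact (mem_singleton.mp h) ▸ hbP P hP
        · rw [(mem_Nn.mp hP).1, card_pair hab]
      intro P hP P' hP'
      rw [← key P hP, ← key P' hP']
    omega
  by_cases hg0 : G.card = 0
  · rcases n2_struct H with ⟨x, _, hx⟩ | ⟨h8, h4⟩
    · have := dg_le6 hE x
      omega
    · have : (Nn C 1).card = 0 := by
        by_contra hc
        obtain ⟨x, hx⟩ := n1_deg H hcov (Nat.pos_of_ne_zero hc)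
        have := h4 x
        omega
      omega
  · obtain ⟨R, hR⟩ := card_pos.mp (Nat.pos_of_ne_zero hg0)
    obtain ⟨a, _, ha⟩ := hGm R hR
    have h1 : dg C a = (Nn C 2).card := by
      unfold dg
      rw [filter_true_of_mem ha]
    have := dg_le6 hE a
    omega

/-- Second regime: all sets of size at most two are covered. -/
lemma regime2 {C D : Finset (Finset (Fin 8))} (H : Setup C D)
    (hcov : ∀ S : Finset (Fin 8), S.card ≤ 2 → ∃ R ∈ C, S ⊆ R)
    (hj3 : (Jj C 3).card ≤ (Mm C 8).card) :
    (Nn C 3).card + 2 * (Nn C 2).card + 3 * (Nn C 1).card + (Jj C 3).card ≤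
      (Mm C 5).card + 2 * (Mm C 6).card + 3 * (Mm C 7).card + 4 * (Mm C 8).card := by
  have e1 := n1_le H
  have e2 := n2_le H
  have e3 := n3_le H
  have e12 : 0 < (Nn C 1).card → 6 ≤ (Nn C 2).card := by
    intro h
    obtain ⟨x, hx⟩ := n1_deg H hcov h
    exact hx.trans (card_le_card (filter_subset _ _))
  by_cases h0 : (Nn C 2).card = 0
  · have d53 := dcount H.hmeet (show 3 < 5 by norm_num)
    have d63 := dcount H.hmeet (show 3 < 6 by norm_num)
    have s3 := card_CM C 3
    have s5 := card_CM C 5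
    have s6 := card_CM C 6
    have t3 := card_MNJ C 3
    norm_num [Nat.choose] at d53 d63 s3 s5 s6
    omega
  obtain ⟨P, hP⟩ := card_pos.mp (Nat.pos_of_ne_zero h0)
  have hP' := mem_Nn.mp hP
  obtain ⟨v, hv⟩ := exists_head H.hmeet hP'.2.1 hP'.2.2
  have hone := one_pair hP'.1 hv
  by_cases h1 : (Nn C 2).card = 1
  · omega
  by_cases hE : ∀ Q ∈ Nn C 2, Head C Q v
  swap
  · push Not at hE
    obtain ⟨Q, hQ, hQv⟩ := hE
    have hQ' := mem_Nn.mp hQ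
    obtain ⟨w, hw⟩ := exists_head H.hmeet hQ'.2.1 hQ'.2.2
    have := diff_heads hP'.1 hQ'.1 hv hw (fun h => hQv (h ▸ hw))
    omega
  obtain ⟨Q, hQ, hQP⟩ := exists_mem_ne (show 1 < (Nn C 2).card by omega) P
  have hs2 := same2 hP'.1 (mem_Nn.mp hQ).1 hv (hE Q hQ) hQP.symm
  have a5 := card_ab C v 5
  have a6 := card_ab C v 6
  have a7 := card_ab C v 7
  by_cases h5 : 5 ≤ (Nn C 2).card
  swap
  · omega
  by_cases hT : ∀ T ∈ Nn C 3, Head C T v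
  swap
  · push Not at hT
    obtain ⟨T, hT, hTv⟩ := hT
    have hT' := mem_Nn.mp hT
    obtain ⟨w, hw⟩ := exists_head H.hmeet hT'.2.1 hT'.2.2
    have := triple_new (v := v) hT'.1 hw (fun h => hTv (h ▸ hw))
    omega
  have f3 := same_head3 H hE hT h5
  have f2 := same_head2 H hcov hE h5
  omega

lemma J_zero {C : Finset (Finset (Fin 8))} {k : ℕ}
    (hcov : ∀ S : Finset (Fin 8), S.card = k → ∃ R ∈ C, S ⊆ R) : (Jj C k).card = 0 := by
  rw [card_eq_zero, eq_empty_iff_forall_notMem]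
  intro S hS
  rw [mem_Jj] at hS
  exact hS.2 (hcov S hS.1)

lemma level_ineq {C D : Finset (Finset (Fin 8))} (H : Setup C D) :
    (Cc C 5).card + 2 * (Cc C 6).card + 3 * (Cc C 7).card + 4 * (Cc C 8).card ≤
    (Cc C 3).card + 2 * (Cc C 2).card + 3 * (Cc C 1).card + 4 * (Cc C 0).card := by
  have fin : (∀ S : Finset (Fin 8), S.card ≤ 2 → ∃ R ∈ C, S ⊆ R) →
      (Jj C 3).card ≤ (Mm C 8).card →
      (Cc C 5).card + 2 * (Cc C 6).card + 3 * (Cc C 7).card + 4 * (Cc C 8).card ≤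
      (Cc C 3).card + 2 * (Cc C 2).card + 3 * (Cc C 1).card + 4 * (Cc C 0).card := by
    intro hcov hj3
    have r := regime2 H hcov hj3
    have j1 := J_zero (k := 1) (fun S hS => hcov S (by omega))
    have j2 := J_zero (k := 2) (fun S hS => hcov S (by omega))
    have c0 := c0_eq H
    have s1 := card_CM C 1
    have s2 := card_CM C 2
    have s3 := card_CM C 3
    have s5 := card_CM C 5
    have s6 := card_CM C 6
    have s7 := card_CM C 7
    have s8 := card_CM C 8
    have t1 := card_MNJ C 1
    have t2 := card_MNJ C 2
    have t3 := card_MNJ C 3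
    norm_num [Nat.choose] at s1 s2 s3 s5 s6 s7 s8
    omega
  by_cases hV : univ ∈ C
  · apply fin
    · exact fun S _ => ⟨univ, hV, subset_univ _⟩
    · rw [J_zero (fun S _ => ⟨univ, hV, subset_univ _⟩)]
      exact Nat.zero_le _
  have h8 : (Cc C 8).card = 0 := by
    rw [card_eq_zero, eq_empty_iff_forall_notMem]
    intro S hS
    rw [mem_Cc] at hS
    have : S = univ := by
      exact (card_eq_iff_eq_univ S).mp (by rw [hS.1, Fintype.card_fin])
    exact hV (this ▸ hS.2)
  by_cases h7 : (Cc C 7).card ≤ 2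
  · exact regime1 H h8 h7
  set K := (univ : Finset (Fin 8)).filter (fun x => {x}ᶜ ∈ C) with hK
  have hK3 : 3 ≤ K.card := by
    have h1 : Cc C 7 ⊆ K.image (fun x => {x}ᶜ) := by
      intro R hR
      rw [mem_Cc] at hR
      have h2 : Rᶜ.card = 1 := by
        rw [card_compl, hR.1]; rfl
      obtain ⟨x, hx⟩ := card_eq_one.mp h2
      have h3 : {x}ᶜ = R := by rw [← hx, compl_compl]
      rw [mem_image]
      refine ⟨x, ?_, h3⟩
      rw [hK, mem_filter, h3]
      exact ⟨mem_univ _, hR.2⟩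
    have h2 := (card_le_card h1).trans card_image_le
    omega
  have hKs : ∀ S : Finset (Fin 8), (¬ ∃ R ∈ C, S ⊆ R) → K ⊆ S := by
    intro S hS x hx
    by_contra hxS
    rw [hK, mem_filter] at hx
    refine hS ⟨_, hx.2, ?_⟩
    intro y hy
    rw [mem_compl, mem_singleton]
    exact fun h => hxS (h ▸ hy)
  apply fin
  · intro S hS
    by_contra hc
    have := card_le_card (hKs S hc)
    omega
  · have s8 := card_CM C 8
    norm_num [Nat.choose] at s8
    have : (Jj C 3).card ≤ 1 := by
      rw [card_le_one]
      have key : ∀ S ∈ Jj C 3, K = S := by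
        intro S hS
        rw [mem_Jj] at hS
        exact eq_of_subset_of_card_le (hKs S hS.2) (by omega)
      intro S hS T hT
      rw [← key S hS, ← key T hT]
    omega

/-- The weighted inequality on `Fin 8`. -/
lemma sum_ineq {C D : Finset (Finset (Fin 8))} (H : Setup C D) :
    ∑ S ∈ C, S.card ≤ 4 * C.card := by
  have hl := level_ineq H
  have hmap : ∀ S ∈ C, S.card ∈ range 9 := by
    intro S _
    have := card_le_univ S
    rw [Fintype.card_fin] at this
    exact mem_range.mpr (Nat.lt_succ_of_le this)
  have hf : ∀ k, C.filter (fun S => S.card = k) = Cc C k := by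
    intro k; ext S; rw [mem_filter, mem_Cc]; exact and_comm
  have h1 : ∑ S ∈ C, S.card = ∑ k ∈ range 9, (Cc C k).card * k := by
    rw [← sum_fiberwise_of_maps_to hmap]
    apply sum_congr rfl
    intro k _
    rw [hf k, ← smul_eq_mul, ← sum_const]
    exact sum_congr rfl (fun S hS => (mem_Cc.mp hS).1)
  have h2 : C.card = ∑ k ∈ range 9, (Cc C k).card := by
    rw [card_eq_sum_card_fiberwise hmap]
    apply sum_congr rfl
    intro k _
    rw [hf k]
  rw [h1, h2]
  simp only [sum_range_succ, sum_range_zero]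
  omega

/-- The embedding of `Fin 8` onto `{1, …, 8}`. -/
def emb : Fin 8 ↪ ℕ := ⟨fun i => i.val + 1, fun i j h => Fin.ext (by simpa using h)⟩

lemma map_univ_emb : (univ : Finset (Fin 8)).map emb = Icc 1 8 := by decide

/-- Image of the complement. -/
def cim (s : Finset (Fin 8)) : Finset ℕ := sᶜ.map emb

lemma cim_sub (s : Finset (Fin 8)) : cim s ⊆ Icc 1 8 := by
  rw [← map_univ_emb]; exact map_subset_map.mpr (subset_univ _)

lemma cim_card (s : Finset (Fin 8)) : (cim s).card + s.card = 8 := by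
  have := card_compl_add_card s
  rw [Fintype.card_fin] at this
  rw [cim, card_map, this]

lemma cim_inj {s t : Finset (Fin 8)} (h : cim s = cim t) : s = t :=
  compl_injective (map_injective emb h)

lemma cim_inter (s t : Finset (Fin 8)) : cim (s ∩ t) = cim s ∪ cim t := by
  rw [cim, compl_inter, map_union]; rfl

lemma cim_surj {S : Finset ℕ} (h : S ⊆ Icc 1 8) : ∃ s, cim s = S := by
  rw [← map_univ_emb, subset_map_iff] at h
  obtain ⟨u, _, rfl⟩ := h
  exact ⟨uᶜ, by rw [cim, compl_compl]⟩

lemma fiber_ineq (A F : Finset (Finset ℕ)) (hA : A.card = 36)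
    (hA5 : ∀ S ∈ A, S.card = 5 ∧ S ⊆ Icc 1 8)
    (hF : ∀ S ∈ F, ∀ T ∈ F, S ∪ T ∈ F) (hAF : A ⊆ F) (T : Finset ℕ)
    (hT : T ∈ F.image (fun S => S \ Icc 1 8)) :
    4 * (F.filter (fun S => S \ Icc 1 8 = T)).card ≤
      ∑ S ∈ F.filter (fun S => S \ Icc 1 8 = T), (S ∩ Icc 1 8).card := by
  obtain ⟨S₀, hS₀, hT₀⟩ := mem_image.mp hT
  have hTd : Disjoint T (Icc 1 8) := by rw [← hT₀]; exact sdiff_disjoint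
  let C : Finset (Finset (Fin 8)) := univ.filter (fun s => cim s ∪ T ∈ F)
  let D : Finset (Finset (Fin 8)) := univ.filter (fun s => cim s ∈ A)
  have hC : ∀ s, s ∈ C ↔ cim s ∪ T ∈ F := fun s => by simp [C]
  have hD : ∀ s, s ∈ D ↔ cim s ∈ A := fun s => by simp [D]
  have hrep : ∀ S ∈ F, S \ Icc 1 8 = T → ∃ s ∈ C, cim s ∪ T = S := by
    intro S hS hST
    obtain ⟨s, hs⟩ := cim_surj (inter_subset_right : S ∩ Icc 1 8 ⊆ Icc 1 8)
    have : cim s ∪ T = S := by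
      rw [hs, ← hST, union_comm]; exact sdiff_union_inter S _
    exact ⟨s, (hC s).mpr (this ▸ hS), this⟩
  have e1 : ∀ s, (cim s ∪ T) ∩ Icc 1 8 = cim s := by
    intro s
    rw [union_inter_distrib_right, inter_eq_left.mpr (cim_sub s),
      disjoint_iff_inter_eq_empty.mp hTd, union_empty]
  have e2 : ∀ s, (cim s ∪ T) \ Icc 1 8 = T := by
    intro s
    rw [union_sdiff_distrib, sdiff_eq_empty_iff_subset.mpr (cim_sub s), empty_union,
      sdiff_eq_self_of_disjoint hTd]
  have H : Setup C D := by
    refine ⟨?_, ?_, ?_, ?_, ?_⟩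
    · obtain ⟨s, hs, _⟩ := hrep S₀ hS₀ hT₀
      exact ⟨s, hs⟩
    · intro a ha b hb
      rw [hC] at *
      have := hF _ ha _ hb
      rwa [← union_union_distrib_right, ← cim_inter] at this
    · intro s hs
      have h1 := (hA5 _ ((hD s).mp hs)).1
      have h2 := cim_card s
      omega
    · rw [← hA]
      apply card_bij (fun s _ => cim s)
      · intro s hs; exact (hD s).mp hs
      · intro s _ t _ h; exact cim_inj h
      · intro S hS
        obtain ⟨s, hs⟩ := cim_surj (hA5 S hS).2
        exact ⟨s, (hD s).mpr (hs ▸ hS), hs⟩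
    · intro t ht s hs
      rw [hD] at ht
      rw [hC] at *
      have := hF _ (hAF ht) _ hs
      rwa [← union_assoc, ← cim_inter] at this
  have hfib : F.filter (fun S => S \ Icc 1 8 = T) = C.image (fun s => cim s ∪ T) := by
    ext S
    rw [mem_filter, mem_image]
    constructor
    · rintro ⟨h1, h2⟩; exact hrep S h1 h2
    · rintro ⟨s, hs, rfl⟩; exact ⟨(hC s).mp hs, e2 s⟩
  have hinj : Function.Injective (fun s => cim s ∪ T) := by
    intro s t h
    have h : cim s ∪ T = cim t ∪ T := h
    apply cim_inj
    rw [← e1 s, h, e1]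
  rw [hfib, card_image_of_injective _ hinj, sum_image (fun a _ b _ h => hinj h)]
  have hs : ∑ s ∈ C, ((cim s ∪ T) ∩ Icc 1 8).card + ∑ s ∈ C, s.card = 8 * C.card := by
    rw [← sum_add_distrib, sum_congr rfl (g := fun _ => 8), sum_const, smul_eq_mul, mul_comm]
    intro s _
    rw [e1, cim_card]
  have := sum_ineq H
  omega

lemma main_ineq (A F : Finset (Finset ℕ)) (hA : A.card = 36)
    (hA5 : ∀ S ∈ A, S.card = 5 ∧ S ⊆ Icc 1 8)
    (hF : ∀ S ∈ F, ∀ T ∈ F, S ∪ T ∈ F) (hAF : A ⊆ F) :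
    ∃ x ∈ Icc 1 8, F.card ≤ 2 * (F.filter (fun S => x ∈ S)).card := by
  by_contra hcon
  push Not at hcon
  have hm : ∀ S ∈ F, S \ Icc 1 8 ∈ F.image (fun S => S \ Icc 1 8) :=
    fun S hS => mem_image_of_mem _ hS
  have h1 : 4 * F.card ≤ ∑ S ∈ F, (S ∩ Icc 1 8).card := by
    rw [card_eq_sum_card_fiberwise hm, mul_sum, ← sum_fiberwise_of_maps_to hm]
    exact sum_le_sum (fun T hT => fiber_ineq A F hA hA5 hF hAF T hT)
  have h2 : ∑ S ∈ F, (S ∩ Icc 1 8).card = ∑ x ∈ Icc 1 8, (F.filter (fun S => x ∈ S)).card := by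
    have := sum_card_bipartiteAbove_eq_sum_card_bipartiteBelow (s := F) (t := Icc 1 8)
      (fun (S : Finset ℕ) (x : ℕ) => x ∈ S)
    refine Eq.trans ?_ this
    apply sum_congr rfl
    intro S _
    congr 1
    ext x
    simp [bipartiteAbove, and_comm]
  have h3 : ∑ x ∈ Icc 1 8, 2 * (F.filter (fun S => x ∈ S)).card < ∑ x ∈ Icc 1 8, F.card :=
    sum_lt_sum_of_nonempty ⟨1, by decide⟩ hcon
  rw [← mul_sum, ← h2, sum_const, smul_eq_mul] at h3
  have h4 : (Icc 1 8).card = 8 := by decide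
  rw [h4] at h3
  omega

end FCproof

/-- FC(5, 8) ≤ 36: every family of 36 distinct 5-element subsets of {1, …, 8}
with universe {1, …, 8} is FC. -/
theorem FC_upper_bound_5_8 :
    ∀ A : Finset (Finset ℕ), A.card = 36 → IsKFamily 5 8 A → IsFC A := by
  intro A hA hK F hF hAF
  rw [hK.2]
  exact FCproof.main_ineq A F hA hK.1 hF.2 hAF
end
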